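/- arXiv:2311.09203 — 3 statements merged into one kernel-verified Lean document; each statement's English description precedes it below -/
import Mathlib

section
/- Let 0<α<1 and let ϖ_n be the random variable counting the number of parts in a uniformly random restricted α-partition of n. Then ϖ_n is asymptotically normally distributed: P((ϖ_n − μ_n)/σ_n < x) = (1/√(2π))·∫_{−∞}^x e^{−t²/2} dt + o(1) uniformly in x as n→∞, where μ_n = ∑_{k≥1} g(k)/(e^{ηk}+1) and σ_n² = ∑_{k≥1} g(k)e^{ηk}/(e^{ηk}+1)² − (∑_{k≥1} g(k)k e^{ηk}/(e^{ηk}+1)²)² / (∑_{k≥1} g(k)k² e^{ηk}/(e^{ηk}+1)²), η>0 being the unique solution of n = ∑_{k≥1} k·g(k)/(e^{ηk}+1). Moreover E(ϖ_n) ∼ μ_n ∼ c₁·n^{1/(α+1)} and V(ϖ_n) ∼ σ_n² ∼ c₂·n^{1/(α+1)} for positive constants c₁, c₂ depending only on α. -/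
open Real Filter MeasureTheory

/-- `g α k` is the number of positive integers `n` with `⌊n^α⌋ = k`. -/
noncomputable def g (α : ℝ) (k : ℕ) : ℕ :=
  Set.ncard {n : ℕ | 1 ≤ n ∧ ⌊(n : ℝ) ^ α⌋ = (k : ℤ)}

/-- `qnm α n m`: number of restricted α-partitions of `n` with exactly `m` parts. -/
noncomputable def qnm (α : ℝ) (n m : ℕ) : ℕ :=
  Set.ncard {A : Finset ℕ | (∀ a ∈ A, 1 ≤ a) ∧ A.card = m ∧
    (∑ a ∈ A, ⌊(a : ℝ) ^ α⌋) = (n : ℤ)}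

/-- `qn α n`: total number of restricted α-partitions of `n`. -/
noncomputable def qn (α : ℝ) (n : ℕ) : ℕ :=
  Set.ncard {A : Finset ℕ | (∀ a ∈ A, 1 ≤ a) ∧
    (∑ a ∈ A, ⌊(a : ℝ) ^ α⌋) = (n : ℤ)}

/-- the mean `E(ϖ_n)` of the number of parts -/
noncomputable def partMean (α : ℝ) (n : ℕ) : ℝ :=
  (∑' m : ℕ, (m : ℝ) * qnm α n m) / qn α n

/-- the variance `V(ϖ_n)` of the number of parts -/
noncomputable def partVar (α : ℝ) (n : ℕ) : ℝ :=
  (∑' m : ℕ, ((m : ℝ) - partMean α n) ^ 2 * qnm α n m) / qn α n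

/-- `P(ϖ_n < y) = (1/q(n)) ∑_{m : m < y} q(n,m)` -/
noncomputable def cdf (α : ℝ) (n : ℕ) (y : ℝ) : ℝ :=
  (∑' m : ℕ, if (m : ℝ) < y then (qnm α n m : ℝ) else 0) / qn α n

/-!
Give every index `a` an independent Bernoulli weight with success probability
`1 / (e^{η ⌊a^α⌋} + 1)`. Conditioned on having total size `n`, the random set of chosen indices is
a uniformly random restricted partition of `n`, whatever `η > 0` is; the saddle point `η = η_n`
makes the expected size equal to `n`. Fourier inversion writes the transform `E e^{wX}` of the
normalised number of parts `X` as an integral, over frequencies `v` of the size rescaled by its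
standard deviation, of an explicit product. Expanding this product to second order shows that, at
`w = i s`, the integrand tends to `exp (-(s² + (v + κ s)²) / 2)`, where `κ` is the limiting
covariance of the rescaled number of parts and the rescaled size; integrating out `v` leaves
`√(2π) exp (-s² / 2)`, so the conditional variance given the size is what normalises. Dominated
convergence rests on a bound for the product which is Gaussian near `0`; away from `0` it uses that
every positive integer is a value of `⌊a^α⌋`, so that a Dirichlet kernel produces enough
cancellation. The same bound at real `w` controls exponential moments, which upgrades weak
convergence to convergence of mean and variance, and Pólya's theorem makes the convergence of
distribution functions uniform. The sums over `k` are Riemann sums, which gives their growth as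
`η → 0`.
-/

open scoped Topology
/-! ### The sequence of part sizes -/

/-- The part `⌊(a + 1) ^ α⌋` contributed by the positive integer `a + 1`; indexing from `0` makes
every finite set of indices a restricted partition. -/
noncomputable def partSize (α : ℝ) (a : ℕ) : ℕ := ⌊((a : ℝ) + 1) ^ α⌋₊

lemma natCast_partSize (α : ℝ) (a : ℕ) :
    (partSize α a : ℤ) = ⌊((a + 1 : ℕ) : ℝ) ^ α⌋ := by
  rw [partSize, Int.natCast_floor_eq_floor (by positivity)]
  push_cast
  rfl

lemma one_le_partSize {α : ℝ} (hα : 0 ≤ α) (a : ℕ) : 1 ≤ partSize α a :=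
  (Nat.one_le_floor_iff _).2 (Real.one_le_rpow (by simp) hα)

lemma rpow_one_div_rpow {α x : ℝ} (hα : α ≠ 0) (hx : 0 ≤ x) : (x ^ (1 / α)) ^ α = x := by
  rw [one_div, Real.rpow_inv_rpow hx hα]

lemma exists_partSize_eq {α : ℝ} (hα : 0 < α) (hα1 : α ≤ 1) {k : ℕ} (hk : 1 ≤ k) :
    ∃ a, partSize α a = k := by
  have hk' : (1 : ℝ) ≤ k := by exact_mod_cast hk
  have hroot := rpow_one_div_rpow hα.ne' (zero_le_one.trans hk')
  set c := (k : ℝ) ^ (1 / α)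
  have hc : 0 < c := by positivity
  have hceil : ((⌈c⌉₊ - 1 : ℕ) : ℝ) + 1 = ⌈c⌉₊ := by
    rw [Nat.cast_pred (Nat.ceil_pos.2 hc)]
    ring
  refine ⟨⌈c⌉₊ - 1, (Nat.floor_eq_iff (by positivity)).2 ⟨?_, ?_⟩⟩ <;> rw [hceil]
  · exact hroot.symm.trans_le (Real.rpow_le_rpow hc.le (Nat.le_ceil _) hα.le)
  · calc (⌈c⌉₊ : ℝ) ^ α < (c + 1) ^ α :=
        Real.rpow_lt_rpow (by positivity) (Nat.ceil_lt_add_one hc.le) hα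
      _ ≤ c ^ α + 1 ^ α := Real.rpow_add_le_add_rpow hc.le zero_le_one hα.le hα1
      _ = k + 1 := by rw [hroot, Real.one_rpow]

lemma g_eq_natCard_preimage (α : ℝ) (k : ℕ) : g α k = Nat.card (partSize α ⁻¹' {k}) := by
  have himage : {n : ℕ | 1 ≤ n ∧ ⌊(n : ℝ) ^ α⌋ = (k : ℤ)} = Nat.succ '' (partSize α ⁻¹' {k}) := by
    ext n
    constructor
    · rintro ⟨hn, hk⟩
      obtain ⟨a, rfl⟩ := Nat.exists_eq_add_of_le' hn
      exact ⟨a, by exact_mod_cast (natCast_partSize α a).trans hk, rfl⟩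
    · rintro ⟨a, rfl, rfl⟩
      exact ⟨a.succ_pos, (natCast_partSize α a).symm⟩
  rw [g, himage, Set.ncard_image_of_injective _ Nat.succ_injective, Nat.card_coe_set_eq]

lemma hasSum_natCard_fiber_mul {ι κ : Type*} {b : ι → κ} {F : κ → ℝ} {s : ℝ}
    (h : HasSum (fun a => F (b a)) s) :
    HasSum (fun k => (Nat.card (b ⁻¹' {k}) : ℝ) * F k) s := by
  refine (h.tsum_fiberwise b).congr_fun fun k => ?_
  rw [tsum_congr (g := fun _ => F k) fun a => congrArg F a.2, tsum_const, nsmul_eq_mul]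

/-! ### Riemann sums over the part sizes -/

lemma floor_div_eq_of_mem_Ico {c y : ℝ} (hc : 0 < c) {a : ℕ}
    (hy : y ∈ Set.Ico (a * c) ((a + 1) * c)) : ⌊y / c⌋₊ = a :=
  (Nat.floor_eq_iff (div_nonneg ((by positivity : 0 ≤ a * c).trans hy.1) hc.le)).2
    ⟨(le_div_iff₀ hc).2 hy.1, (div_lt_iff₀ hc).2 hy.2⟩

lemma iUnion_Ico_natCast_mul {c : ℝ} (hc : 0 < c) :
    (⋃ a : ℕ, Set.Ico ((a : ℝ) * c) ((a + 1) * c)) = Set.Ici 0 := by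
  ext y
  simp only [Set.mem_iUnion, Set.mem_Ico, Set.mem_Ici]
  refine ⟨fun ⟨a, ha, _⟩ => le_trans (by positivity) ha, fun hy => ⟨⌊y / c⌋₊, ?_, ?_⟩⟩
  · exact (le_div_iff₀ hc).1 (Nat.floor_le (by positivity))
  · exact (div_lt_iff₀ hc).1 (Nat.lt_floor_add_one _)

lemma hasSum_integral_floor_div {c : ℝ} (hc : 0 < c) {F : ℕ → ℝ}
    (hF : IntegrableOn (fun y : ℝ => F ⌊y / c⌋₊) (Set.Ioi 0)) :
    HasSum (fun a => c * F a) (∫ y in Set.Ioi (0 : ℝ), F ⌊y / c⌋₊) := by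
  have hdisj : Pairwise (Function.onFun Disjoint
      fun a : ℕ => Set.Ico ((a : ℝ) * c) ((a + 1) * c)) := fun i j hij =>
    Set.disjoint_left.2 fun y hi hj =>
      hij ((floor_div_eq_of_mem_Ico hc hi).symm.trans (floor_div_eq_of_mem_Ico hc hj))
  have hsum := hasSum_integral_iUnion (μ := volume) (fun _ => measurableSet_Ico) hdisj
    (f := fun y : ℝ => F ⌊y / c⌋₊)
    (by rwa [iUnion_Ico_natCast_mul hc, integrableOn_Ici_iff_integrableOn_Ioi])
  rw [iUnion_Ico_natCast_mul hc, integral_Ici_eq_integral_Ioi] at hsum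
  refine hsum.congr_fun fun a => ?_
  rw [setIntegral_congr_fun (g := fun _ => F a) measurableSet_Ico fun y hy =>
      congrArg F (floor_div_eq_of_mem_Ico hc hy),
    setIntegral_const, Real.volume_real_Ico_of_le (by linarith), smul_eq_mul]
  ring

lemma rpow_sub_le_mul_partSize {α h y : ℝ} (hα : 0 < α) (hh : 0 < h) (hy : 0 ≤ y) :
    y ^ α - h ≤ h * partSize α ⌊y / h ^ (1 / α)⌋₊ := by
  have hc : 0 < h ^ (1 / α) := by positivity
  have hfloor := Nat.lt_floor_add_one (((⌊y / h ^ (1 / α)⌋₊ : ℝ) + 1) ^ α)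
  have hle : (y / h ^ (1 / α)) ^ α ≤ ((⌊y / h ^ (1 / α)⌋₊ : ℝ) + 1) ^ α :=
    Real.rpow_le_rpow (by positivity) (Nat.lt_floor_add_one _).le hα.le
  rw [Real.div_rpow hy hc.le, rpow_one_div_rpow hα.ne' hh.le] at hle
  calc y ^ α - h = h * (y ^ α / h - 1) := by field_simp
    _ ≤ h * partSize α ⌊y / h ^ (1 / α)⌋₊ := by
      gcongr
      rw [partSize]
      linarith

lemma mul_partSize_le {α h y : ℝ} (hα : 0 < α) (hh : 0 < h) (hy : 0 ≤ y) :
    h * partSize α ⌊y / h ^ (1 / α)⌋₊ ≤ (y + h ^ (1 / α)) ^ α := by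
  have hc : 0 < h ^ (1 / α) := by positivity
  have hle : ((⌊y / h ^ (1 / α)⌋₊ : ℝ) + 1) ^ α ≤ ((y + h ^ (1 / α)) / h ^ (1 / α)) ^ α := by
    refine Real.rpow_le_rpow (by positivity) ?_ hα.le
    rw [add_div, div_self hc.ne']
    gcongr
    exact Nat.floor_le (by positivity)
  rw [Real.div_rpow (by positivity) hc.le, rpow_one_div_rpow hα.ne' hh.le] at hle
  calc h * (partSize α ⌊y / h ^ (1 / α)⌋₊ : ℝ) ≤ h * ((y + h ^ (1 / α)) ^ α / h) := by
        gcongr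
        exact (Nat.floor_le (by positivity)).trans hle
    _ = (y + h ^ (1 / α)) ^ α := by field_simp

lemma tendsto_rpow_nhdsGT_zero {c : ℝ} (hc : 0 < c) :
    Tendsto (fun h : ℝ => h ^ c) (𝓝[>] 0) (𝓝[>] 0) := by
  refine tendsto_nhdsWithin_iff.2 ⟨?_, ?_⟩
  · have := (tendsto_id.mono_left nhdsWithin_le_nhds : Tendsto id (𝓝[>] (0 : ℝ)) (𝓝 0)).rpow_const
      (p := c) (Or.inr hc.le)
    rwa [Real.zero_rpow hc.ne'] at this
  · filter_upwards [self_mem_nhdsWithin] with h hh using Real.rpow_pos_of_pos hh _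

lemma tendsto_mul_partSize {α y : ℝ} (hα : 0 < α) (hy : 0 ≤ y) :
    Tendsto (fun h : ℝ => h * partSize α ⌊y / h ^ (1 / α)⌋₊) (𝓝[>] 0) (𝓝 (y ^ α)) := by
  have hid : Tendsto (fun h : ℝ => h) (𝓝[>] 0) (𝓝 0) := tendsto_id.mono_left nhdsWithin_le_nhds
  have hlower : Tendsto (fun h : ℝ => y ^ α - h) (𝓝[>] 0) (𝓝 (y ^ α)) := by
    simpa using hid.const_sub (y ^ α)
  have hupper : Tendsto (fun h : ℝ => (y + h ^ (1 / α)) ^ α) (𝓝[>] 0) (𝓝 (y ^ α)) := by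
    have hroot := (tendsto_rpow_nhdsGT_zero (one_div_pos.2 hα)).mono_right nhdsWithin_le_nhds
    simpa using (hroot.const_add y).rpow_const (p := α) (Or.inr hα.le)
  refine tendsto_of_tendsto_of_tendsto_of_le_of_le' hlower hupper ?_ ?_ <;>
    filter_upwards [self_mem_nhdsWithin] with h hh
  · exact rpow_sub_le_mul_partSize hα hh hy
  · exact mul_partSize_le hα hh hy

/-- `H` is dominated by a multiple of `exp (-x / 2)` on `[0, ∞)`; this decay makes all the sums
and integrals of `H` below converge absolutely. -/
def ExpBounded (H : ℝ → ℝ) : Prop := ∃ C, ∀ x, 0 ≤ x → |H x| ≤ C * Real.exp (-x / 2)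

namespace ExpBounded

variable {α : ℝ} {G H : ℝ → ℝ}

lemma mono (hG : ExpBounded G) (hHG : ∀ x, 0 ≤ x → |H x| ≤ |G x|) : ExpBounded H :=
  hG.imp fun _ hC x hx => (hHG x hx).trans (hC x hx)

lemma add (hG : ExpBounded G) (hH : ExpBounded H) : ExpBounded fun x => G x + H x := by
  obtain ⟨C, hC⟩ := hG
  obtain ⟨D, hD⟩ := hH
  refine ⟨C + D, fun x hx => (abs_add_le _ _).trans ?_⟩
  rw [add_mul]
  exact add_le_add (hC x hx) (hD x hx)

lemma const_mul (hH : ExpBounded H) (c : ℝ) : ExpBounded fun x => c * H x := by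
  obtain ⟨C, hC⟩ := hH
  refine ⟨|c| * C, fun x hx => ?_⟩
  rw [abs_mul, mul_assoc]
  exact mul_le_mul_of_nonneg_left (hC x hx) (abs_nonneg c)

lemma pow_mul (hG : ∀ x, 0 ≤ x → |G x| ≤ Real.exp (-x)) (j : ℕ) :
    ExpBounded fun x => x ^ j * G x := by
  refine ⟨2 ^ j * (j.factorial : ℝ), fun x hx => ?_⟩
  rw [abs_mul, abs_of_nonneg (pow_nonneg hx j)]
  have hpow := Real.pow_div_factorial_le_exp (x / 2) (by positivity) j
  rw [div_le_iff₀ (by positivity), div_pow, div_le_iff₀ (by positivity)] at hpow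
  calc x ^ j * |G x| ≤ (Real.exp (x / 2) * j.factorial * 2 ^ j) * Real.exp (-x) :=
        mul_le_mul hpow (hG x hx) (abs_nonneg _) (by positivity)
    _ = 2 ^ j * j.factorial * (Real.exp (x / 2) * Real.exp (-x)) := by ring
    _ = 2 ^ j * j.factorial * Real.exp (-x / 2) := by
        rw [← Real.exp_add]
        ring_nf

lemma integrableOn_exp_neg_rpow_div_two (hα : 0 < α) :
    IntegrableOn (fun y : ℝ => Real.exp (-(y ^ α) / 2)) (Set.Ioi 0) := by
  refine (integrableOn_rpow_mul_exp_neg_mul_rpow (p := α) (s := 0) (b := 1 / 2)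
    (by norm_num) hα (by norm_num)).congr_fun (fun y _ => ?_) measurableSet_Ioi
  simp only [Real.rpow_zero, one_mul]
  ring_nf

lemma exists_norm_comp_mul_partSize_le (hα : 0 < α) (hH : ExpBounded H) :
    ∃ C, 0 ≤ C ∧ ∀ h, 0 < h → ∀ y, 0 ≤ y → ‖H (h * partSize α ⌊y / h ^ (1 / α)⌋₊)‖
      ≤ C * Real.exp (h / 2) * Real.exp (-(y ^ α) / 2) := by
  obtain ⟨C, hC⟩ := hH
  have hC0 : 0 ≤ C := by simpa using (abs_nonneg _).trans (hC 0 le_rfl)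
  refine ⟨C, hC0, fun h hh y hy => (hC _ (by positivity)).trans ?_⟩
  rw [mul_assoc, ← Real.exp_add]
  gcongr
  linarith [rpow_sub_le_mul_partSize hα hh hy]

lemma integrableOn_comp_mul_partSize (hα : 0 < α) (hH : ExpBounded H) {h : ℝ} (hh : 0 < h) :
    IntegrableOn (fun y : ℝ => H (h * partSize α ⌊y / h ^ (1 / α)⌋₊)) (Set.Ioi 0) := by
  obtain ⟨C, -, hC⟩ := hH.exists_norm_comp_mul_partSize_le hα
  have hmeas : Measurable fun n : ℕ => H (h * partSize α n) := measurable_from_top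
  refine Integrable.mono' ((integrableOn_exp_neg_rpow_div_two hα).const_mul _)
    (hmeas.comp (Nat.measurable_floor.comp (measurable_id.div_const _))).aestronglyMeasurable
    (ae_restrict_of_forall_mem measurableSet_Ioi fun y hy => hC h hh y (le_of_lt hy))

lemma hasSum_mul_comp_mul_partSize (hα : 0 < α) (hH : ExpBounded H) {h : ℝ} (hh : 0 < h) :
    HasSum (fun a => h ^ (1 / α) * H (h * partSize α a))
      (∫ y in Set.Ioi (0 : ℝ), H (h * partSize α ⌊y / h ^ (1 / α)⌋₊)) :=
  hasSum_integral_floor_div (F := fun a => H (h * partSize α a)) (by positivity)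
    (hH.integrableOn_comp_mul_partSize hα hh)

lemma summable_comp_mul_partSize (hα : 0 < α) (hH : ExpBounded H) {h : ℝ} (hh : 0 < h) :
    Summable fun a => H (h * partSize α a) :=
  (summable_mul_left_iff (by positivity)).1 (hH.hasSum_mul_comp_mul_partSize hα hh).summable

lemma integrableOn_comp_rpow (hα : 0 < α) (hH : ExpBounded H) (hcont : Continuous H) :
    IntegrableOn (fun y : ℝ => H (y ^ α)) (Set.Ioi 0) := by
  obtain ⟨C, hC⟩ := hH
  exact Integrable.mono' ((integrableOn_exp_neg_rpow_div_two hα).const_mul C)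
    (hcont.comp (Real.continuous_rpow_const hα.le)).aestronglyMeasurable
    (ae_restrict_of_forall_mem measurableSet_Ioi fun y hy =>
      hC _ (Real.rpow_nonneg (le_of_lt hy) α))

end ExpBounded

/-- The sum of `H` over the rescaled parts `h · ⌊(a + 1) ^ α⌋`, i.e. `∑ g(k) H(h k)`. -/
noncomputable def partSum (α : ℝ) (H : ℝ → ℝ) (h : ℝ) : ℝ := ∑' a, H (h * partSize α a)

/-- The limit of the Riemann sums `h ^ (1 / α) * partSum α H h` as `h → 0`. -/
noncomputable def partIntegral (α : ℝ) (H : ℝ → ℝ) : ℝ := ∫ y in Set.Ioi (0 : ℝ), H (y ^ α)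

section PartSum

variable {α : ℝ} {H : ℝ → ℝ}

lemma tendsto_rpow_mul_partSum (hα : 0 < α) (hH : ExpBounded H) (hcont : Continuous H) :
    Tendsto (fun h : ℝ => h ^ (1 / α) * partSum α H h) (𝓝[>] 0) (𝓝 (partIntegral α H)) := by
  have hsum : ∀ᶠ h : ℝ in 𝓝[>] 0,
      ∫ y in Set.Ioi (0 : ℝ), H (h * partSize α ⌊y / h ^ (1 / α)⌋₊)
        = h ^ (1 / α) * partSum α H h := by
    filter_upwards [self_mem_nhdsWithin] with h hh
    rw [← (hH.hasSum_mul_comp_mul_partSize hα hh).tsum_eq, tsum_mul_left, partSum]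
  refine Tendsto.congr' hsum ?_
  obtain ⟨C, hC0, hC⟩ := hH.exists_norm_comp_mul_partSize_le hα
  refine tendsto_integral_filter_of_dominated_convergence
    (fun y => C * Real.exp (1 / 2) * Real.exp (-(y ^ α) / 2)) ?_ ?_
    ((ExpBounded.integrableOn_exp_neg_rpow_div_two hα).const_mul _) ?_
  · filter_upwards [self_mem_nhdsWithin] with h hh
      using (hH.integrableOn_comp_mul_partSize hα hh).aestronglyMeasurable
  · filter_upwards [self_mem_nhdsWithin, nhdsWithin_le_nhds (gt_mem_nhds one_pos)] with h hh hh1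
    refine ae_restrict_of_forall_mem measurableSet_Ioi fun y hy =>
      (hC h hh y (le_of_lt hy)).trans ?_
    gcongr
  · exact ae_restrict_of_forall_mem measurableSet_Ioi fun y hy =>
      (hcont.tendsto _).comp (tendsto_mul_partSize hα (le_of_lt hy))

lemma partIntegral_pos (hα : 0 < α) (hH : ExpBounded H) (hcont : Continuous H)
    (hnonneg : ∀ x, 0 ≤ x → 0 ≤ H x) {x : ℝ} (hx : 0 < x) (hHx : 0 < H x) :
    0 < partIntegral α H := by
  have hcomp : Continuous fun y : ℝ => H (y ^ α) :=
    hcont.comp (Real.continuous_rpow_const hα.le)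
  rw [partIntegral, setIntegral_pos_iff_support_of_nonneg_ae
    (ae_restrict_of_forall_mem measurableSet_Ioi fun y hy =>
      hnonneg _ (Real.rpow_nonneg (le_of_lt hy) α)) (hH.integrableOn_comp_rpow hα hcont)]
  refine lt_of_lt_of_le (((isOpen_lt continuous_const hcomp).inter isOpen_Ioi).measure_pos volume
    ⟨x ^ (1 / α), ?_, Real.rpow_pos_of_pos hx _⟩)
    (measure_mono (Set.inter_subset_inter_left _ fun y hy => ne_of_gt hy))
  simpa only [Set.mem_ofPred_eq, rpow_one_div_rpow hα.ne' hx.le] using hHx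

lemma partSum_nonneg {h : ℝ} (hh : 0 ≤ h) (hnonneg : ∀ x, 0 ≤ x → 0 ≤ H x) :
    0 ≤ partSum α H h :=
  tsum_nonneg fun _ => hnonneg _ (by positivity)

lemma hasSum_g_mul (hα : 0 < α) {h : ℝ} (hh : 0 < h) {G : ℝ → ℝ} (j : ℕ)
    (hG : ExpBounded fun x => x ^ j * G x) :
    HasSum (fun k : ℕ => (g α k : ℝ) * ((k : ℝ) ^ j * G (h * k)))
      ((h ^ j)⁻¹ * partSum α (fun x => x ^ j * G x) h) := by
  simp_rw [g_eq_natCard_preimage]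
  refine hasSum_natCard_fiber_mul (F := fun k : ℕ => (k : ℝ) ^ j * G (h * k)) ?_
  refine ((hG.summable_comp_mul_partSize hα hh).hasSum.mul_left (h ^ j)⁻¹).congr_fun fun a => ?_
  field_simp
  ring

end PartSum

/-! ### The Fermi function and its moments -/

/-- `P(a ∈ A) = 1 / (e^x + 1)`: the inclusion probability of a part of scaled size `x` under the
Boltzmann distribution `∝ e^{-h ∑ parts}` on finite sets of parts. -/
noncomputable def fermi (x : ℝ) : ℝ := 1 / (Real.exp x + 1)

/-- The variance `p (1 - p)` of a Bernoulli variable of parameter `p = fermi x`. -/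
noncomputable def fermiVar (x : ℝ) : ℝ := Real.exp x / (Real.exp x + 1) ^ 2

lemma fermi_pos (x : ℝ) : 0 < fermi x := by unfold fermi; positivity

lemma fermiVar_pos (x : ℝ) : 0 < fermiVar x := by unfold fermiVar; positivity

lemma fermi_lt_one (x : ℝ) : fermi x < 1 := by
  rw [fermi, div_lt_one (by positivity)]
  linarith [Real.exp_pos x]

lemma fermiVar_eq (x : ℝ) : fermiVar x = fermi x * (1 - fermi x) := by
  unfold fermiVar fermi
  field_simp
  ring

lemma fermiVar_le_fermi (x : ℝ) : fermiVar x ≤ fermi x := by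
  rw [fermiVar_eq]
  exact mul_le_of_le_one_right (fermi_pos x).le (by linarith [fermi_pos x])

lemma fermi_le_exp_neg (x : ℝ) : fermi x ≤ Real.exp (-x) := by
  rw [fermi, Real.exp_neg, one_div]
  exact inv_anti₀ (Real.exp_pos x) (by linarith)

lemma strictAnti_fermi : StrictAnti fermi := fun _ _ h =>
  one_div_lt_one_div_of_lt (by positivity) (add_lt_add_left (Real.exp_lt_exp.2 h) 1)

@[fun_prop]
lemma continuous_fermi : Continuous fermi :=
  continuous_const.div (by fun_prop) fun x => by positivity

@[fun_prop]
lemma continuous_fermiVar : Continuous fermiVar :=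
  Real.continuous_exp.div (by fun_prop) fun x => by positivity

lemma expBounded_pow_mul_fermi (j : ℕ) : ExpBounded fun x => x ^ j * fermi x :=
  ExpBounded.pow_mul (fun x _ => by rw [abs_of_pos (fermi_pos x)]; exact fermi_le_exp_neg x) j

lemma expBounded_pow_mul_fermiVar (j : ℕ) : ExpBounded fun x => x ^ j * fermiVar x :=
  (expBounded_pow_mul_fermi j).mono fun x _ => by
    rw [abs_mul, abs_mul, abs_of_pos (fermi_pos x), abs_of_pos (fermiVar_pos x)]
    gcongr
    exact fermiVar_le_fermi x

/-- The sums `∑ g(k) (h k)^j / (e^{hk} + 1)`. -/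
noncomputable def fermiSum (α : ℝ) (j : ℕ) (h : ℝ) : ℝ := partSum α (fun x => x ^ j * fermi x) h

/-- The sums `∑ g(k) (h k)^j e^{hk} / (e^{hk} + 1)²`. -/
noncomputable def fermiVarSum (α : ℝ) (j : ℕ) (h : ℝ) : ℝ :=
  partSum α (fun x => x ^ j * fermiVar x) h

/-- The Riemann-sum limit of `fermiSum`. -/
noncomputable def fermiIntegral (α : ℝ) (j : ℕ) : ℝ := partIntegral α fun x => x ^ j * fermi x

/-- The Riemann-sum limit of `fermiVarSum`. -/
noncomputable def fermiVarIntegral (α : ℝ) (j : ℕ) : ℝ :=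
  partIntegral α fun x => x ^ j * fermiVar x

section FermiSum

variable {α : ℝ}

lemma fermiIntegral_pos (hα : 0 < α) (j : ℕ) : 0 < fermiIntegral α j :=
  partIntegral_pos hα (expBounded_pow_mul_fermi j) (by fun_prop)
    (fun x hx => mul_nonneg (by positivity) (fermi_pos x).le) one_pos
    (by simpa using fermi_pos 1)

lemma fermiVarIntegral_pos (hα : 0 < α) (j : ℕ) : 0 < fermiVarIntegral α j :=
  partIntegral_pos hα (expBounded_pow_mul_fermiVar j) (by fun_prop)
    (fun x hx => mul_nonneg (by positivity) (fermiVar_pos x).le) one_pos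
    (by simpa using fermiVar_pos 1)

lemma tendsto_rpow_mul_fermiSum (hα : 0 < α) (j : ℕ) :
    Tendsto (fun h : ℝ => h ^ (1 / α) * fermiSum α j h) (𝓝[>] 0) (𝓝 (fermiIntegral α j)) :=
  tendsto_rpow_mul_partSum hα (expBounded_pow_mul_fermi j) (by fun_prop)

lemma tendsto_rpow_mul_fermiVarSum (hα : 0 < α) (j : ℕ) :
    Tendsto (fun h : ℝ => h ^ (1 / α) * fermiVarSum α j h) (𝓝[>] 0)
      (𝓝 (fermiVarIntegral α j)) :=
  tendsto_rpow_mul_partSum hα (expBounded_pow_mul_fermiVar j) (by fun_prop)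

lemma fermiVarSum_nonneg {h : ℝ} (hh : 0 ≤ h) (j : ℕ) : 0 ≤ fermiVarSum α j h :=
  partSum_nonneg hh fun x hx => mul_nonneg (by positivity) (fermiVar_pos x).le

/-- The residual variance `J₀ - J₁² / J₂`, with `Jⱼ = fermiVarIntegral α j`, of the number of
parts after regression on their sum, in the limit `h → 0`. -/
noncomputable def residualVarConst (α : ℝ) : ℝ :=
  fermiVarIntegral α 0 - fermiVarIntegral α 1 ^ 2 / fermiVarIntegral α 2

lemma partIntegral_sq_mul_fermiVar (hα : 0 < α) (c : ℝ) :
    partIntegral α (fun x => (1 - c * x) ^ 2 * fermiVar x) = fermiVarIntegral α 0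
      - 2 * c * fermiVarIntegral α 1 + c ^ 2 * fermiVarIntegral α 2 := by
  have hInt (j : ℕ) : IntegrableOn (fun y : ℝ => (y ^ α) ^ j * fermiVar (y ^ α)) (Set.Ioi 0) :=
    (expBounded_pow_mul_fermiVar j).integrableOn_comp_rpow hα (by fun_prop)
  simp only [fermiVarIntegral, partIntegral]
  have hdiff : IntegrableOn (fun y : ℝ => (y ^ α) ^ 0 * fermiVar (y ^ α)
      - 2 * c * ((y ^ α) ^ 1 * fermiVar (y ^ α))) (Set.Ioi 0) := (hInt 0).sub ((hInt 1).const_mul _)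
  rw [← integral_const_mul, ← integral_const_mul, ← integral_sub (hInt 0) ((hInt 1).const_mul _),
    ← integral_add hdiff ((hInt 2).const_mul _)]
  congr 1 with y
  ring

lemma residualVarConst_pos (hα : 0 < α) : 0 < residualVarConst α := by
  have h1 := fermiVarIntegral_pos hα 1
  have h2 := fermiVarIntegral_pos hα 2
  set c := fermiVarIntegral α 1 / fermiVarIntegral α 2 with hc
  have hcpos : 0 < c := by positivity
  have hsquare : residualVarConst α = partIntegral α fun x => (1 - c * x) ^ 2 * fermiVar x := by
    rw [partIntegral_sq_mul_fermiVar hα, residualVarConst, hc]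
    field_simp
    ring
  have hbdd : ExpBounded fun x => (1 - c * x) ^ 2 * fermiVar x := by
    convert ((expBounded_pow_mul_fermiVar 0).add
      ((expBounded_pow_mul_fermiVar 1).const_mul (-(2 * c)))).add
      ((expBounded_pow_mul_fermiVar 2).const_mul (c ^ 2)) using 2 with x
    ring
  rw [hsquare]
  refine partIntegral_pos hα hbdd (by fun_prop)
    (fun x _ => mul_nonneg (sq_nonneg _) (fermiVar_pos x).le) (x := 2 / c) (by positivity) ?_
  have : 1 - c * (2 / c) ≠ 0 := by
    field_simp
    norm_num
  have := fermiVar_pos (2 / c)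
  positivity

end FermiSum

/-! ### The saddle point -/

/-- The expected total size of the parts under the Boltzmann distribution of parameter `h`. -/
noncomputable def meanSize (α h : ℝ) : ℝ := h⁻¹ * fermiSum α 1 h

section MeanSize

variable {α h : ℝ}

lemma tsum_mul_g_div_eq_meanSize (hα : 0 < α) (hh : 0 < h) :
    ∑' k : ℕ, (k : ℝ) * g α k / (Real.exp (h * k) + 1) = meanSize α h := by
  rw [meanSize, fermiSum, ← pow_one h⁻¹, inv_pow,
    ← (hasSum_g_mul hα hh 1 (expBounded_pow_mul_fermi 1)).tsum_eq]
  refine tsum_congr fun k => ?_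
  rw [fermi]
  ring

lemma hasSum_meanSize (hα : 0 < α) (hh : 0 < h) :
    HasSum (fun a => (partSize α a : ℝ) * fermi (h * partSize α a)) (meanSize α h) := by
  have hsum := (expBounded_pow_mul_fermi 1).summable_comp_mul_partSize hα hh
  refine (hsum.hasSum.mul_left h⁻¹).congr_fun fun a => ?_
  field_simp

lemma partSize_mul_fermi_lt (hα : 0 < α) {h' : ℝ} (hlt : h < h') (a : ℕ) :
    (partSize α a : ℝ) * fermi (h' * partSize α a) < partSize α a * fermi (h * partSize α a) := by
  have hpos : (0 : ℝ) < partSize α a := by exact_mod_cast one_le_partSize hα.le a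
  gcongr
  exact strictAnti_fermi (by gcongr)

lemma strictAntiOn_meanSize (hα : 0 < α) : StrictAntiOn (meanSize α) (Set.Ioi 0) := by
  intro h hh h' hh' hlt
  rw [← (hasSum_meanSize hα hh).tsum_eq, ← (hasSum_meanSize hα hh').tsum_eq]
  exact Summable.tsum_lt_tsum (i := 0) (fun a => (partSize_mul_fermi_lt hα hlt a).le)
    (partSize_mul_fermi_lt hα hlt 0) (hasSum_meanSize hα hh').summable
    (hasSum_meanSize hα hh).summable

lemma continuousOn_meanSize (hα : 0 < α) : ContinuousOn (meanSize α) (Set.Ioi 0) := by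
  intro x (hx : 0 < x)
  have hseries : ContinuousOn (fun h => ∑' a, (partSize α a : ℝ) * fermi (h * partSize α a))
      (Set.Ioi (x / 2)) := by
    refine continuousOn_tsum (fun a => by fun_prop) (hasSum_meanSize hα (half_pos hx)).summable
      fun a h (hh : x / 2 < h) => ?_
    rw [Real.norm_of_nonneg (mul_nonneg (Nat.cast_nonneg _) (fermi_pos _).le)]
    exact (partSize_mul_fermi_lt hα hh a).le
  have hnhds : Set.Ioi (x / 2) ∈ 𝓝 x := Ioi_mem_nhds (by linarith)
  refine ((hseries.continuousAt hnhds).congr ?_).continuousWithinAt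
  filter_upwards [hnhds] with h hh
  exact (hasSum_meanSize hα ((half_pos hx).trans hh)).tsum_eq

lemma tendsto_meanSize_nhdsGT_zero (hα : 0 < α) : Tendsto (meanSize α) (𝓝[>] 0) atTop := by
  have hpow : Tendsto (fun h : ℝ => (h ^ (1 + 1 / α))⁻¹) (𝓝[>] 0) atTop :=
    (tendsto_rpow_nhdsGT_zero (by positivity)).inv_tendsto_nhdsGT_zero
  refine (hpow.atTop_mul_pos (fermiIntegral_pos hα 1) (tendsto_rpow_mul_fermiSum hα 1)).congr' ?_
  filter_upwards [self_mem_nhdsWithin] with h (hh : 0 < h)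
  have : 0 < h ^ (1 / α) := by positivity
  rw [Real.rpow_add hh, Real.rpow_one, meanSize]
  field_simp

lemma tendsto_meanSize_atTop (hα : 0 < α) : Tendsto (meanSize α) atTop (𝓝 0) := by
  have hzero (a : ℕ) :
      Tendsto (fun h : ℝ => (partSize α a : ℝ) * fermi (h * partSize α a)) atTop (𝓝 0) := by
    have hpos : (0 : ℝ) < partSize α a := by exact_mod_cast one_le_partSize hα.le a
    have hexp := Real.tendsto_exp_neg_atTop_nhds_zero.comp (tendsto_id.atTop_mul_const hpos)
    simpa using (squeeze_zero (fun h => (fermi_pos _).le)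
      (fun h => fermi_le_exp_neg (h * partSize α a)) hexp).const_mul (partSize α a : ℝ)
  have hbound : ∀ᶠ h : ℝ in atTop, ∀ a : ℕ,
      ‖(partSize α a : ℝ) * fermi (h * partSize α a)‖
        ≤ partSize α a * fermi (1 * partSize α a) := by
    filter_upwards [eventually_gt_atTop 1] with h hh a
    rw [Real.norm_of_nonneg (mul_nonneg (Nat.cast_nonneg _) (fermi_pos _).le)]
    exact (partSize_mul_fermi_lt hα hh a).le
  have hdom := tendsto_tsum_of_dominated_convergence (hasSum_meanSize hα one_pos).summable
    hzero hbound
  rw [tsum_zero] at hdom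
  refine hdom.congr' ?_
  filter_upwards [eventually_gt_atTop 0] with h hh using (hasSum_meanSize hα hh).tsum_eq

lemma existsUnique_meanSize_eq (hα : 0 < α) {x : ℝ} (hx : 0 < x) :
    ∃! η : ℝ, 0 < η ∧ x = meanSize α η := by
  obtain ⟨u, hux, hu⟩ := (((tendsto_meanSize_atTop hα).eventually (gt_mem_nhds hx)).and
    (eventually_gt_atTop 0)).exists
  obtain ⟨v, hxv, hv⟩ := (((tendsto_meanSize_nhdsGT_zero hα).eventually
    (eventually_ge_atTop x)).and self_mem_nhdsWithin).exists
  obtain ⟨η, hη, rfl⟩ := isPreconnected_Ioi.intermediate_value hu hv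
    (continuousOn_meanSize hα) ⟨hux.le, hxv⟩
  exact ⟨η, ⟨hη, rfl⟩, fun _ ⟨hη', heq⟩ => (strictAntiOn_meanSize hα).injOn hη' hη heq.symm⟩

lemma tendsto_saddlePoint (hα : 0 < α) {η : ℕ → ℝ}
    (hη : ∀ n : ℕ, 1 ≤ n → 0 < η n ∧ (n : ℝ) = meanSize α (η n)) :
    Tendsto η atTop (𝓝[>] 0) := by
  refine tendsto_nhdsWithin_iff.2 ⟨(nhdsGT_basis (0 : ℝ)).tendsto_right_iff.2 ?_ |>.mono_right
    nhdsWithin_le_nhds, (eventually_ge_atTop 1).mono fun n hn => (hη n hn).1⟩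
  intro ε hε
  filter_upwards [eventually_ge_atTop 1, tendsto_natCast_atTop_atTop.eventually_gt_atTop
    (meanSize α ε)] with n hn hlarge
  obtain ⟨hpos, heq⟩ := hη n hn
  exact ⟨hpos, (strictAntiOn_meanSize hα).lt_iff_gt hε hpos |>.1 (heq ▸ hlarge)⟩

end MeanSize
/-! ### Products of Bernoulli moment generating functions -/

/-- The moment generating function `E e^{zX}` of a Bernoulli variable `X` of parameter `p`. -/
noncomputable def bernoulliMGF (p : ℝ) (z : ℂ) : ℂ := 1 + p * (Complex.exp z - 1)

section BernoulliMGF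

variable {p u x : ℝ}

lemma one_sub_add_mul_exp_le (hp : 0 ≤ p) (hu : |u| ≤ 1) :
    1 - p + p * Real.exp u ≤ Real.exp (p * u + p * u ^ 2) := by
  have hexp : Real.exp u ≤ 1 + u + u ^ 2 := by
    linarith [le_of_abs_le (Real.abs_exp_sub_one_sub_id_le hu)]
  calc 1 - p + p * Real.exp u ≤ 1 - p + p * (1 + u + u ^ 2) := by gcongr
    _ = p * u + p * u ^ 2 + 1 := by ring
    _ ≤ Real.exp (p * u + p * u ^ 2) := Real.add_one_le_exp _

lemma exp_neg_one_mul_sq_le (hp : 0 ≤ p) (hp1 : p ≤ 1) (hu : |u| ≤ 1) :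
    Real.exp (-1) * (1 - p + p * Real.exp u) ^ 2 ≤ Real.exp u := by
  obtain ⟨hu1, hu2⟩ := abs_le.1 hu
  have : 0 ≤ 1 - p + p * Real.exp u := by nlinarith [Real.exp_pos u]
  rcases le_total 0 u with h | h
  · have hle : 1 - p + p * Real.exp u ≤ Real.exp u := by nlinarith [Real.one_le_exp h]
    calc Real.exp (-1) * (1 - p + p * Real.exp u) ^ 2 ≤ Real.exp (-u) * Real.exp u ^ 2 := by
          gcongr
      _ = Real.exp u := by rw [sq, ← mul_assoc, ← Real.exp_add, neg_add_cancel]; simp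
  · have hle : 1 - p + p * Real.exp u ≤ 1 := by nlinarith [Real.exp_le_one_iff.2 h]
    calc Real.exp (-1) * (1 - p + p * Real.exp u) ^ 2 ≤ Real.exp u * 1 ^ 2 := by gcongr
      _ = Real.exp u := by ring

lemma norm_bernoulliMGF_sq (p u x : ℝ) :
    ‖bernoulliMGF p (u + x * Complex.I)‖ ^ 2 = (1 - p + p * Real.exp u) ^ 2
      - 2 * Real.exp u * (p * (1 - p) * (1 - Real.cos x)) := by
  have hre : (bernoulliMGF p (u + x * Complex.I)).re = 1 + p * (Real.exp u * Real.cos x - 1) := by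
    simp [bernoulliMGF, Complex.exp_re]
  have him : (bernoulliMGF p (u + x * Complex.I)).im = p * (Real.exp u * Real.sin x) := by
    simp [bernoulliMGF, Complex.exp_im]
  rw [← Complex.normSq_eq_norm_sq, Complex.normSq_apply, hre, him]
  linear_combination (p * Real.exp u) ^ 2 * Real.sin_sq_add_cos_sq x

lemma norm_bernoulliMGF_le (hp : 0 ≤ p) (hp1 : p ≤ 1) (hu : |u| ≤ 1) :
    ‖bernoulliMGF p (u + x * Complex.I)‖ ≤ Real.exp (p * u + p * u ^ 2)
      * Real.exp (-(Real.exp (-1) * (p * (1 - p) * (1 - Real.cos x)))) := by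
  set m := 1 - p + p * Real.exp u
  set k := p * (1 - p) * (1 - Real.cos x)
  have : 0 ≤ m := by
    have := Real.exp_pos u
    have := sub_nonneg.2 hp1
    positivity
  have hk : 0 ≤ k :=
    mul_nonneg (mul_nonneg hp (by linarith)) (by linarith [Real.cos_le_one x])
  have hsq : ‖bernoulliMGF p (u + x * Complex.I)‖ ^ 2
      ≤ (m * Real.exp (-(Real.exp (-1) * k))) ^ 2 := by
    calc ‖bernoulliMGF p (u + x * Complex.I)‖ ^ 2
        = m ^ 2 - 2 * Real.exp u * k := norm_bernoulliMGF_sq p u x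
      _ ≤ m ^ 2 - 2 * (Real.exp (-1) * m ^ 2) * k := by
          gcongr
          exact exp_neg_one_mul_sq_le hp hp1 hu
      _ = m ^ 2 * (2 * -(Real.exp (-1) * k) + 1) := by ring
      _ ≤ m ^ 2 * Real.exp (2 * -(Real.exp (-1) * k)) := by
          gcongr
          exact Real.add_one_le_exp _
      _ = (m * Real.exp (-(Real.exp (-1) * k))) ^ 2 := by
          rw [mul_pow, ← Real.exp_nat_mul, Nat.cast_ofNat]
  calc ‖bernoulliMGF p (u + x * Complex.I)‖
      ≤ m * Real.exp (-(Real.exp (-1) * k)) := (sq_le_sq₀ (norm_nonneg _) (by positivity)).1 hsq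
    _ ≤ Real.exp (p * u + p * u ^ 2) * Real.exp (-(Real.exp (-1) * k)) := by
        gcongr
        exact one_sub_add_mul_exp_le hp hu

lemma norm_exp_mul_I_sub_taylor_le (y : ℝ) :
    ‖Complex.exp (y * Complex.I) - (1 + y * Complex.I - (y : ℂ) ^ 2 / 2)‖ ≤ 4 * |y| ^ 3 := by
  have hnorm : ‖(y : ℂ) * Complex.I‖ = |y| := by simp
  rcases le_total |y| 1 with h | h
  · have htaylor : ∑ m ∈ Finset.range 3, ((y : ℂ) * Complex.I) ^ m / (m.factorial : ℂ)
        = 1 + y * Complex.I - (y : ℂ) ^ 2 / 2 := by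
      simp [Finset.sum_range_succ, Nat.factorial, mul_pow]
      ring
    have hbound := Complex.exp_bound (hnorm.trans_le h) (n := 3) (by norm_num)
    rw [htaylor, hnorm] at hbound
    refine hbound.trans ?_
    rw [mul_comm]
    gcongr
    norm_num [Nat.factorial]
  · have htri : ‖1 + (y : ℂ) * Complex.I - (y : ℂ) ^ 2 / 2‖ ≤ 1 + |y| + |y| ^ 2 / 2 := by
      refine (norm_sub_le _ _).trans (add_le_add ((norm_add_le _ _).trans ?_) ?_) <;> simp
    calc ‖Complex.exp (y * Complex.I) - (1 + y * Complex.I - (y : ℂ) ^ 2 / 2)‖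
        ≤ 1 + (1 + |y| + |y| ^ 2 / 2) := by
          refine (norm_sub_le _ _).trans (add_le_add ?_ htri)
          rw [Complex.norm_exp_ofReal_mul_I]
      _ ≤ 4 * |y| ^ 3 := by
          have h2 : |y| ^ 2 ≤ |y| ^ 3 := pow_le_pow_right₀ h (by norm_num)
          have h1 : |y| ≤ |y| ^ 2 := le_self_pow₀ h (by norm_num)
          linarith

lemma abs_exp_neg_sub_one_sub_le {y : ℝ} (hy : 0 ≤ y) : |Real.exp (-y) - (1 - y)| ≤ y ^ 2 := by
  rw [abs_of_nonneg (by linarith [Real.add_one_le_exp (-y)])]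
  rcases le_total y 1 with h | h
  · have := Real.abs_exp_sub_one_sub_id_le (x := -y) (by rwa [abs_neg, abs_of_nonneg hy])
    linarith [le_of_abs_le this, neg_sq y]
  · nlinarith [Real.exp_le_one_iff.2 (neg_nonpos.2 hy)]

lemma bernoulliMGF_mul_exp_neg_mean (p x : ℝ) :
    bernoulliMGF p (x * Complex.I) * Complex.exp (-((p * x : ℝ) : ℂ) * Complex.I)
      = ((1 - p : ℝ) : ℂ) * Complex.exp (((-p * x : ℝ) : ℂ) * Complex.I)
        + (p : ℂ) * Complex.exp ((((1 - p) * x : ℝ) : ℂ) * Complex.I) := by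
  have hsplit : Complex.exp ((((1 - p) * x : ℝ) : ℂ) * Complex.I)
      = Complex.exp (x * Complex.I) * Complex.exp (((-p * x : ℝ) : ℂ) * Complex.I) := by
    rw [← Complex.exp_add]
    push_cast
    ring_nf
  rw [hsplit, bernoulliMGF, ← Complex.ofReal_neg, ← neg_mul]
  push_cast
  ring

lemma norm_bernoulliMGF_mul_exp_neg_mean_le_one (hp : 0 ≤ p) (hp1 : p ≤ 1) :
    ‖bernoulliMGF p (x * Complex.I) * Complex.exp (-((p * x : ℝ) : ℂ) * Complex.I)‖ ≤ 1 := by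
  rw [bernoulliMGF_mul_exp_neg_mean]
  refine (norm_add_le _ _).trans ?_
  rw [norm_mul, norm_mul, Complex.norm_exp_ofReal_mul_I, Complex.norm_exp_ofReal_mul_I,
    Complex.norm_real, Complex.norm_real, Real.norm_of_nonneg hp,
    Real.norm_of_nonneg (sub_nonneg.2 hp1)]
  linarith

lemma norm_bernoulliMGF_mul_exp_neg_mean_sub_le (hp : 0 ≤ p) (hp1 : p ≤ 1) :
    ‖bernoulliMGF p (x * Complex.I) * Complex.exp (-((p * x : ℝ) : ℂ) * Complex.I)
      - (Real.exp (-(p * (1 - p) * x ^ 2 / 2)) : ℂ)‖ ≤ 4 * (p * |x| ^ 3) + p * x ^ 4 := by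
  have hq : 0 ≤ 1 - p := sub_nonneg.2 hp1
  set v := p * (1 - p) * x ^ 2 / 2 with hv
  let R (y : ℝ) : ℂ := Complex.exp (y * Complex.I) - (1 + y * Complex.I - (y : ℂ) ^ 2 / 2)
  -- The first-order terms cancel after centring, and the second-order terms combine to `-v`.
  have hremainder : bernoulliMGF p (x * Complex.I) * Complex.exp (-((p * x : ℝ) : ℂ) * Complex.I)
      - (Real.exp (-v) : ℂ) = ((1 - p : ℝ) : ℂ) * R (-p * x) + (p : ℂ) * R ((1 - p) * x)
        - ((Real.exp (-v) - (1 - v) : ℝ) : ℂ) := by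
    rw [bernoulliMGF_mul_exp_neg_mean]
    simp only [R, hv]
    push_cast
    ring
  calc _ ≤ (1 - p) * (4 * |-p * x| ^ 3) + p * (4 * |(1 - p) * x| ^ 3) + v ^ 2 := by
        rw [hremainder]
        refine (norm_sub_le _ _).trans
          (add_le_add ((norm_add_le _ _).trans (add_le_add ?_ ?_)) ?_)
        · rw [norm_mul, Complex.norm_real, Real.norm_of_nonneg hq]
          gcongr
          exact norm_exp_mul_I_sub_taylor_le _
        · rw [norm_mul, Complex.norm_real, Real.norm_of_nonneg hp]
          gcongr
          exact norm_exp_mul_I_sub_taylor_le _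
        · rw [Complex.norm_real]
          exact abs_exp_neg_sub_one_sub_le (by positivity)
    _ = 4 * (p * |x| ^ 3) * ((1 - p) * (p ^ 2 + (1 - p) ^ 2))
        + p * x ^ 4 * (p * (1 - p) ^ 2 / 4) := by
        rw [abs_mul, abs_mul, abs_neg, abs_of_nonneg hp, abs_of_nonneg hq, hv]
        ring
    _ ≤ 4 * (p * |x| ^ 3) * 1 + p * x ^ 4 * 1 := by
        have hpq := mul_nonneg hp hq
        gcongr
        · nlinarith
        · nlinarith [mul_nonneg hp hpq]
    _ = 4 * (p * |x| ^ 3) + p * x ^ 4 := by ring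

end BernoulliMGF

lemma norm_prod_sub_prod_le_sum {ι R : Type*} [NormedCommRing R] [NormOneClass R]
    (S : Finset ι) (f h : ι → R) (hf : ∀ a ∈ S, ‖f a‖ ≤ 1) (hh : ∀ a ∈ S, ‖h a‖ ≤ 1) :
    ‖∏ a ∈ S, f a - ∏ a ∈ S, h a‖ ≤ ∑ a ∈ S, ‖f a - h a‖ := by
  induction S using Finset.cons_induction with
  | empty => simp
  | cons a S ha ih =>
    simp only [Finset.forall_mem_cons] at hf hh
    rw [Finset.prod_cons, Finset.prod_cons, Finset.sum_cons]
    have hprod : ‖∏ a ∈ S, h a‖ ≤ 1 :=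
      (Finset.norm_prod_le S h).trans (Finset.prod_le_one (fun _ _ => norm_nonneg _) hh.2)
    calc ‖f a * ∏ a ∈ S, f a - h a * ∏ a ∈ S, h a‖
        = ‖(f a - h a) * ∏ a ∈ S, h a + f a * (∏ a ∈ S, f a - ∏ a ∈ S, h a)‖ := by
          congr 1
          ring
      _ ≤ ‖f a - h a‖ * ‖∏ a ∈ S, h a‖ + ‖f a‖ * ‖∏ a ∈ S, f a - ∏ a ∈ S, h a‖ :=
          (norm_add_le _ _).trans (add_le_add (norm_mul_le _ _) (norm_mul_le _ _))
      _ ≤ ‖f a - h a‖ * 1 + 1 * ∑ a ∈ S, ‖f a - h a‖ := by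
          gcongr
          exacts [hf.1, ih hf.2 hh.2]
      _ = ‖f a - h a‖ + ∑ a ∈ S, ‖f a - h a‖ := by ring

lemma norm_prod_bernoulliMGF_mul_exp_sub_le {ι : Type*} (S : Finset ι) (p x : ι → ℝ)
    (hp : ∀ a, 0 ≤ p a) (hp1 : ∀ a, p a ≤ 1) :
    ‖(∏ a ∈ S, bernoulliMGF (p a) (x a * Complex.I))
        * Complex.exp (-((∑ a ∈ S, p a * x a : ℝ) : ℂ) * Complex.I)
      - (Real.exp (-(∑ a ∈ S, p a * (1 - p a) * x a ^ 2) / 2) : ℂ)‖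
      ≤ ∑ a ∈ S, (4 * (p a * |x a| ^ 3) + p a * x a ^ 4) := by
  have hmean : Complex.exp (-((∑ a ∈ S, p a * x a : ℝ) : ℂ) * Complex.I)
      = ∏ a ∈ S, Complex.exp (-((p a * x a : ℝ) : ℂ) * Complex.I) := by
    rw [← Complex.exp_sum, ← Finset.sum_mul, Finset.sum_neg_distrib, Complex.ofReal_sum]
  have hvar : (Real.exp (-(∑ a ∈ S, p a * (1 - p a) * x a ^ 2) / 2) : ℂ)
      = ∏ a ∈ S, (Real.exp (-(p a * (1 - p a) * x a ^ 2 / 2)) : ℂ) := by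
    rw [← Complex.ofReal_prod, ← Real.exp_sum, Finset.sum_neg_distrib, ← Finset.sum_div, neg_div]
  rw [hmean, hvar, ← Finset.prod_mul_distrib]
  refine (norm_prod_sub_prod_le_sum S _ _
    (fun a _ => norm_bernoulliMGF_mul_exp_neg_mean_le_one (hp a) (hp1 a)) (fun a _ => ?_)).trans
    (Finset.sum_le_sum fun a _ => norm_bernoulliMGF_mul_exp_neg_mean_sub_le (hp a) (hp1 a))
  have := hp a
  have := sub_nonneg.2 (hp1 a)
  rw [Complex.norm_real, Real.norm_of_nonneg (Real.exp_pos _).le, Real.exp_le_one_iff]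
  exact neg_nonpos.2 (by positivity)

/-! ### Extracting the sets of a given sum -/

lemma integral_exp_int_mul_I (m : ℤ) :
    ∫ t in (-π)..π, Complex.exp ((m : ℂ) * Complex.I * t) = if m = 0 then (2 * π : ℂ) else 0 := by
  split_ifs with hm
  · simp [hm]
    ring
  · have hperiod : Complex.exp ((m : ℂ) * Complex.I * (π : ℝ))
        = Complex.exp ((m : ℂ) * Complex.I * ((-π : ℝ) : ℂ)) :=
      Complex.exp_eq_exp_iff_exists_int.2 ⟨m, by push_cast; ring⟩
    rw [integral_exp_mul_complex (by simp [hm]), hperiod, sub_self, zero_div]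

section Boltzmann

variable {ι : Type*} (b : ι → ℕ) (S : Finset ι) (h : ℝ)

/-- The joint transform `E e^{z |A| + i t ∑_A b}` of a random `A ⊆ S` that contains each `a`
independently with probability `fermi (h * b a)`. -/
noncomputable def boltzmannMGF (z : ℂ) (t : ℝ) : ℂ :=
  ∏ a ∈ S, bernoulliMGF (fermi (h * b a)) (z + ((t * b a : ℝ) : ℂ) * Complex.I)

/-- The subsets of `S` over which `b` sums to `n`. -/
def subsetsWithSum (n : ℕ) : Finset (Finset ι) := S.powerset.filter fun A => ∑ a ∈ A, b a = n

/-- The probability, common to all `A ∈ subsetsWithSum b S n`, of `A` under the Boltzmann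
distribution on the subsets of `S`. -/
noncomputable def boltzmannWeight (n : ℕ) : ℝ :=
  (∏ a ∈ S, (1 - fermi (h * b a))) * Real.exp (-(h * n))

lemma bernoulliMGF_fermi (x : ℝ) (z : ℂ) :
    bernoulliMGF (fermi x) z = ((1 - fermi x : ℝ) : ℂ) * (1 + Complex.exp (-(x : ℂ) + z)) := by
  have hodds : (fermi x : ℂ) = ((1 - fermi x : ℝ) : ℂ) * Complex.exp (-(x : ℂ)) := by
    rw [← Complex.ofReal_neg, ← Complex.ofReal_exp, ← Complex.ofReal_mul, Real.exp_neg]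
    congr 1
    unfold fermi
    field_simp
    ring
  have hcast : ((1 - fermi x : ℝ) : ℂ) = 1 - fermi x := by push_cast; rfl
  rw [bernoulliMGF, Complex.exp_add]
  linear_combination Complex.exp z * hodds - hcast

lemma boltzmannMGF_eq_sum (z : ℂ) (t : ℝ) :
    boltzmannMGF b S h z t = ∑ A ∈ S.powerset, (boltzmannWeight b S h (∑ a ∈ A, b a) : ℂ)
      * Complex.exp (z * A.card) * Complex.exp (((∑ a ∈ A, b a : ℕ) : ℂ) * Complex.I * t) := by
  classical
  simp only [boltzmannMGF, bernoulliMGF_fermi]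
  rw [Finset.prod_mul_distrib, Finset.prod_one_add, Finset.mul_sum]
  refine Finset.sum_congr rfl fun A _ => ?_
  rw [boltzmannWeight, Complex.ofReal_mul, Complex.ofReal_prod, Complex.ofReal_exp, mul_assoc,
    mul_assoc, ← Complex.exp_add, ← Complex.exp_add, ← Complex.exp_sum]
  congr 2
  simp only [Finset.sum_add_distrib, Finset.sum_const, nsmul_eq_mul, Finset.sum_neg_distrib,
    Complex.ofReal_sum, Complex.ofReal_mul, Complex.ofReal_neg, Complex.ofReal_natCast,
    Nat.cast_sum, Finset.mul_sum, Finset.sum_mul]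
  rw [mul_comm (A.card : ℂ)]
  congr 2
  exact Finset.sum_congr rfl fun a _ => by ring

lemma integral_boltzmannMGF_mul_exp (n : ℕ) (z : ℂ) :
    ∫ t in (-π)..π, boltzmannMGF b S h z t * Complex.exp (-(n * t : ℝ) * Complex.I)
      = 2 * π * (boltzmannWeight b S h n : ℂ)
        * ∑ A ∈ subsetsWithSum b S n, Complex.exp (z * A.card) := by
  have hexpand (t : ℝ) : boltzmannMGF b S h z t * Complex.exp (-(n * t : ℝ) * Complex.I)
      = ∑ A ∈ S.powerset, ((boltzmannWeight b S h (∑ a ∈ A, b a) : ℂ) * Complex.exp (z * A.card))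
        * Complex.exp ((((∑ a ∈ A, b a : ℕ) - n : ℤ) : ℂ) * Complex.I * t) := by
    rw [boltzmannMGF_eq_sum, Finset.sum_mul]
    refine Finset.sum_congr rfl fun A _ => ?_
    rw [mul_assoc, ← Complex.exp_add]
    congr 2
    push_cast
    ring
  simp_rw [hexpand]
  rw [intervalIntegral.integral_finsetSum fun A _ =>
    Continuous.intervalIntegrable (by fun_prop) _ _]
  simp_rw [intervalIntegral.integral_const_mul, integral_exp_int_mul_I, subsetsWithSum]
  rw [Finset.sum_filter, Finset.mul_sum]
  refine Finset.sum_congr rfl fun A _ => ?_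
  by_cases hA : ∑ a ∈ A, b a = n
  · rw [if_pos (by omega), if_pos hA, hA]
    ring
  · rw [if_neg (by omega), if_neg hA, mul_zero, mul_zero]

lemma norm_boltzmannMGF_le {u θ : ℝ} (t : ℝ) (hu : |u| ≤ 1) :
    ‖boltzmannMGF b S h (u + θ * Complex.I) t‖
      ≤ Real.exp ((u + u ^ 2) * ∑ a ∈ S, fermi (h * b a))
        * Real.exp (-(Real.exp (-1)
          * ∑ a ∈ S, fermiVar (h * b a) * (1 - Real.cos (θ + t * b a)))) := by
  rw [boltzmannMGF, norm_prod, Finset.mul_sum, Finset.mul_sum, ← Finset.sum_neg_distrib,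
    Real.exp_sum, Real.exp_sum, ← Finset.prod_mul_distrib]
  refine Finset.prod_le_prod (fun _ _ => norm_nonneg _) fun a _ => ?_
  rw [add_assoc, ← add_mul, ← Complex.ofReal_add, add_mul u, mul_comm u, mul_comm (u ^ 2),
    fermiVar_eq]
  exact norm_bernoulliMGF_le (fermi_pos _).le (fermi_lt_one _).le hu

variable {b S} in
lemma mem_subsetsWithSum {n : ℕ} (hS : ∀ a, b a ≤ n → a ∈ S) {A : Finset ι} :
    A ∈ subsetsWithSum b S n ↔ ∑ a ∈ A, b a = n := by
  rw [subsetsWithSum, Finset.mem_filter, Finset.mem_powerset]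
  refine ⟨And.right, fun h => ⟨fun a ha => hS a ?_, h⟩⟩
  exact h ▸ Finset.single_le_sum (fun _ _ => Nat.zero_le _) ha

end Boltzmann

lemma setOf_forall_one_le_and_eq_image (Q : Finset ℕ → Prop) :
    {A : Finset ℕ | (∀ a ∈ A, 1 ≤ a) ∧ Q A}
      = Finset.map (addRightEmbedding 1) '' {A | Q (A.map (addRightEmbedding 1))} := by
  ext A
  constructor
  · rintro ⟨hA, hQ⟩
    have hshift : (A.image Nat.pred).map (addRightEmbedding 1) = A := by
      rw [Finset.map_eq_image, Finset.image_image]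
      exact (Finset.image_congr fun a ha => Nat.succ_pred_eq_of_pos (hA a ha)).trans
        Finset.image_id
    exact ⟨A.image Nat.pred, by rwa [Set.mem_ofPred_eq, hshift], hshift⟩
  · rintro ⟨A, hQ, rfl⟩
    exact ⟨by simp, hQ⟩

lemma sum_map_succ_floor_rpow (α : ℝ) (A : Finset ℕ) :
    ∑ a ∈ A.map (addRightEmbedding 1), ⌊(a : ℝ) ^ α⌋ = ((∑ a ∈ A, partSize α a : ℕ) : ℤ) := by
  rw [Finset.sum_map, Nat.cast_sum]
  exact Finset.sum_congr rfl fun a _ => (natCast_partSize α a).symm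

section Counting

variable {α : ℝ} {S : Finset ℕ} {n : ℕ} (hS : ∀ a, partSize α a ≤ n → a ∈ S)

include hS

lemma ncard_setOf_sum_floor_rpow_eq (Q : ℕ → Prop) [DecidablePred Q] :
    Set.ncard {A : Finset ℕ | (∀ a ∈ A, 1 ≤ a) ∧ Q A.card ∧ ∑ a ∈ A, ⌊(a : ℝ) ^ α⌋ = (n : ℤ)}
      = ((subsetsWithSum (partSize α) S n).filter fun A => Q A.card).card := by
  rw [setOf_forall_one_le_and_eq_image,
    Set.ncard_image_of_injective _ (Finset.map_injective _), ← Set.ncard_coe_finset]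
  congr 1
  ext A
  rw [Set.mem_ofPred_eq, sum_map_succ_floor_rpow, Finset.card_map, Nat.cast_inj, Finset.mem_coe,
    Finset.mem_filter, mem_subsetsWithSum hS, and_comm]

lemma qnm_eq_card (m : ℕ) :
    qnm α n m = ((subsetsWithSum (partSize α) S n).filter fun A => A.card = m).card :=
  ncard_setOf_sum_floor_rpow_eq hS (· = m)

lemma qn_eq_card : qn α n = (subsetsWithSum (partSize α) S n).card := by
  simpa only [qn, true_and, Finset.filter_true] using
    ncard_setOf_sum_floor_rpow_eq hS fun _ => True

lemma tsum_mul_qnm (F : ℕ → ℝ) :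
    ∑' m : ℕ, F m * qnm α n m = ∑ A ∈ subsetsWithSum (partSize α) S n, F A.card := by
  set P := subsetsWithSum (partSize α) S n
  have hfiber (m : ℕ) : F m * qnm α n m = ∑ A ∈ P.filter (fun A => A.card = m), F A.card := by
    rw [qnm_eq_card hS, Finset.sum_congr rfl fun A hA => congrArg F (Finset.mem_filter.1 hA).2,
      Finset.sum_const, nsmul_eq_mul, mul_comm]
  simp_rw [hfiber]
  rw [tsum_eq_sum (s := P.image Finset.card) fun m hm => ?_]
  · exact Finset.sum_fiberwise_of_maps_to (fun A hA => Finset.mem_image_of_mem _ hA) _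
  · rw [Finset.filter_false_of_mem fun A hA hcard =>
      hm (Finset.mem_image.2 ⟨A, hA, hcard⟩), Finset.sum_empty]

end Counting
/-! ### Lower bounds for the exponent of decay -/

/-- A continuous cutoff to `[0, 1/8]`, the range of `h * b` on which the phases `θ + t * b` with
`|t| ≤ 4πh` stay within `[-π, π]`. -/
noncomputable def cutoff (x : ℝ) : ℝ := max 0 (1 - 8 * x)

@[fun_prop]
lemma continuous_cutoff : Continuous cutoff := by unfold cutoff; fun_prop

lemma cutoff_nonneg (x : ℝ) : 0 ≤ cutoff x := le_max_left _ _

lemma cutoff_le_one {x : ℝ} (hx : 0 ≤ x) : cutoff x ≤ 1 := max_le zero_le_one (by linarith)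

lemma cutoff_eq_zero {x : ℝ} (hx : 1 / 8 ≤ x) : cutoff x = 0 := max_eq_left (by linarith)

lemma expBounded_pow_mul_fermiVar_mul_cutoff (j : ℕ) :
    ExpBounded fun x => x ^ j * (fermiVar x * cutoff x) :=
  (expBounded_pow_mul_fermiVar j).mono fun x hx => by
    rw [abs_mul, abs_mul, abs_mul, abs_of_nonneg (cutoff_nonneg x)]
    gcongr
    exact mul_le_of_le_one_right (abs_nonneg _) (cutoff_le_one hx)

/-- The analogue of `fermiVarSum` restricted smoothly to the parts with `h k ≤ 1/8`. -/
noncomputable def cutoffVarSum (α : ℝ) (j : ℕ) (h : ℝ) : ℝ :=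
  partSum α (fun x => x ^ j * (fermiVar x * cutoff x)) h

/-- The Riemann-sum limit of `cutoffVarSum`. -/
noncomputable def cutoffVarIntegral (α : ℝ) (j : ℕ) : ℝ :=
  partIntegral α fun x => x ^ j * (fermiVar x * cutoff x)

lemma tendsto_rpow_mul_cutoffVarSum {α : ℝ} (hα : 0 < α) (j : ℕ) :
    Tendsto (fun h : ℝ => h ^ (1 / α) * cutoffVarSum α j h) (𝓝[>] 0)
      (𝓝 (cutoffVarIntegral α j)) :=
  tendsto_rpow_mul_partSum hα (expBounded_pow_mul_fermiVar_mul_cutoff j) (by fun_prop)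

lemma cutoffVarIntegral_pos {α : ℝ} (hα : 0 < α) (j : ℕ) : 0 < cutoffVarIntegral α j := by
  refine partIntegral_pos hα (expBounded_pow_mul_fermiVar_mul_cutoff j) (by fun_prop)
    (fun x hx => mul_nonneg (by positivity) (mul_nonneg (fermiVar_pos x).le (cutoff_nonneg x)))
    (x := 1 / 16) (by norm_num) ?_
  have := fermiVar_pos (1 / 16)
  have : 0 < cutoff (1 / 16) := by norm_num [cutoff]
  positivity

section SmallFrequency

variable {α h θ t : ℝ}

lemma mul_cutoff_le_one_sub_cos {b : ℝ} (hh : 0 ≤ h) (hb : 0 ≤ b) (hθ : |θ| ≤ 1)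
    (ht : |t| ≤ 4 * π * h) :
    2 / π ^ 2 * (t ^ 2 * b ^ 2 / 2 - θ ^ 2) * cutoff (h * b) ≤ 1 - Real.cos (θ + t * b) := by
  have hcos : 0 ≤ 1 - Real.cos (θ + t * b) := by linarith [Real.cos_le_one (θ + t * b)]
  rcases le_total (1 / 8) (h * b) with hfar | hnear
  · rwa [cutoff_eq_zero hfar, mul_zero]
  · have htb : |t * b| ≤ π / 2 := by
      rw [abs_mul, abs_of_nonneg hb]
      calc |t| * b ≤ 4 * π * h * b := by gcongr
        _ = 4 * π * (h * b) := by ring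
        _ ≤ 4 * π * (1 / 8) := by gcongr
        _ = π / 2 := by ring
    have hphase : |θ + t * b| ≤ π := by linarith [abs_add_le θ (t * b), Real.two_le_pi]
    calc 2 / π ^ 2 * (t ^ 2 * b ^ 2 / 2 - θ ^ 2) * cutoff (h * b)
        ≤ 2 / π ^ 2 * (θ + t * b) ^ 2 * cutoff (h * b) := by
          gcongr
          · exact cutoff_nonneg _
          · nlinarith [sq_nonneg (2 * θ + t * b)]
      _ ≤ (1 - Real.cos (θ + t * b)) * cutoff (h * b) := by
          gcongr
          · exact cutoff_nonneg _
          · linarith [Real.cos_le_one_sub_mul_cos_sq hphase]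
      _ ≤ 1 - Real.cos (θ + t * b) := mul_le_of_le_one_right hcos (cutoff_le_one (by positivity))

lemma cutoffVarSum_eq_sum {n : ℕ} {S : Finset ℕ} (hh : 0 < h)
    (hS : ∀ a, partSize α a ≤ n → a ∈ S) (hn : 1 / h ≤ n) (j : ℕ) :
    cutoffVarSum α j h = ∑ a ∈ S, (h * partSize α a) ^ j
      * (fermiVar (h * partSize α a) * cutoff (h * partSize α a)) := by
  refine tsum_eq_sum fun a ha => ?_
  have hlt : (n : ℝ) < partSize α a := by exact_mod_cast not_le.1 (mt (hS a) ha)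
  have hlarge : 1 < h * partSize α a := by
    rw [mul_comm]
    exact (div_lt_iff₀ hh).1 (hn.trans_lt hlt)
  simp only [cutoff_eq_zero (x := h * partSize α a) (by linarith), mul_zero]

lemma quadratic_le_sum_fermiVar_mul_one_sub_cos {n : ℕ} {S : Finset ℕ} (hh : 0 < h)
    (hS : ∀ a, partSize α a ≤ n → a ∈ S) (hn : 1 / h ≤ n) (hθ : |θ| ≤ 1)
    (ht : |t| ≤ 4 * π * h) :
    2 / π ^ 2 * (t ^ 2 / 2 * (h ^ 2)⁻¹ * cutoffVarSum α 2 h - θ ^ 2 * cutoffVarSum α 0 h)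
      ≤ ∑ a ∈ S, fermiVar (h * partSize α a) * (1 - Real.cos (θ + t * partSize α a)) := by
  rw [cutoffVarSum_eq_sum hh hS hn, cutoffVarSum_eq_sum hh hS hn, Finset.mul_sum, Finset.mul_sum,
    ← Finset.sum_sub_distrib, Finset.mul_sum]
  refine Finset.sum_le_sum fun a _ => ?_
  refine le_trans (le_of_eq ?_) (mul_le_mul_of_nonneg_left
    (mul_cutoff_le_one_sub_cos hh.le (Nat.cast_nonneg (partSize α a)) hθ ht) (fermiVar_pos _).le)
  field_simp

end SmallFrequency

section LargeFrequency

variable {θ t : ℝ}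

lemma two_mul_sin_mul_sum_cos (θ t : ℝ) (K : ℕ) :
    2 * Real.sin (t / 2) * ∑ k ∈ Finset.range K, Real.cos (θ + t * (k + 1))
      = Real.sin (θ + t * (K + 1 / 2)) - Real.sin (θ + t * (1 / 2)) := by
  induction K with
  | zero => simp
  | succ K ih =>
    have hnext : θ + t * ((K + 1 : ℕ) + 1 / 2) = θ + t * (K + 1) + t / 2 := by push_cast; ring
    have hprev : θ + t * (K + 1 / 2) = θ + t * (K + 1) - t / 2 := by ring
    rw [Finset.sum_range_succ, mul_add, ih, hnext, hprev, Real.sin_add _ (t / 2),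
      Real.sin_sub _ (t / 2)]
    ring

lemma sum_cos_le_pi_div_abs (ht : t ≠ 0) (htπ : |t| ≤ π) (K : ℕ) :
    ∑ k ∈ Finset.range K, Real.cos (θ + t * (k + 1)) ≤ π / |t| := by
  set D := ∑ k ∈ Finset.range K, Real.cos (θ + t * (k + 1))
  have hdirichlet : 2 * |Real.sin (t / 2)| * |D| ≤ 2 := by
    have hprod : |2 * Real.sin (t / 2) * D| ≤ 2 := by
      rw [two_mul_sin_mul_sum_cos, abs_le]
      constructor <;> linarith [Real.sin_le_one (θ + t * (K + 1 / 2)),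
        Real.neg_one_le_sin (θ + t * (K + 1 / 2)), Real.sin_le_one (θ + t * (1 / 2)),
        Real.neg_one_le_sin (θ + t * (1 / 2))]
    rwa [abs_mul, abs_mul, abs_two] at hprod
  have hsin : |t| / π ≤ |Real.sin (t / 2)| := by
    have := Real.mul_abs_le_abs_sin (x := t / 2) (by rw [abs_div, abs_two]; linarith)
    rw [abs_div, abs_two] at this
    exact le_of_eq_of_le (by field_simp) this
  rw [← one_div_div]
  refine (le_abs_self D).trans ((le_div_iff₀ (by positivity)).2 ?_)
  nlinarith [abs_nonneg D]

lemma one_div_sixteen_le_fermiVar {x : ℝ} (h0 : 0 ≤ x) (h1 : x ≤ 1) : 1 / 16 ≤ fermiVar x := by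
  have hge : 1 ≤ Real.exp x := Real.one_le_exp h0
  have hle : Real.exp x ≤ 3 := (Real.exp_le_exp.2 h1).trans (by linarith [Real.exp_one_lt_d9])
  rw [fermiVar, div_le_div_iff₀ (by norm_num) (by positivity)]
  nlinarith

lemma one_div_le_sum_range_fermiVar_mul_one_sub_cos {h : ℝ} (hh : 0 < h) (hh1 : h ≤ 1 / 2)
    (ht : 4 * π * h ≤ |t|) (htπ : |t| ≤ π) :
    1 / (64 * h) ≤ ∑ k ∈ Finset.range ⌊1 / h⌋₊,
      fermiVar (h * (k + 1 : ℕ)) * (1 - Real.cos (θ + t * (k + 1 : ℕ))) := by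
  have htpos : 0 < |t| := lt_of_lt_of_le (by positivity) ht
  set K := ⌊1 / h⌋₊
  have hKle : (K : ℝ) ≤ 1 / h := Nat.floor_le (by positivity)
  have hKge : 1 / (2 * h) ≤ K := by
    have hfloor : 1 / h < K + 1 := Nat.lt_floor_add_one (1 / h)
    have htwice : 1 / h = 1 / (2 * h) + 1 / (2 * h) := by field_simp; norm_num
    have hone : 1 ≤ 1 / (2 * h) := by rw [le_div_iff₀ (by positivity)]; linarith
    linarith
  have hcos : ∑ k ∈ Finset.range K, Real.cos (θ + t * (k + 1)) ≤ 1 / (4 * h) := by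
    refine (sum_cos_le_pi_div_abs (abs_pos.1 htpos) htπ K).trans ?_
    rw [div_le_div_iff₀ htpos (by positivity)]
    linarith
  calc 1 / (64 * h) = 1 / 16 * (1 / (2 * h) - 1 / (4 * h)) := by field_simp; norm_num
    _ ≤ 1 / 16 * (K - ∑ k ∈ Finset.range K, Real.cos (θ + t * (k + 1))) := by gcongr
    _ = ∑ k ∈ Finset.range K, 1 / 16 * (1 - Real.cos (θ + t * (k + 1 : ℕ))) := by
        rw [← Finset.mul_sum, Finset.sum_sub_distrib]
        simp
    _ ≤ _ := by
        refine Finset.sum_le_sum fun k hk => mul_le_mul_of_nonneg_right ?_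
          (sub_nonneg.2 (Real.cos_le_one _))
        have hkK : ((k + 1 : ℕ) : ℝ) ≤ K := by exact_mod_cast Finset.mem_range.1 hk
        refine one_div_sixteen_le_fermiVar (by positivity) ?_
        rw [mul_comm]
        exact (le_div_iff₀ hh).1 (hkK.trans hKle)

lemma sum_range_succ_le_sum_partSize {α : ℝ} (hα : 0 < α) (hα1 : α ≤ 1) {n K : ℕ} (hK : K ≤ n)
    {S : Finset ℕ} (hS : ∀ a, partSize α a ≤ n → a ∈ S) {F : ℕ → ℝ} (hF : ∀ k, 0 ≤ F k) :
    ∑ k ∈ Finset.range K, F (k + 1) ≤ ∑ a ∈ S, F (partSize α a) := by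
  choose c hc using fun k : ℕ => exists_partSize_eq hα hα1 k.succ_pos
  have hinj : Function.Injective c := fun i j hij =>
    Nat.succ_injective ((hc i).symm.trans ((congrArg _ hij).trans (hc j)))
  have hsub : (Finset.range K).map ⟨c, hinj⟩ ⊆ S := by
    intro a ha
    obtain ⟨k, hk, rfl⟩ := Finset.mem_map.1 ha
    exact hS _ ((hc k).trans_le ((Finset.mem_range.1 hk).trans_le hK))
  calc ∑ k ∈ Finset.range K, F (k + 1)
      = ∑ a ∈ (Finset.range K).map ⟨c, hinj⟩, F (partSize α a) := by
        rw [Finset.sum_map]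
        exact Finset.sum_congr rfl fun k _ => congrArg F (hc k).symm
    _ ≤ ∑ a ∈ S, F (partSize α a) :=
        Finset.sum_le_sum_of_subset_of_nonneg hsub fun _ _ _ => hF _

lemma one_div_le_sum_fermiVar_mul_one_sub_cos {α h : ℝ} (hα : 0 < α) (hα1 : α ≤ 1) (hh : 0 < h)
    (hh1 : h ≤ 1 / 2) {n : ℕ} {S : Finset ℕ} (hS : ∀ a, partSize α a ≤ n → a ∈ S)
    (hn : 1 / h ≤ n) (ht : 4 * π * h ≤ |t|) (htπ : |t| ≤ π) :
    1 / (64 * h)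
      ≤ ∑ a ∈ S, fermiVar (h * partSize α a) * (1 - Real.cos (θ + t * partSize α a)) :=
  (one_div_le_sum_range_fermiVar_mul_one_sub_cos hh hh1 ht htπ).trans <|
    sum_range_succ_le_sum_partSize hα hα1 (Nat.floor_le_of_le hn) hS
      (F := fun k => fermiVar (h * k) * (1 - Real.cos (θ + t * k))) fun _ =>
      mul_nonneg (fermiVar_pos _).le (sub_nonneg.2 (Real.cos_le_one _))

end LargeFrequency

/-! ### Truncation and saddle point scales -/

/-- `S` contains every part a partition of `n` can use, and the parts outside `S` contribute at
most `1` to the second moment of the sizes under the Boltzmann distribution of parameter `h`. -/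
structure IsTruncation (α h : ℝ) (n : ℕ) (S : Finset ℕ) : Prop where
  mem : ∀ a, partSize α a ≤ n → a ∈ S
  tail : ∑' a, (partSize α a : ℝ) ^ 2 * fermi (h * partSize α a)
    ≤ ∑ a ∈ S, (partSize α a : ℝ) ^ 2 * fermi (h * partSize α a) + 1

section Truncation

variable {α h : ℝ} {n : ℕ} {S : Finset ℕ}

lemma summable_partSize_pow_mul_fermi (hα : 0 < α) (hh : 0 < h) (j : ℕ) :
    Summable fun a => (partSize α a : ℝ) ^ j * fermi (h * partSize α a) :=
  (((expBounded_pow_mul_fermi j).summable_comp_mul_partSize hα hh).mul_left (h ^ j)⁻¹).congr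
    fun a => by rw [mul_pow, mul_assoc, inv_mul_cancel_left₀ (by positivity)]

lemma finite_setOf_partSize_le (hα : 0 < α) (n : ℕ) : {a | partSize α a ≤ n}.Finite := by
  have hzero := (summable_partSize_pow_mul_fermi hα one_pos 0).tendsto_cofinite_zero
  refine (eventually_cofinite.1 (hzero.eventually (gt_mem_nhds (fermi_pos n)))).subset
    fun a ha => ?_
  have hle : (partSize α a : ℝ) ≤ n := by exact_mod_cast ha
  simpa using strictAnti_fermi.antitone hle

lemma exists_isTruncation (hα : 0 < α) (hh : 0 < h) (n : ℕ) : ∃ S, IsTruncation α h n S := by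
  have htail := (summable_partSize_pow_mul_fermi hα hh 2).hasSum.eventually
    (lt_mem_nhds (sub_one_lt _))
  obtain ⟨S, hlt, hsub⟩ := (htail.and
    (eventually_ge_atTop (finite_setOf_partSize_le hα n).toFinset)).exists
  exact ⟨S, fun a ha => hsub ((Set.Finite.mem_toFinset _).2 ha), by linarith⟩

namespace IsTruncation

lemma abs_sum_sub_tsum_le_one (hS : IsTruncation α h n S) (hα : 0 < α) (hh : 0 < h) {F : ℕ → ℝ}
    (hF0 : ∀ a, 0 ≤ F a)
    (hF : ∀ a, F a ≤ (partSize α a : ℝ) ^ 2 * fermi (h * partSize α a)) :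
    |∑ a ∈ S, F a - ∑' a, F a| ≤ 1 := by
  have hsum := summable_partSize_pow_mul_fermi hα hh 2
  have hsumF : Summable F := .of_nonneg_of_le hF0 hF hsum
  have hle := hsumF.sum_le_tsum S fun a _ => hF0 a
  have hrest := (hsum.sub hsumF).sum_le_tsum S fun a _ => sub_nonneg.2 (hF a)
  rw [hsum.tsum_sub hsumF, Finset.sum_sub_distrib] at hrest
  rw [abs_le]
  constructor <;> linarith [hS.tail]

lemma abs_sum_sub_partSum_le_one (hS : IsTruncation α h n S) (hα : 0 < α) (hh : 0 < h)
    (hh1 : h ≤ 1) {j : ℕ} (hj : j ≤ 2) {G : ℝ → ℝ} (hG0 : ∀ x, 0 ≤ G x)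
    (hG : ∀ x, G x ≤ fermi x) :
    |∑ a ∈ S, (h * partSize α a) ^ j * G (h * partSize α a) - partSum α (fun x => x ^ j * G x) h|
      ≤ 1 := by
  refine hS.abs_sum_sub_tsum_le_one hα hh (fun a => mul_nonneg (by positivity) (hG0 _))
    fun a => mul_le_mul ?_ (hG _) (hG0 _) (by positivity)
  have hsize : (1 : ℝ) ≤ partSize α a := by exact_mod_cast one_le_partSize hα.le a
  calc (h * partSize α a) ^ j ≤ (partSize α a : ℝ) ^ j := by
        gcongr
        exact mul_le_of_le_one_left (Nat.cast_nonneg _) hh1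
    _ ≤ (partSize α a : ℝ) ^ 2 := pow_le_pow_right₀ hsize hj

lemma abs_sum_sub_fermiSum_zero_le_one (hS : IsTruncation α h n S) (hα : 0 < α) (hh : 0 < h)
    (hh1 : h ≤ 1) : |∑ a ∈ S, fermi (h * partSize α a) - fermiSum α 0 h| ≤ 1 := by
  simpa only [pow_zero, one_mul, fermiSum] using
    hS.abs_sum_sub_partSum_le_one hα hh hh1 zero_le_two (fun x => (fermi_pos x).le) fun _ => le_rfl

lemma abs_sum_sub_meanSize_le_one (hS : IsTruncation α h n S) (hα : 0 < α) (hh : 0 < h) :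
    |∑ a ∈ S, partSize α a * fermi (h * partSize α a) - meanSize α h| ≤ 1 := by
  rw [← (hasSum_meanSize hα hh).tsum_eq]
  refine hS.abs_sum_sub_tsum_le_one hα hh
    (fun a => mul_nonneg (Nat.cast_nonneg _) (fermi_pos _).le)
    fun a => mul_le_mul_of_nonneg_right ?_ (fermi_pos _).le
  exact_mod_cast Nat.le_self_pow two_ne_zero (partSize α a)

end IsTruncation

lemma sum_le_fermiSum (hα : 0 < α) (hh : 0 < h) (S : Finset ℕ) (j : ℕ) :
    ∑ a ∈ S, (h * partSize α a) ^ j * fermi (h * partSize α a) ≤ fermiSum α j h :=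
  ((expBounded_pow_mul_fermi j).summable_comp_mul_partSize hα hh).sum_le_tsum S
    fun _ _ => mul_nonneg (by positivity) (fermi_pos _).le

end Truncation

section Scales

lemma tendsto_div_of_tendsto_rpow_mul {c A B : ℝ} {f k : ℝ → ℝ}
    (hf : Tendsto (fun h : ℝ => h ^ c * f h) (𝓝[>] 0) (𝓝 A))
    (hk : Tendsto (fun h : ℝ => h ^ c * k h) (𝓝[>] 0) (𝓝 B)) (hB : B ≠ 0) :
    Tendsto (fun h => f h / k h) (𝓝[>] 0) (𝓝 (A / B)) := by
  refine (hf.div hk hB).congr' ?_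
  filter_upwards [self_mem_nhdsWithin] with h hh
  exact mul_div_mul_left _ _ (Real.rpow_pos_of_pos hh c).ne'

lemma tendsto_atTop_of_tendsto_rpow_mul {c A : ℝ} {f : ℝ → ℝ} (hc : 0 < c) (hA : 0 < A)
    (hf : Tendsto (fun h : ℝ => h ^ c * f h) (𝓝[>] 0) (𝓝 A)) : Tendsto f (𝓝[>] 0) atTop := by
  refine ((tendsto_rpow_nhdsGT_zero hc).inv_tendsto_nhdsGT_zero.atTop_mul_pos hA hf).congr' ?_
  filter_upwards [self_mem_nhdsWithin] with h hh
  exact inv_mul_cancel_left₀ (Real.rpow_pos_of_pos hh c).ne' _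

/-- The variance of the number of parts under the Boltzmann distribution, after linear regression
on the size; `σ_n²` in the theorem. -/
noncomputable def residualVar (α h : ℝ) : ℝ :=
  fermiVarSum α 0 h - fermiVarSum α 1 h ^ 2 / fermiVarSum α 2 h

/-- The scale `σ_n` of the number of parts. -/
noncomputable def residualStd (α h : ℝ) : ℝ := √(residualVar α h)

/-- The standard deviation of the size under the Boltzmann distribution; its inverse is the scale
of the frequencies that contribute to the Fourier integral. -/
noncomputable def sizeStd (α h : ℝ) : ℝ := √(fermiVarSum α 2 h) / h

variable {α : ℝ}

lemma tendsto_fermiSum_atTop (hα : 0 < α) (j : ℕ) :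
    Tendsto (fermiSum α j) (𝓝[>] 0) atTop :=
  tendsto_atTop_of_tendsto_rpow_mul (one_div_pos.2 hα) (fermiIntegral_pos hα j)
    (tendsto_rpow_mul_fermiSum hα j)

lemma tendsto_fermiVarSum_atTop (hα : 0 < α) (j : ℕ) :
    Tendsto (fermiVarSum α j) (𝓝[>] 0) atTop :=
  tendsto_atTop_of_tendsto_rpow_mul (one_div_pos.2 hα) (fermiVarIntegral_pos hα j)
    (tendsto_rpow_mul_fermiVarSum hα j)

lemma tendsto_rpow_mul_residualVar (hα : 0 < α) :
    Tendsto (fun h : ℝ => h ^ (1 / α) * residualVar α h) (𝓝[>] 0) (𝓝 (residualVarConst α)) := by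
  have hlim (j : ℕ) := tendsto_rpow_mul_fermiVarSum hα j
  refine ((hlim 0).sub (((hlim 1).pow 2).div (hlim 2) (fermiVarIntegral_pos hα 2).ne')).congr' ?_
  filter_upwards [self_mem_nhdsWithin] with h (hh : 0 < h)
  have : h ^ (1 / α) ≠ 0 := by positivity
  rw [Pi.div_apply, residualVar, mul_pow, sq (h ^ _), mul_assoc, mul_div_mul_left _ _ this]
  ring

lemma tendsto_residualVar_atTop (hα : 0 < α) : Tendsto (residualVar α) (𝓝[>] 0) atTop :=
  tendsto_atTop_of_tendsto_rpow_mul (one_div_pos.2 hα) (residualVarConst_pos hα)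
    (tendsto_rpow_mul_residualVar hα)

lemma tendsto_residualStd_atTop (hα : 0 < α) : Tendsto (residualStd α) (𝓝[>] 0) atTop :=
  tendsto_sqrt_atTop.comp (tendsto_residualVar_atTop hα)

lemma tendsto_sqrt_fermiVarSum_atTop (hα : 0 < α) :
    Tendsto (fun h => √(fermiVarSum α 2 h)) (𝓝[>] 0) atTop :=
  tendsto_sqrt_atTop.comp (tendsto_fermiVarSum_atTop hα 2)

lemma eventually_residualStd_sq (hα : 0 < α) :
    ∀ᶠ h in 𝓝[>] 0, residualStd α h ^ 2 = residualVar α h := by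
  filter_upwards [(tendsto_residualVar_atTop hα).eventually_ge_atTop 0] with h hh
  exact Real.sq_sqrt hh

lemma tendsto_sizeStd_atTop (hα : 0 < α) : Tendsto (sizeStd α) (𝓝[>] 0) atTop :=
  (tendsto_sqrt_fermiVarSum_atTop hα).atTop_mul_atTop₀ tendsto_inv_nhdsGT_zero

lemma div_sizeStd_mul (v h b : ℝ) : v / sizeStd α h * b = v / √(fermiVarSum α 2 h) * (h * b) := by
  rw [sizeStd, div_div_eq_mul_div]
  ring

lemma sizeStd_sq {h : ℝ} (hh : 0 ≤ h) : sizeStd α h ^ 2 = (h ^ 2)⁻¹ * fermiVarSum α 2 h := by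
  rw [sizeStd, div_pow, Real.sq_sqrt (fermiVarSum_nonneg hh 2), div_eq_inv_mul]

lemma tendsto_sizeStd_sq_mul_exp_neg_div (hα : 0 < α) {c : ℝ} (hc : 0 < c) :
    Tendsto (fun h => (1 + π ^ 2 * sizeStd α h ^ 2) * Real.exp (-(c / h))) (𝓝[>] 0) (𝓝 0) := by
  have hinv : Tendsto (fun h : ℝ => h⁻¹) (𝓝[>] 0) atTop := tendsto_inv_nhdsGT_zero
  have hexp : Tendsto (fun h : ℝ => Real.exp (-(c / h))) (𝓝[>] 0) (𝓝 0) :=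
    Real.tendsto_exp_neg_atTop_nhds_zero.comp (hinv.const_mul_atTop hc)
  have hpow : Tendsto (fun h : ℝ => h⁻¹ ^ (2 + 1 / α) * Real.exp (-c * h⁻¹)) (𝓝[>] 0) (𝓝 0) :=
    (tendsto_rpow_mul_exp_neg_mul_atTop_nhds_zero (2 + 1 / α) c hc).comp hinv
  have hlim := hexp.add (((tendsto_rpow_mul_fermiVarSum hα 2).mul hpow).const_mul (π ^ 2))
  rw [mul_zero, mul_zero, add_zero] at hlim
  refine hlim.congr' ?_
  filter_upwards [self_mem_nhdsWithin] with h (hh : 0 < h)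
  have hne : h ^ (1 / α) ≠ 0 := by positivity
  have hcongr : -c * h⁻¹ = -(c / h) := by rw [neg_mul, div_eq_mul_inv]
  rw [sizeStd_sq hh.le, Real.inv_rpow hh.le, Real.rpow_add hh, hcongr, Real.rpow_two]
  field_simp

end Scales

/-- `η n` solves the saddle point equation for `n`, and `S n` is an associated truncation. -/
structure IsSaddlePointSequence (α : ℝ) (η : ℕ → ℝ) (S : ℕ → Finset ℕ) : Prop where
  alpha_pos : 0 < α
  alpha_le_one : α ≤ 1
  pos : ∀ n, 1 ≤ n → 0 < η n
  meanSize_eq : ∀ n : ℕ, 1 ≤ n → (n : ℝ) = meanSize α (η n)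
  isTruncation : ∀ n, 1 ≤ n → IsTruncation α (η n) n (S n)

namespace IsSaddlePointSequence

variable {α : ℝ} {η : ℕ → ℝ} {S : ℕ → Finset ℕ} (H : IsSaddlePointSequence α η S)
include H

lemma tendsto : Tendsto η atTop (𝓝[>] 0) :=
  tendsto_saddlePoint H.alpha_pos fun n hn => ⟨H.pos n hn, H.meanSize_eq n hn⟩

lemma eventually_lt {c : ℝ} (hc : 0 < c) : ∀ᶠ n in atTop, η n < c :=
  H.tendsto.eventually (nhdsWithin_le_nhds (gt_mem_nhds hc))

lemma eventually_one_div_le : ∀ᶠ n : ℕ in atTop, 1 / η n ≤ n := by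
  filter_upwards [eventually_ge_atTop 1,
    ((tendsto_fermiSum_atTop H.alpha_pos 1).comp H.tendsto).eventually_ge_atTop 1]
    with n hn (hlarge : 1 ≤ fermiSum α 1 (η n))
  rw [H.meanSize_eq n hn, one_div, meanSize]
  exact le_mul_of_one_le_right (inv_pos.2 (H.pos n hn)).le hlarge

end IsSaddlePointSequence

/-! ### The Fourier integral on the normalised scale -/

/-- The phase `θ + t b` of the part `a` at the normalised frequencies `θ = s / σ`, `t = v / B`,
where `σ` and `B` are the scales of the number of parts and of the size. -/
noncomputable def phase (α h s v : ℝ) (a : ℕ) : ℝ :=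
  s / residualStd α h + v / sizeStd α h * partSize α a

/-- The exponent governing the decay of the Boltzmann transform at the frequencies `(s, v)`. -/
noncomputable def decayRate (α h : ℝ) (S : Finset ℕ) (s v : ℝ) : ℝ :=
  ∑ a ∈ S, fermiVar (h * partSize α a) * (1 - Real.cos (phase α h s v a))

/-- The Fourier integrand whose integral over `v` is proportional to the sum of `e^{w X}` over the
partitions of `n`, with `X` the normalised number of parts. -/
noncomputable def normalizedMGF (α h : ℝ) (S : Finset ℕ) (n : ℕ) (w : ℂ) (v : ℝ) : ℂ :=
  boltzmannMGF (partSize α) S h (w / residualStd α h) (v / sizeStd α h)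
    * Complex.exp (-(n * (v / sizeStd α h) : ℝ) * Complex.I)
    * Complex.exp (-(w / residualStd α h) * fermiSum α 0 h)

@[fun_prop]
lemma continuous_normalizedMGF (α h : ℝ) (S : Finset ℕ) (n : ℕ) (w : ℂ) :
    Continuous (normalizedMGF α h S n w) := by
  unfold normalizedMGF boltzmannMGF bernoulliMGF
  fun_prop

section Domination

variable {α h : ℝ} {n : ℕ} {S : Finset ℕ}

lemma norm_normalizedMGF_le (hα : 0 < α) (hh : 0 < h) (hh1 : h ≤ 1) (hS : IsTruncation α h n S)
    {w : ℂ} (hσ : 0 < residualStd α h) (hw : |w.re| ≤ residualStd α h) (v : ℝ) :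
    ‖normalizedMGF α h S n w v‖
      ≤ Real.exp (1 + w.re ^ 2 * (fermiSum α 0 h / residualStd α h ^ 2))
        * Real.exp (-(Real.exp (-1) * decayRate α h S w.im v)) := by
  set σ := residualStd α h
  set m := ∑ a ∈ S, fermi (h * partSize α a)
  set μ := fermiSum α 0 h
  have hz : w / σ = ((w.re / σ : ℝ) : ℂ) + ((w.im / σ : ℝ) : ℂ) * Complex.I := by
    conv_lhs => rw [← Complex.re_add_im w]
    push_cast
    ring
  have hu : |w.re / σ| ≤ 1 := by rwa [abs_div, abs_of_pos hσ, div_le_one hσ]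
  have hm : |m - μ| ≤ 1 := hS.abs_sum_sub_fermiSum_zero_le_one hα hh hh1
  have hmμ : m ≤ μ := by simpa using sum_le_fermiSum hα hh S 0
  have hshift : ‖Complex.exp (-(w / σ) * μ)‖ = Real.exp (-(w.re / σ) * μ) := by
    rw [Complex.norm_exp, hz]
    simp
  have hexponent : (w.re / σ + (w.re / σ) ^ 2) * m + -(w.re / σ) * μ
      ≤ 1 + w.re ^ 2 * (μ / σ ^ 2) := by
    have hlinear : w.re / σ * (m - μ) ≤ 1 :=
      (le_abs_self _).trans ((abs_mul _ _).trans_le (mul_le_one₀ hu (abs_nonneg _) hm))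
    have hsquare : (w.re / σ) ^ 2 * m ≤ w.re ^ 2 * (μ / σ ^ 2) :=
      (mul_le_mul_of_nonneg_left hmμ (sq_nonneg _)).trans_eq (by ring)
    linarith
  rw [normalizedMGF, norm_mul, norm_mul, hshift, ← Complex.ofReal_neg,
    Complex.norm_exp_ofReal_mul_I, mul_one, hz]
  calc _ ≤ Real.exp ((w.re / σ + (w.re / σ) ^ 2) * m)
          * Real.exp (-(Real.exp (-1) * decayRate α h S w.im v)) * Real.exp (-(w.re / σ) * μ) := by
        gcongr
        exact norm_boltzmannMGF_le _ _ _ _ hu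
    _ = Real.exp ((w.re / σ + (w.re / σ) ^ 2) * m + -(w.re / σ) * μ)
          * Real.exp (-(Real.exp (-1) * decayRate α h S w.im v)) := by
        rw [Real.exp_add]
        ring
    _ ≤ _ := by gcongr

lemma quadratic_le_decayRate {s v : ℝ} (hh : 0 < h) (hS : IsTruncation α h n S)
    (hn : 1 / h ≤ n) (hσ : 0 < residualStd α h) (hs : |s| ≤ residualStd α h)
    (hv : |v / sizeStd α h| ≤ 4 * π * h) :
    2 / π ^ 2 * (v ^ 2 / 2 * (cutoffVarSum α 2 h / fermiVarSum α 2 h)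
        - s ^ 2 * (cutoffVarSum α 0 h / residualStd α h ^ 2)) ≤ decayRate α h S s v := by
  have hθ : |s / residualStd α h| ≤ 1 := by rwa [abs_div, abs_of_pos hσ, div_le_one hσ]
  refine le_of_eq_of_le ?_ (quadratic_le_sum_fermiVar_mul_one_sub_cos hh hS.mem hn hθ hv)
  rw [div_pow, div_pow, sizeStd_sq hh.le]
  field_simp

end Domination

namespace IsSaddlePointSequence

variable {α : ℝ} {η : ℕ → ℝ} {S : ℕ → Finset ℕ} (H : IsSaddlePointSequence α η S)
include H

lemma eventually_gt_of_tendsto_atTop {f : ℝ → ℝ} (hf : Tendsto f (𝓝[>] 0) atTop) (c : ℝ) :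
    ∀ᶠ n in atTop, c < f (η n) :=
  (hf.comp H.tendsto).eventually_gt_atTop c

lemma exists_eventually_exp_decayRate_le_of_small (s : ℝ) :
    ∃ K > 0, ∃ c > 0, ∀ᶠ n in atTop, ∀ v, |v / sizeStd α (η n)| ≤ 4 * π * η n →
      Real.exp (-(Real.exp (-1) * decayRate α (η n) (S n) s v)) ≤ K * Real.exp (-c * v ^ 2) := by
  have hα := H.alpha_pos
  have hcut (j : ℕ) := tendsto_rpow_mul_cutoffVarSum hα j
  have hratio₂ := tendsto_div_of_tendsto_rpow_mul (hcut 2) (tendsto_rpow_mul_fermiVarSum hα 2)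
    (fermiVarIntegral_pos hα 2).ne'
  have hratio₀ := tendsto_div_of_tendsto_rpow_mul (hcut 0) (tendsto_rpow_mul_residualVar hα)
    (residualVarConst_pos hα).ne'
  obtain ⟨c, hc, hc2⟩ := exists_between
    (div_pos (cutoffVarIntegral_pos hα 2) (fermiVarIntegral_pos hα 2))
  obtain ⟨M, hM⟩ := exists_gt (cutoffVarIntegral α 0 / residualVarConst α)
  refine ⟨Real.exp (Real.exp (-1) * (2 / π ^ 2) * (s ^ 2 * M)), Real.exp_pos _,
    Real.exp (-1) * (2 / π ^ 2) * (c / 2), by positivity, ?_⟩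
  filter_upwards [eventually_ge_atTop 1, H.eventually_one_div_le,
    H.tendsto.eventually (eventually_residualStd_sq hα),
    H.eventually_gt_of_tendsto_atTop (tendsto_residualStd_atTop hα) 0,
    H.eventually_gt_of_tendsto_atTop (tendsto_residualStd_atTop hα) |s|,
    H.tendsto.eventually (hratio₂.eventually (lt_mem_nhds hc2)),
    H.tendsto.eventually (hratio₀.eventually (gt_mem_nhds hM))]
    with n hn hinv hsq hσ hs hlower hupper v hv
  rw [← Real.exp_add]
  gcongr
  have hquad := quadratic_le_decayRate (H.pos n hn) (H.isTruncation n hn) hinv hσ hs.le hv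
  rw [hsq] at hquad
  calc -(Real.exp (-1) * decayRate α (η n) (S n) s v)
      ≤ -(Real.exp (-1) * (2 / π ^ 2 * (v ^ 2 / 2 * c - s ^ 2 * M))) := by
        gcongr
        refine le_trans ?_ hquad
        gcongr
    _ = _ := by ring

lemma eventually_exp_decayRate_le_of_large (s : ℝ) :
    ∀ᶠ n in atTop, ∀ v, 4 * π * η n ≤ |v / sizeStd α (η n)| → |v| ≤ π * sizeStd α (η n) →
      Real.exp (-(Real.exp (-1) * decayRate α (η n) (S n) s v)) ≤ (1 + v ^ 2)⁻¹ := by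
  have hα := H.alpha_pos
  have hexp := tendsto_sizeStd_sq_mul_exp_neg_div hα (c := Real.exp (-1) / 64) (by positivity)
  filter_upwards [eventually_ge_atTop 1, H.eventually_one_div_le, H.eventually_lt one_half_pos,
    H.eventually_gt_of_tendsto_atTop (tendsto_sizeStd_atTop hα) 0,
    H.tendsto.eventually (hexp.eventually (gt_mem_nhds one_pos))]
    with n hn hinv hhalf hB hsmall v hlarge hv
  have hvπ : |v / sizeStd α (η n)| ≤ π := by rwa [abs_div, abs_of_pos hB, div_le_iff₀ hB]
  have hrate : 1 / (64 * η n) ≤ decayRate α (η n) (S n) s v :=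
    one_div_le_sum_fermiVar_mul_one_sub_cos hα H.alpha_le_one (H.pos n hn) hhalf.le
      (H.isTruncation n hn).mem hinv hlarge hvπ
  have hv2 : v ^ 2 ≤ π ^ 2 * sizeStd α (η n) ^ 2 := by
    rw [← mul_pow, ← sq_abs]
    gcongr
  calc Real.exp (-(Real.exp (-1) * decayRate α (η n) (S n) s v))
      ≤ Real.exp (-(Real.exp (-1) * (1 / (64 * η n)))) := by gcongr
    _ = Real.exp (-(Real.exp (-1) / 64 / η n)) := by rw [mul_one_div, div_div]
    _ ≤ (1 + π ^ 2 * sizeStd α (η n) ^ 2)⁻¹ := by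
        rw [le_inv_comm₀ (Real.exp_pos _) (by positivity), ← one_div, le_div_iff₀ (Real.exp_pos _)]
        exact hsmall.le
    _ ≤ (1 + v ^ 2)⁻¹ := by gcongr

lemma exists_eventually_norm_normalizedMGF_le (w : ℂ) :
    ∃ K > 0, ∃ c > 0, ∀ᶠ n in atTop, ∀ v, |v| ≤ π * sizeStd α (η n) →
      ‖normalizedMGF α (η n) (S n) n w v‖ ≤ K * (Real.exp (-c * v ^ 2) + (1 + v ^ 2)⁻¹) := by
  have hα := H.alpha_pos
  have hratio := tendsto_div_of_tendsto_rpow_mul (tendsto_rpow_mul_fermiSum hα 0)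
    (tendsto_rpow_mul_residualVar hα) (residualVarConst_pos hα).ne'
  obtain ⟨M, hM⟩ := exists_gt (fermiIntegral α 0 / residualVarConst α)
  obtain ⟨K, hK, c, hc, hsmall⟩ := H.exists_eventually_exp_decayRate_le_of_small w.im
  refine ⟨Real.exp (1 + w.re ^ 2 * M) * max K 1, by positivity, c, hc, ?_⟩
  filter_upwards [eventually_ge_atTop 1, H.eventually_lt one_pos,
    H.tendsto.eventually (eventually_residualStd_sq hα),
    H.eventually_gt_of_tendsto_atTop (tendsto_residualStd_atTop hα) 0,
    H.eventually_gt_of_tendsto_atTop (tendsto_residualStd_atTop hα) |w.re|,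
    H.tendsto.eventually (hratio.eventually (gt_mem_nhds hM)), hsmall,
    H.eventually_exp_decayRate_le_of_large w.im]
    with n hn hη1 hsq hσ hw hupper hnear hfar v hv
  have hdecay : Real.exp (-(Real.exp (-1) * decayRate α (η n) (S n) w.im v))
      ≤ max K 1 * (Real.exp (-c * v ^ 2) + (1 + v ^ 2)⁻¹) := by
    rcases le_total |v / sizeStd α (η n)| (4 * π * η n) with hle | hge
    · refine (hnear v hle).trans ?_
      gcongr
      · exact le_max_left _ _
      · exact le_add_of_nonneg_right (by positivity)
    · exact (hfar v hge hv).trans <|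
        (le_add_of_nonneg_left (Real.exp_pos (-c * v ^ 2)).le).trans <|
          le_mul_of_one_le_left (by positivity) (le_max_right _ _)
  refine (norm_normalizedMGF_le hα (H.pos n hn) hη1.le (H.isTruncation n hn) hσ hw.le v).trans ?_
  rw [hsq, mul_assoc]
  gcongr

end IsSaddlePointSequence

section PointwiseLimit

lemma phase_eq (α h s v : ℝ) (a : ℕ) :
    phase α h s v a
      = s / residualStd α h + v / √(fermiVarSum α 2 h) * (h * partSize α a) := by
  rw [phase, div_sizeStd_mul]

lemma normalizedMGF_mul_I (α h : ℝ) (S : Finset ℕ) (n : ℕ) (s v : ℝ) :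
    normalizedMGF α h S n (s * Complex.I) v
      = (∏ a ∈ S, bernoulliMGF (fermi (h * partSize α a)) (phase α h s v a * Complex.I))
        * Complex.exp (-((∑ a ∈ S, fermi (h * partSize α a) * phase α h s v a : ℝ) : ℂ)
          * Complex.I)
        * Complex.exp (((s / residualStd α h * (∑ a ∈ S, fermi (h * partSize α a) - fermiSum α 0 h)
          + v / sizeStd α h * (∑ a ∈ S, partSize α a * fermi (h * partSize α a) - n) : ℝ) : ℂ)
          * Complex.I) := by
  have hmean : ∑ a ∈ S, fermi (h * partSize α a) * phase α h s v a
      = s / residualStd α h * ∑ a ∈ S, fermi (h * partSize α a)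
        + v / sizeStd α h * ∑ a ∈ S, partSize α a * fermi (h * partSize α a) := by
    rw [Finset.mul_sum, Finset.mul_sum, ← Finset.sum_add_distrib]
    exact Finset.sum_congr rfl fun a _ => by rw [phase]; ring
  rw [normalizedMGF, boltzmannMGF, mul_assoc, mul_assoc, ← Complex.exp_add, ← Complex.exp_add,
    hmean]
  congr 1
  · refine Finset.prod_congr rfl fun a _ => ?_
    congr 1
    rw [phase]
    push_cast
    ring
  · congr 1
    push_cast
    ring

lemma tendsto_div_of_abs_sub_le_one {ι : Type*} {l : Filter ι} {A T d : ι → ℝ} {L : ℝ}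
    (hclose : ∀ᶠ i in l, |A i - T i| ≤ 1) (hT : Tendsto (fun i => T i / d i) l (𝓝 L))
    (hd : Tendsto d l atTop) : Tendsto (fun i => A i / d i) l (𝓝 L) := by
  have hdiff : Tendsto (fun i => (A i - T i) / d i) l (𝓝 0) := by
    refine squeeze_zero_norm' ?_ (hd.const_div_atTop 1)
    filter_upwards [hclose, hd.eventually_gt_atTop 0] with i hi hpos
    rw [norm_div, Real.norm_eq_abs, Real.norm_of_nonneg hpos.le]
    gcongr
  simpa [← add_div] using hdiff.add hT

/-- The limiting covariance, under the Boltzmann distribution, of the number of parts divided by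
`residualStd` and the size divided by its standard deviation. -/
noncomputable def sizeCovariance (α : ℝ) : ℝ :=
  fermiVarIntegral α 1 / (√(residualVarConst α) * √(fermiVarIntegral α 2))

lemma fermiVarIntegral_zero_div {α : ℝ} (hα : 0 < α) :
    fermiVarIntegral α 0 / residualVarConst α = 1 + sizeCovariance α ^ 2 := by
  have hτ := residualVarConst_pos hα
  have hsize := fermiVarIntegral_pos hα 2
  rw [sizeCovariance, div_pow, mul_pow, Real.sq_sqrt hτ.le, Real.sq_sqrt hsize.le,
    div_eq_iff hτ.ne', add_mul, one_mul]
  nth_rw 1 [residualVarConst]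
  field_simp
  ring

lemma tendsto_abs_div_pow_mul {ι : Type*} {l : Filter ι} {f d : ι → ℝ} {L : ℝ}
    (hf : Tendsto (fun i => f i / d i ^ 2) l (𝓝 L)) (hd : Tendsto d l atTop) (s : ℝ) (m : ℕ) :
    Tendsto (fun i => |s / d i| ^ (m + 3) * f i) l (𝓝 0) := by
  have hlim := (hf.mul ((hd.const_div_atTop 1).pow (m + 1))).const_mul (|s| ^ (m + 3))
  rw [zero_pow m.succ_ne_zero, mul_zero, mul_zero] at hlim
  refine hlim.congr' ?_
  filter_upwards [hd.eventually_gt_atTop 0] with i hi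
  rw [abs_div, abs_of_pos hi, one_div, inv_pow, div_pow, pow_add (d i) m 3, pow_succ (d i) m]
  field_simp

lemma cubic_add_quartic_le {p : ℝ} (hp : 0 ≤ p) (a b : ℝ) :
    4 * (p * |a + b| ^ 3) + p * (a + b) ^ 4
      ≤ p * (16 * (|a| ^ 3 + |b| ^ 3) + 8 * (|a| ^ 4 + |b| ^ 4)) := by
  have habs := abs_add_le a b
  have hcube : |a + b| ^ 3 ≤ 2 ^ 2 * (|a| ^ 3 + |b| ^ 3) :=
    (pow_le_pow_left₀ (abs_nonneg _) habs 3).trans (add_pow_le (abs_nonneg a) (abs_nonneg b) 3)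
  have hquartic : (a + b) ^ 4 ≤ 2 ^ 3 * (|a| ^ 4 + |b| ^ 4) := by
    rw [← Even.pow_abs (by decide) (a + b)]
    exact (pow_le_pow_left₀ (abs_nonneg _) habs 4).trans
      (add_pow_le (abs_nonneg a) (abs_nonneg b) 4)
  calc _ = p * (4 * |a + b| ^ 3 + (a + b) ^ 4) := by ring
    _ ≤ _ := mul_le_mul_of_nonneg_left (by linarith) hp

end PointwiseLimit

section PointwiseLimit

lemma tendsto_fermiVarSum_one_div {α : ℝ} (hα : 0 < α) :
    Tendsto (fun h => fermiVarSum α 1 h / (residualStd α h * √(fermiVarSum α 2 h))) (𝓝[>] 0)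
      (𝓝 (sizeCovariance α)) := by
  refine tendsto_div_of_tendsto_rpow_mul (tendsto_rpow_mul_fermiVarSum hα 1)
    (((tendsto_rpow_mul_residualVar hα).sqrt.mul (tendsto_rpow_mul_fermiVarSum hα 2).sqrt).congr'
      ?_) (mul_pos (Real.sqrt_pos.2 (residualVarConst_pos hα))
        (Real.sqrt_pos.2 (fermiVarIntegral_pos hα 2))).ne'
  filter_upwards [self_mem_nhdsWithin] with h (hh : 0 < h)
  have hpow : 0 ≤ h ^ (1 / α) := by positivity
  rw [Real.sqrt_mul hpow, Real.sqrt_mul hpow, mul_mul_mul_comm, Real.mul_self_sqrt hpow,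
    residualStd]

lemma sum_fermi_mul_phase_cubic_add_quartic_le {α h : ℝ} (hα : 0 < α) (hh : 0 < h)
    (S : Finset ℕ) (s v : ℝ) :
    ∑ a ∈ S, (4 * (fermi (h * partSize α a) * |phase α h s v a| ^ 3)
        + fermi (h * partSize α a) * phase α h s v a ^ 4)
      ≤ 16 * (|s / residualStd α h| ^ 3 * fermiSum α 0 h
          + |v / √(fermiVarSum α 2 h)| ^ 3 * fermiSum α 3 h)
        + 8 * (|s / residualStd α h| ^ 4 * fermiSum α 0 h
          + |v / √(fermiVarSum α 2 h)| ^ 4 * fermiSum α 4 h) := by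
  set x := |s / residualStd α h|
  set y := |v / √(fermiVarSum α 2 h)|
  have hsum := sum_le_fermiSum hα hh S
  calc _ ≤ ∑ a ∈ S, fermi (h * partSize α a)
          * (16 * (x ^ 3 + (y * (h * partSize α a)) ^ 3)
            + 8 * (x ^ 4 + (y * (h * partSize α a)) ^ 4)) := by
        refine Finset.sum_le_sum fun a _ => ?_
        have hsize : |v / √(fermiVarSum α 2 h) * (h * partSize α a)| = y * (h * partSize α a) := by
          rw [abs_mul, abs_of_nonneg (a := h * (partSize α a : ℝ)) (by positivity)]
        rw [phase_eq, ← hsize]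
        exact cubic_add_quartic_le (fermi_pos _).le _ _
    _ = 16 * (x ^ 3 * ∑ a ∈ S, (h * partSize α a) ^ 0 * fermi (h * partSize α a)
            + y ^ 3 * ∑ a ∈ S, (h * partSize α a) ^ 3 * fermi (h * partSize α a))
          + 8 * (x ^ 4 * ∑ a ∈ S, (h * partSize α a) ^ 0 * fermi (h * partSize α a)
            + y ^ 4 * ∑ a ∈ S, (h * partSize α a) ^ 4 * fermi (h * partSize α a)) := by
        simp only [Finset.mul_sum, ← Finset.sum_add_distrib]
        exact Finset.sum_congr rfl fun a _ => by ring
    _ ≤ _ := by gcongr <;> exact hsum _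

namespace IsSaddlePointSequence

variable {α : ℝ} {η : ℕ → ℝ} {S : ℕ → Finset ℕ} (H : IsSaddlePointSequence α η S)
include H

lemma tendsto_sum_fermiVar_div {j : ℕ} (hj : j ≤ 2) {d : ℝ → ℝ} {L : ℝ}
    (hlim : Tendsto (fun h => fermiVarSum α j h / d h) (𝓝[>] 0) (𝓝 L))
    (hd : Tendsto d (𝓝[>] 0) atTop) :
    Tendsto (fun n => (∑ a ∈ S n, (η n * partSize α a) ^ j * fermiVar (η n * partSize α a))
      / d (η n)) atTop (𝓝 L) := by
  refine tendsto_div_of_abs_sub_le_one ?_ (hlim.comp H.tendsto) (hd.comp H.tendsto)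
  filter_upwards [eventually_ge_atTop 1, H.eventually_lt one_pos] with n hn hη1
  exact (H.isTruncation n hn).abs_sum_sub_partSum_le_one H.alpha_pos (H.pos n hn) hη1.le hj
    (fun x => (fermiVar_pos x).le) fermiVar_le_fermi

lemma tendsto_sum_fermiVar_mul_phase_sq (s v : ℝ) :
    Tendsto (fun n => ∑ a ∈ S n, fermi (η n * partSize α a) * (1 - fermi (η n * partSize α a))
      * phase α (η n) s v a ^ 2) atTop (𝓝 (s ^ 2 + (v + s * sizeCovariance α) ^ 2)) := by
  have hα := H.alpha_pos
  have hparts := H.tendsto_sum_fermiVar_div (Nat.zero_le 2) (tendsto_div_of_tendsto_rpow_mul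
    (tendsto_rpow_mul_fermiVarSum hα 0) (tendsto_rpow_mul_residualVar hα)
    (residualVarConst_pos hα).ne') (tendsto_residualVar_atTop hα)
  have hcross := H.tendsto_sum_fermiVar_div one_le_two (tendsto_fermiVarSum_one_div hα)
    ((tendsto_residualStd_atTop hα).atTop_mul_atTop₀ (tendsto_sqrt_fermiVarSum_atTop hα))
  have hsize := H.tendsto_sum_fermiVar_div le_rfl (tendsto_div_of_tendsto_rpow_mul
    (tendsto_rpow_mul_fermiVarSum hα 2) (tendsto_rpow_mul_fermiVarSum hα 2)
    (fermiVarIntegral_pos hα 2).ne') (tendsto_fermiVarSum_atTop hα 2)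
  rw [div_self (fermiVarIntegral_pos hα 2).ne'] at hsize
  rw [fermiVarIntegral_zero_div hα] at hparts
  have hlim := ((hparts.const_mul (s ^ 2)).add (hcross.const_mul (2 * s * v))).add
    (hsize.const_mul (v ^ 2))
  rw [show s ^ 2 * (1 + sizeCovariance α ^ 2) + 2 * s * v * sizeCovariance α + v ^ 2 * 1
    = s ^ 2 + (v + s * sizeCovariance α) ^ 2 by ring] at hlim
  refine hlim.congr' ?_
  filter_upwards [eventually_ge_atTop 1, H.tendsto.eventually (eventually_residualStd_sq hα)]
    with n hn hsq
  have hsq₂ : √(fermiVarSum α 2 (η n)) ^ 2 = fermiVarSum α 2 (η n) :=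
    Real.sq_sqrt (fermiVarSum_nonneg (H.pos n hn).le 2)
  rw [← hsq]
  nth_rw 2 [← hsq₂]
  simp only [Finset.sum_div, Finset.mul_sum, ← Finset.sum_add_distrib, phase_eq, fermiVar_eq]
  exact Finset.sum_congr rfl fun a _ => by ring

lemma tendsto_sum_fermi_mul_phase_cubic_add_quartic (s v : ℝ) :
    Tendsto (fun n => ∑ a ∈ S n, (4 * (fermi (η n * partSize α a) * |phase α (η n) s v a| ^ 3)
      + fermi (η n * partSize α a) * phase α (η n) s v a ^ 4)) atTop (𝓝 0) := by
  have hα := H.alpha_pos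
  have hparts : Tendsto (fun h => fermiSum α 0 h / residualStd α h ^ 2) (𝓝[>] 0)
      (𝓝 (fermiIntegral α 0 / residualVarConst α)) :=
    (tendsto_div_of_tendsto_rpow_mul (tendsto_rpow_mul_fermiSum hα 0)
      (tendsto_rpow_mul_residualVar hα) (residualVarConst_pos hα).ne').congr' <| by
        filter_upwards [eventually_residualStd_sq hα] with h hsq
        rw [hsq]
  have hsize (j : ℕ) : Tendsto (fun h => fermiSum α j h / √(fermiVarSum α 2 h) ^ 2) (𝓝[>] 0)
      (𝓝 (fermiIntegral α j / fermiVarIntegral α 2)) :=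
    (tendsto_div_of_tendsto_rpow_mul (tendsto_rpow_mul_fermiSum hα j)
      (tendsto_rpow_mul_fermiVarSum hα 2) (fermiVarIntegral_pos hα 2).ne').congr' <| by
        filter_upwards [self_mem_nhdsWithin] with h (hh : 0 < h)
        rw [Real.sq_sqrt (fermiVarSum_nonneg hh.le 2)]
  have hpartsPow := tendsto_abs_div_pow_mul hparts (tendsto_residualStd_atTop hα) s
  have hsizePow (j : ℕ) :=
    tendsto_abs_div_pow_mul (hsize j) (tendsto_sqrt_fermiVarSum_atTop hα) v
  have hlim := (((hpartsPow 0).add (hsizePow 3 0)).const_mul 16).add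
    (((hpartsPow 1).add (hsizePow 4 1)).const_mul 8)
  rw [add_zero, mul_zero, mul_zero, add_zero] at hlim
  refine squeeze_zero' (.of_forall fun n => Finset.sum_nonneg fun a _ => ?_) ?_
    (hlim.comp H.tendsto)
  · have := (fermi_pos (η n * partSize α a)).le
    positivity
  · filter_upwards [eventually_ge_atTop 1] with n hn
    exact sum_fermi_mul_phase_cubic_add_quartic_le hα (H.pos n hn) (S n) s v

lemma tendsto_mean_discrepancy (s v : ℝ) :
    Tendsto (fun n : ℕ => s / residualStd α (η n)
        * (∑ a ∈ S n, fermi (η n * partSize α a) - fermiSum α 0 (η n))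
      + v / sizeStd α (η n) * (∑ a ∈ S n, partSize α a * fermi (η n * partSize α a) - n))
      atTop (𝓝 0) := by
  have hα := H.alpha_pos
  have hlim := (((tendsto_residualStd_atTop hα).const_div_atTop s).norm.add
    ((tendsto_sizeStd_atTop hα).const_div_atTop v).norm).comp H.tendsto
  rw [norm_zero, add_zero] at hlim
  refine squeeze_zero_norm' ?_ hlim
  filter_upwards [eventually_ge_atTop 1, H.eventually_lt one_pos] with n hn hη1
  have hT := H.isTruncation n hn
  have hparts := hT.abs_sum_sub_fermiSum_zero_le_one hα (H.pos n hn) hη1.le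
  have hsize := hT.abs_sum_sub_meanSize_le_one hα (H.pos n hn)
  rw [← H.meanSize_eq n hn] at hsize
  refine (norm_add_le _ _).trans (add_le_add ?_ ?_) <;> rw [norm_mul] <;>
    exact mul_le_of_le_one_right (norm_nonneg _) ‹_›

lemma tendsto_normalizedMGF (s v : ℝ) :
    Tendsto (fun n => normalizedMGF α (η n) (S n) n (s * Complex.I) v) atTop
      (𝓝 (Real.exp (-(s ^ 2 + (v + s * sizeCovariance α) ^ 2) / 2) : ℂ)) := by
  simp only [normalizedMGF_mul_I]
  have hmean : Tendsto (fun x : ℝ => Complex.exp (x * Complex.I)) (𝓝 0) (𝓝 1) :=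
    Continuous.tendsto' (by fun_prop) _ _ (by simp)
  have hgauss := ((Complex.continuous_ofReal.comp Real.continuous_exp).tendsto _).comp
    ((H.tendsto_sum_fermiVar_mul_phase_sq s v).neg.div_const 2)
  have herror := squeeze_zero_norm (fun n => norm_prod_bernoulliMGF_mul_exp_sub_le (S n)
    (fun a => fermi (η n * partSize α a)) (phase α (η n) s v) (fun a => (fermi_pos _).le)
    fun a => (fermi_lt_one _).le) (H.tendsto_sum_fermi_mul_phase_cubic_add_quartic s v)
  simpa using (herror.add hgauss).mul (hmean.comp (H.tendsto_mean_discrepancy s v))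

end IsSaddlePointSequence

end PointwiseLimit

section DominatedConvergence

lemma tendsto_intervalIntegral_neg_of_dominated {ι E : Type*} [NormedAddCommGroup E]
    [NormedSpace ℝ E] {l : Filter ι} [l.IsCountablyGenerated] {F : ι → ℝ → E} {f : ℝ → E}
    {bound : ℝ → ℝ} {b : ι → ℝ} (hb : Tendsto b l atTop) (hF : ∀ i, Continuous (F i))
    (hbound : Integrable bound) (hbound0 : ∀ v, 0 ≤ bound v)
    (hdom : ∀ᶠ i in l, ∀ v, |v| ≤ b i → ‖F i v‖ ≤ bound v)
    (hlim : ∀ v, Tendsto (fun i => F i v) l (𝓝 (f v))) :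
    Tendsto (fun i => ∫ v in -b i..b i, F i v) l (𝓝 (∫ v, f v)) := by
  have hindicator : Tendsto (fun i => ∫ v, (Set.Ioc (-b i) (b i)).indicator (F i) v) l
      (𝓝 (∫ v, f v)) := by
    refine tendsto_integral_filter_of_dominated_convergence bound
      (.of_forall fun i => (hF i).aestronglyMeasurable.indicator measurableSet_Ioc) ?_ hbound
      (.of_forall fun v => (hlim v).congr' ?_)
    · filter_upwards [hdom] with i hi
      refine .of_forall fun v => ?_
      rw [norm_indicator_eq_indicator_norm]
      exact Set.indicator_le' (fun v hv => hi v (abs_le.2 ⟨hv.1.le, hv.2⟩))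
        (fun v _ => hbound0 v) v
    · filter_upwards [hb.eventually_gt_atTop |v|] with i hi
      exact (Set.indicator_of_mem (s := Set.Ioc (-b i) (b i))
        ⟨(abs_lt.1 hi).1, (abs_lt.1 hi).2.le⟩ _).symm
  refine hindicator.congr' ?_
  filter_upwards [hb.eventually_ge_atTop 0] with i hi
  rw [integral_indicator measurableSet_Ioc, intervalIntegral.integral_of_le (neg_le_self hi)]

lemma norm_intervalIntegral_neg_le {E : Type*} [NormedAddCommGroup E] [NormedSpace ℝ E]
    {F : ℝ → E} {bound : ℝ → ℝ} {b : ℝ} (hb : 0 ≤ b) (hbound : Integrable bound)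
    (hbound0 : ∀ v, 0 ≤ bound v) (hdom : ∀ v, |v| ≤ b → ‖F v‖ ≤ bound v) :
    ‖∫ v in -b..b, F v‖ ≤ ∫ v, bound v := by
  have hle : -b ≤ b := neg_le_self hb
  calc ‖∫ v in -b..b, F v‖ ≤ ∫ v in -b..b, bound v :=
        intervalIntegral.norm_integral_le_of_norm_le hle
          (.of_forall fun v hv => hdom v (abs_le.2 ⟨hv.1.le, hv.2⟩)) hbound.intervalIntegrable
    _ ≤ ∫ v, bound v := by
        rw [intervalIntegral.integral_of_le hle]
        exact setIntegral_le_integral hbound (.of_forall hbound0)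

lemma integral_exp_neg_add_sq_div_two (s k : ℝ) :
    ∫ v : ℝ, (Real.exp (-(s ^ 2 + (v + k) ^ 2) / 2) : ℂ)
      = ((√(2 * π) * Real.exp (-s ^ 2 / 2) : ℝ) : ℂ) := by
  have hsplit (v : ℝ) : Real.exp (-(s ^ 2 + (v + k) ^ 2) / 2)
      = Real.exp (-s ^ 2 / 2) * Real.exp (-(1 / 2) * (v + k) ^ 2) := by
    rw [← Real.exp_add]
    ring_nf
  rw [integral_complex_ofReal]
  simp only [hsplit]
  rw [integral_const_mul, integral_add_right_eq_self fun v => Real.exp (-(1 / 2) * v ^ 2),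
    integral_gaussian, mul_comm]
  congr 3
  ring

end DominatedConvergence

/-! ### The law of the normalised number of parts -/

section UniformLaw

variable {ι : Type*} (P : Finset ι) (X : ι → ℝ)

/-- The law of `X` when the elements of `P` are equally likely; it is zero if `P` is empty. -/
noncomputable def uniformLaw : Measure ℝ := (P.card : ENNReal)⁻¹ • ∑ i ∈ P, Measure.dirac (X i)

variable {P}

lemma isProbabilityMeasure_uniformLaw (hP : P.Nonempty) :
    IsProbabilityMeasure (uniformLaw P X) := by
  refine ⟨?_⟩
  simp only [uniformLaw, Measure.smul_apply, Measure.finsetSum_apply, measure_univ,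
    Finset.sum_const, nsmul_eq_mul, mul_one, smul_eq_mul]
  exact ENNReal.inv_mul_cancel (Nat.cast_ne_zero.2 hP.card_ne_zero) (ENNReal.natCast_ne_top _)

lemma integrable_uniformLaw {E : Type*} [NormedAddCommGroup E] (hP : P.Nonempty) (f : ℝ → E) :
    Integrable f (uniformLaw P X) :=
  (integrable_finsetSum_measure.2 fun _ _ => integrable_dirac enorm_lt_top).smul_measure
    (ENNReal.inv_ne_top.2 (Nat.cast_ne_zero.2 hP.card_ne_zero))

variable (P)

lemma integral_uniformLaw {E : Type*} [NormedAddCommGroup E] [NormedSpace ℝ E] [CompleteSpace E]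
    (f : ℝ → E) : ∫ x, f x ∂uniformLaw P X = (P.card : ℝ)⁻¹ • ∑ i ∈ P, f (X i) := by
  rw [uniformLaw, integral_smul_measure,
    integral_finsetSum_measure fun _ _ => integrable_dirac enorm_lt_top]
  simp only [integral_dirac, ENNReal.toReal_inv, ENNReal.toReal_natCast]

end UniformLaw

/-- The law of `(ϖ_n - μ) / σ`, where `μ = fermiSum α 0 h` and `σ = residualStd α h`. -/
noncomputable def partCountLaw (α h : ℝ) (S : Finset ℕ) (n : ℕ) : Measure ℝ :=
  uniformLaw (subsetsWithSum (partSize α) S n)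
    fun A => (A.card - fermiSum α 0 h) / residualStd α h

/-- The ratio between the Fourier integral of `normalizedMGF` and the exponential transform of
`partCountLaw`. -/
noncomputable def inversionFactor (α h : ℝ) (S : Finset ℕ) (n : ℕ) : ℝ :=
  2 * π * boltzmannWeight (partSize α) S h n * sizeStd α h
    * (subsetsWithSum (partSize α) S n).card

lemma integral_normalizedMGF {α h : ℝ} (hB : 0 < sizeStd α h) (S : Finset ℕ) (n : ℕ) (w : ℂ) :
    ∫ v in -(π * sizeStd α h)..π * sizeStd α h, normalizedMGF α h S n w v
      = inversionFactor α h S n * ∫ x : ℝ, Complex.exp (w * x) ∂partCountLaw α h S n := by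
  set F : ℝ → ℂ := fun t => boltzmannMGF (partSize α) S h (w / residualStd α h) t
    * Complex.exp (-(n * t : ℝ) * Complex.I)
    * Complex.exp (-(w / residualStd α h) * fermiSum α 0 h) with hF
  have hscale : ∫ v in -(π * sizeStd α h)..π * sizeStd α h, normalizedMGF α h S n w v
      = sizeStd α h • ∫ t in -π..π, F t := by
    change ∫ v in -(π * sizeStd α h)..π * sizeStd α h, F (v / sizeStd α h) = _
    rw [intervalIntegral.integral_comp_div F hB.ne', neg_div, mul_div_cancel_right₀ _ hB.ne']
  have hshift (A : Finset ℕ) : Complex.exp (w / residualStd α h * A.card)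
        * Complex.exp (-(w / residualStd α h) * fermiSum α 0 h)
      = Complex.exp (w * ((A.card - fermiSum α 0 h) / residualStd α h : ℝ)) := by
    rw [← Complex.exp_add]
    push_cast
    ring_nf
  rw [hscale, hF, intervalIntegral.integral_mul_const, integral_boltzmannMGF_mul_exp, mul_assoc,
    Finset.sum_mul, Finset.sum_congr rfl fun A _ => hshift A, partCountLaw, integral_uniformLaw,
    inversionFactor]
  rcases (subsetsWithSum (partSize α) S n).eq_empty_or_nonempty with hempty | hne
  · simp [hempty]
  have hcard : ((subsetsWithSum (partSize α) S n).card : ℂ) ≠ 0 :=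
    Nat.cast_ne_zero.2 hne.card_ne_zero
  rw [Complex.real_smul, Complex.real_smul]
  push_cast
  field_simp

/-! ### Weak convergence, distribution functions and moments -/

section DistributionFunctions

section Monotone

variable {ι X : Type*} [LinearOrder X] [TopologicalSpace X] [OrderTopology X] {l : Filter ι}
  {F : ι → X → ℝ} {G : X → ℝ}

lemma tendstoLocallyUniformly_of_monotone (hF : ∀ i, Monotone (F i)) (hG : Continuous G)
    (hlim : ∀ x, Tendsto (fun i => F i x) l (𝓝 (G x))) : TendstoLocallyUniformly F G l := by
  refine Metric.tendstoLocallyUniformly_iff.2 fun ε hε x => ?_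
  have hε3 : 0 < ε / 3 := by positivity
  obtain ⟨y, z, ⟨hyx, hxz⟩, hmem, hsub⟩ := exists_Icc_mem_subset_of_mem_nhds
    (hG.continuousAt (Metric.ball_mem_nhds (G x) hε3))
  have hclose (w : X) (hw : w ∈ Set.Icc y z) : -(ε / 3) < G w - G x ∧ G w - G x < ε / 3 := by
    simpa [Real.dist_eq, abs_lt] using hsub hw
  have hy := hclose y ⟨le_rfl, hyx.trans hxz⟩
  have hz := hclose z ⟨hyx.trans hxz, le_rfl⟩
  refine ⟨Set.Icc y z, hmem, ?_⟩
  filter_upwards [(hlim y).eventually (lt_mem_nhds (sub_lt_self (G y) hε3)),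
    (hlim z).eventually (gt_mem_nhds (lt_add_of_pos_right (G z) hε3))] with i hiy hiz w hw
  have hGw := hclose w hw
  have hlow := hF i hw.1
  have hhigh := hF i hw.2
  rw [Real.dist_eq, abs_lt]
  constructor <;> linarith

/-- Pólya's theorem: a continuous limit and control at both ends make the convergence uniform. -/
lemma tendstoUniformly_of_monotone [CompactIccSpace X] [Nonempty X] [l.NeBot] {m M : ℝ}
    (hF : ∀ i, Monotone (F i)) (hG : Continuous G)
    (hlim : ∀ x, Tendsto (fun i => F i x) l (𝓝 (G x))) (hbounds : ∀ i x, F i x ∈ Set.Icc m M)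
    (hbot : Tendsto G atBot (𝓝 m)) (htop : Tendsto G atTop (𝓝 M)) :
    TendstoUniformly F G l := by
  have hGbounds (x : X) : G x ∈ Set.Icc m M :=
    isClosed_Icc.mem_of_tendsto (hlim x) (.of_forall fun i => hbounds i x)
  have hGmono : Monotone G := fun x y hxy =>
    le_of_tendsto_of_tendsto' (hlim x) (hlim y) fun i => hF i hxy
  refine Metric.tendstoUniformly_iff.2 fun ε hε => ?_
  obtain ⟨a, ha⟩ := (hbot.eventually (gt_mem_nhds (lt_add_of_pos_right m hε))).exists
  obtain ⟨b, hb⟩ := (htop.eventually (lt_mem_nhds (sub_lt_self M hε))).exists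
  have hcompact : TendstoUniformlyOn F G l (Set.Icc a b) :=
    (tendstoLocallyUniformlyOn_iff_tendstoUniformlyOn_of_compact isCompact_Icc).1
      (tendstoLocallyUniformly_of_monotone hF hG hlim).tendstoLocallyUniformlyOn
  filter_upwards [Metric.tendstoUniformlyOn_iff.1 hcompact ε hε,
    (hlim a).eventually (gt_mem_nhds ha), (hlim b).eventually (lt_mem_nhds hb)]
    with i hmid hia hib x
  have hFx := hbounds i x
  have hGx := hGbounds x
  rw [Set.mem_Icc] at hFx hGx
  rcases le_total x a with hxa | hax
  · have hFa := hF i hxa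
    have hGa := hGmono hxa
    rw [Real.dist_eq, abs_lt]
    constructor <;> linarith
  rcases le_total x b with hxb | hbx
  · exact hmid x ⟨hax, hxb⟩
  · have hFb := hF i hbx
    have hGb := hGmono hbx
    rw [Real.dist_eq, abs_lt]
    constructor <;> linarith

end Monotone

lemma continuous_cdf (μ : Measure ℝ) [IsProbabilityMeasure μ] [NullSingletonClass μ] :
    Continuous (ProbabilityTheory.cdf μ) := by
  refine continuous_iff_continuousAt.2 fun x => ?_
  have hmono := ProbabilityTheory.monotone_cdf μ
  rw [hmono.continuousAt_iff_leftLim_eq_rightLim, StieltjesFunction.rightLim_eq]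
  refine le_antisymm (hmono.leftLim_le le_rfl) ?_
  have hatom : μ {x} = 0 := measure_singleton x
  rwa [← ProbabilityTheory.measure_cdf μ, StieltjesFunction.measure_singleton,
    ENNReal.ofReal_eq_zero, sub_nonpos] at hatom

lemma tendstoUniformly_measureReal_Iio {ι : Type*} {l : Filter ι} [l.NeBot]
    {μs : ι → ProbabilityMeasure ℝ} {μ : ProbabilityMeasure ℝ} [NullSingletonClass (μ : Measure ℝ)]
    (hlim : Tendsto μs l (𝓝 μ)) :
    TendstoUniformly (fun i x => (μs i : Measure ℝ).real (Set.Iio x))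
      (fun x => (μ : Measure ℝ).real (Set.Iio x)) l := by
  have hcdf : (fun x => (μ : Measure ℝ).real (Set.Iio x))
      = ProbabilityTheory.cdf (μ : Measure ℝ) := by
    ext x
    rw [ProbabilityTheory.cdf_eq_real, measureReal_congr Iio_ae_eq_Iic]
  refine tendstoUniformly_of_monotone (m := 0) (M := 1)
    (fun i x y hxy => measureReal_mono (Set.Iio_subset_Iio hxy)) ?_ (fun x => ?_)
    (fun i x => ⟨measureReal_nonneg, measureReal_le_one⟩) ?_ ?_
  · exact hcdf ▸ continuous_cdf _
  · refine (ENNReal.tendsto_toReal (measure_ne_top _ _)).comp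
      (ProbabilityMeasure.tendsto_measure_of_null_frontier_of_tendsto' hlim ?_)
    rw [frontier_Iio, measure_singleton]
  · exact hcdf ▸ ProbabilityTheory.tendsto_cdf_atBot _
  · exact hcdf ▸ ProbabilityTheory.tendsto_cdf_atTop _

lemma measureReal_gaussianReal_Iio (x : ℝ) :
    (ProbabilityTheory.gaussianReal 0 1).real (Set.Iio x)
      = (∫ t in Set.Iio x, Real.exp (-t ^ 2 / 2)) / √(2 * π) := by
  have hpdf (t : ℝ) : ProbabilityTheory.gaussianPDFReal 0 1 t
      = (√(2 * π))⁻¹ * Real.exp (-t ^ 2 / 2) := by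
    simp [ProbabilityTheory.gaussianPDFReal]
  rw [measureReal_def, ProbabilityTheory.gaussianReal_apply_eq_integral _ one_ne_zero,
    ENNReal.toReal_ofReal
      (integral_nonneg fun t => ProbabilityTheory.gaussianPDFReal_nonneg _ _ t)]
  simp only [hpdf]
  rw [integral_const_mul, div_eq_inv_mul]

end DistributionFunctions

section Moments

lemma abs_sub_clamp_le_sq_div {R : ℝ} (hR : 0 < R) (y : ℝ) :
    |y - max (-R) (min y R)| ≤ y ^ 2 / R := by
  rw [le_div_iff₀ hR]
  rcases le_total y R with hyR | hRy
  · rcases le_total (-R) y with hy | hy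
    · simp only [min_eq_left hyR, max_eq_right hy, sub_self, abs_zero, zero_mul]
      positivity
    · rw [min_eq_left hyR, max_eq_left hy, abs_of_nonpos (by linarith)]
      nlinarith
  · rw [min_eq_right hRy, max_eq_right (by linarith), abs_of_nonneg (by linarith)]
    nlinarith

lemma abs_integral_sub_integral_clamp_le {Ω : Type*} [MeasurableSpace Ω] {μ : Measure Ω}
    [IsFiniteMeasure μ] {f : Ω → ℝ} (hf : MemLp f 2 μ) {R : ℝ} (hR : 0 < R) :
    |∫ x, f x ∂μ - ∫ x, max (-R) (min (f x) R) ∂μ| ≤ (∫ x, f x ^ 2 ∂μ) / R := by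
  have hInt := hf.integrable one_le_two
  have hclamp : Integrable (fun x => max (-R) (min (f x) R)) μ :=
    (integrable_const (-R)).sup (hInt.inf (integrable_const R))
  rw [← integral_sub hInt hclamp, ← integral_div]
  exact (abs_integral_le_integral_abs).trans
    (integral_mono_of_nonneg (.of_forall fun _ => abs_nonneg _) (hf.integrable_sq.div_const R)
      (.of_forall fun x => abs_sub_clamp_le_sq_div hR (f x)))

/-- Bounded second moments make `f` uniformly integrable. -/
lemma tendsto_integral_of_integral_sq_le {Ω ι : Type*} [TopologicalSpace Ω] [MeasurableSpace Ω]
    [OpensMeasurableSpace Ω] {l : Filter ι} {μs : ι → ProbabilityMeasure Ω}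
    {μ : ProbabilityMeasure Ω} (hlim : Tendsto μs l (𝓝 μ)) {f : Ω → ℝ} (hf : Continuous f)
    (hfμs : ∀ i, MemLp f 2 (μs i : Measure Ω)) (hfμ : MemLp f 2 (μ : Measure Ω)) {K : ℝ}
    (hK : ∀ᶠ i in l, ∫ x, f x ^ 2 ∂(μs i : Measure Ω) ≤ K) :
    Tendsto (fun i => ∫ x, f x ∂(μs i : Measure Ω)) l (𝓝 (∫ x, f x ∂(μ : Measure Ω))) := by
  refine Metric.tendsto_nhds.2 fun ε hε => ?_
  obtain ⟨R, hR0, hR⟩ : ∃ R > 0, max K (∫ x, f x ^ 2 ∂(μ : Measure Ω)) / R < ε / 3 :=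
    ((eventually_gt_atTop 0).and ((tendsto_id.const_div_atTop _).eventually
      (gt_mem_nhds (show 0 < ε / 3 by positivity)))).exists
  let clamp : BoundedContinuousFunction Ω ℝ := .ofNormedAddCommGroup
    (fun x => max (-R) (min (f x) R)) (by fun_prop) R
    fun x => abs_le.2 ⟨le_max_left _ _, max_le (by linarith) (min_le_right _ _)⟩
  have hclamp : Tendsto (fun i => ∫ x, clamp x ∂(μs i : Measure Ω)) l
      (𝓝 (∫ x, clamp x ∂(μ : Measure Ω))) :=
    ProbabilityMeasure.tendsto_iff_forall_integral_tendsto.1 hlim clamp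
  have htail (ν : ProbabilityMeasure Ω) (hν : MemLp f 2 (ν : Measure Ω))
      (hle : ∫ x, f x ^ 2 ∂(ν : Measure Ω) ≤ max K (∫ x, f x ^ 2 ∂(μ : Measure Ω))) :
      |∫ x, f x ∂(ν : Measure Ω) - ∫ x, clamp x ∂(ν : Measure Ω)| < ε / 3 :=
    (abs_integral_sub_integral_clamp_le hν hR0).trans_lt
      ((div_le_div_of_nonneg_right hle hR0.le).trans_lt hR)
  filter_upwards [hK, Metric.tendsto_nhds.1 hclamp (ε / 3) (by positivity)] with i hi hdist
  have hi' := abs_lt.1 (htail (μs i) (hfμs i) (hi.trans (le_max_left _ _)))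
  have hμ := abs_lt.1 (htail μ hfμ (le_max_right _ _))
  rw [Real.dist_eq, abs_lt] at hdist ⊢
  constructor <;> linarith

lemma pow_sq_le_factorial_mul_exp_add_exp (p : ℕ) (x : ℝ) :
    (x ^ p) ^ 2 ≤ (2 * p).factorial * (Real.exp x + Real.exp (-x)) := by
  have hexp : Real.exp |x| ≤ Real.exp x + Real.exp (-x) := by
    rcases abs_choice x with habs | habs <;> rw [habs] <;>
      linarith [Real.exp_pos x, Real.exp_pos (-x)]
  calc (x ^ p) ^ 2 = |x| ^ (2 * p) := by
        rw [← pow_mul, mul_comm p, (even_two_mul p).pow_abs]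
    _ ≤ (2 * p).factorial * Real.exp |x| := by
        have := Real.pow_div_factorial_le_exp _ (abs_nonneg x) (2 * p)
        rwa [div_le_iff₀' (by positivity)] at this
    _ ≤ (2 * p).factorial * (Real.exp x + Real.exp (-x)) := by gcongr

lemma tendsto_integral_pow_of_integral_exp_le {ι : Type*} {l : Filter ι}
    {μs : ι → ProbabilityMeasure ℝ} {μ : ProbabilityMeasure ℝ} (hlim : Tendsto μs l (𝓝 μ)) (p : ℕ)
    (hInt : ∀ i (u : ℝ), Integrable (fun x => Real.exp (u * x)) (μs i : Measure ℝ))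
    (hμ : MemLp (fun x => x ^ p) 2 (μ : Measure ℝ))
    (hbound : ∀ u : ℝ, ∃ K, ∀ᶠ i in l, ∫ x, Real.exp (u * x) ∂(μs i : Measure ℝ) ≤ K) :
    Tendsto (fun i => ∫ x, x ^ p ∂(μs i : Measure ℝ)) l (𝓝 (∫ x, x ^ p ∂(μ : Measure ℝ))) := by
  obtain ⟨K, hK⟩ := hbound 1
  obtain ⟨K', hK'⟩ := hbound (-1)
  simp only [one_mul, neg_one_mul] at hK hK'
  have hexp (i : ι) : Integrable (fun x => Real.exp x + Real.exp (-x)) (μs i : Measure ℝ) := by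
    simpa only [one_mul, neg_one_mul] using! (hInt i 1).add (hInt i (-1))
  have hmem (i : ι) : MemLp (fun x => x ^ p) 2 (μs i : Measure ℝ) := by
    refine (memLp_two_iff_integrable_sq (by fun_prop)).2 ?_
    refine ((hexp i).const_mul ((2 * p).factorial : ℝ)).mono' (by fun_prop) (.of_forall fun x => ?_)
    rw [Real.norm_of_nonneg (by positivity)]
    exact pow_sq_le_factorial_mul_exp_add_exp p x
  refine tendsto_integral_of_integral_sq_le hlim (continuous_pow p) hmem hμ
    (K := (2 * p).factorial * (K + K')) ?_
  filter_upwards [hK, hK'] with i hi hi'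
  calc ∫ x, (x ^ p) ^ 2 ∂(μs i : Measure ℝ)
      ≤ ∫ x, (2 * p).factorial * (Real.exp x + Real.exp (-x)) ∂(μs i : Measure ℝ) :=
        integral_mono (hmem i).integrable_sq ((hexp i).const_mul _)
          fun x => pow_sq_le_factorial_mul_exp_add_exp p x
    _ = (2 * p).factorial * (∫ x, Real.exp x ∂(μs i : Measure ℝ)
          + ∫ x, Real.exp (-x) ∂(μs i : Measure ℝ)) := by
        rw [integral_const_mul, integral_add (by simpa using hInt i 1) (by simpa using hInt i (-1))]
    _ ≤ (2 * p).factorial * (K + K') := by gcongr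

end Moments

/-! ### The limit law -/

lemma integrable_exp_neg_mul_sq_add_inv (K : ℝ) {c : ℝ} (hc : 0 < c) :
    Integrable fun v : ℝ => K * (Real.exp (-c * v ^ 2) + (1 + v ^ 2)⁻¹) :=
  ((integrable_exp_neg_mul_sq hc).add integrable_inv_one_add_sq).const_mul K

/-- The standard normal law, as an element of the space of probability measures. -/
noncomputable def standardNormal : ProbabilityMeasure ℝ :=
  ⟨ProbabilityTheory.gaussianReal 0 1, inferInstance⟩

lemma coe_standardNormal :
    (standardNormal : Measure ℝ) = ProbabilityTheory.gaussianReal 0 1 := rfl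

instance nullSingletonClass_standardNormal : NullSingletonClass (standardNormal : Measure ℝ) :=
  ProbabilityTheory.nullSingletonClass_gaussianReal one_ne_zero

namespace IsSaddlePointSequence

variable {α : ℝ} {η : ℕ → ℝ} {S : ℕ → Finset ℕ} (H : IsSaddlePointSequence α η S)
include H

lemma nonempty_subsetsWithSum (n : ℕ) : (subsetsWithSum (partSize α) (S n) n).Nonempty := by
  rcases n.eq_zero_or_pos with rfl | hn
  · exact ⟨∅, by simp [subsetsWithSum]⟩
  obtain ⟨a, ha⟩ := exists_partSize_eq H.alpha_pos H.alpha_le_one hn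
  exact ⟨{a}, (mem_subsetsWithSum (H.isTruncation n hn).mem).2 (by simpa using ha)⟩

/-- The law of `(ϖ_n - μ_n) / σ_n`. -/
noncomputable def law (n : ℕ) : ProbabilityMeasure ℝ :=
  ⟨partCountLaw α (η n) (S n) n, isProbabilityMeasure_uniformLaw _ (H.nonempty_subsetsWithSum n)⟩

lemma coe_law (n : ℕ) : (H.law n : Measure ℝ) = partCountLaw α (η n) (S n) n := rfl

lemma integrable_law {E : Type*} [NormedAddCommGroup E] (n : ℕ) (f : ℝ → E) :
    Integrable f (H.law n : Measure ℝ) :=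
  integrable_uniformLaw _ (H.nonempty_subsetsWithSum n) f

lemma eventually_integral_normalizedMGF (w : ℂ) :
    ∀ᶠ n in atTop, ∫ v in -(π * sizeStd α (η n))..π * sizeStd α (η n),
        normalizedMGF α (η n) (S n) n w v
      = inversionFactor α (η n) (S n) n * ∫ x : ℝ, Complex.exp (w * x) ∂(H.law n : Measure ℝ) := by
  filter_upwards [H.eventually_gt_of_tendsto_atTop (tendsto_sizeStd_atTop H.alpha_pos) 0] with n hn
  exact integral_normalizedMGF hn _ _ _

lemma tendsto_inversionFactor_mul (s : ℝ) :
    Tendsto (fun n => inversionFactor α (η n) (S n) n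
        * ∫ x : ℝ, Complex.exp (s * Complex.I * x) ∂(H.law n : Measure ℝ)) atTop
      (𝓝 ((√(2 * π) * Real.exp (-s ^ 2 / 2) : ℝ) : ℂ)) := by
  obtain ⟨K, hK, c, hc, hbound⟩ := H.exists_eventually_norm_normalizedMGF_le (s * Complex.I)
  have hscale : Tendsto (fun n => π * sizeStd α (η n)) atTop atTop :=
    ((tendsto_sizeStd_atTop H.alpha_pos).comp H.tendsto).const_mul_atTop pi_pos
  rw [← integral_exp_neg_add_sq_div_two s (s * sizeCovariance α)]
  exact (tendsto_intervalIntegral_neg_of_dominated hscale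
    (fun n => continuous_normalizedMGF _ _ _ _ _) (integrable_exp_neg_mul_sq_add_inv K hc)
    (fun v => by positivity) hbound fun v => H.tendsto_normalizedMGF s v).congr'
      (H.eventually_integral_normalizedMGF _)

lemma tendsto_inversionFactor :
    Tendsto (fun n => inversionFactor α (η n) (S n) n) atTop (𝓝 √(2 * π)) := by
  have hlim := H.tendsto_inversionFactor_mul 0
  simpa [Function.comp_def] using (Complex.continuous_re.tendsto _).comp hlim

lemma tendsto_law : Tendsto H.law atTop (𝓝 standardNormal) := by
  refine ProbabilityMeasure.tendsto_iff_tendsto_charFun.2 fun s => ?_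
  have hne : (√(2 * π) : ℂ) ≠ 0 := by exact_mod_cast (by positivity : √(2 * π) ≠ 0)
  have hfactor := (Complex.continuous_ofReal.tendsto _).comp H.tendsto_inversionFactor
  have hlim := (H.tendsto_inversionFactor_mul s).div hfactor hne
  rw [Complex.ofReal_mul, mul_div_cancel_left₀ _ hne] at hlim
  simp only [coe_standardNormal, ProbabilityTheory.charFun_gaussianReal]
  convert hlim.congr' ?_ using 2
  · push_cast
    ring_nf
  filter_upwards [H.tendsto_inversionFactor.eventually_ne (by positivity)] with n hn
  rw [Pi.div_apply, Function.comp_apply, mul_div_cancel_left₀ _ (Complex.ofReal_ne_zero.2 hn),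
    charFun_apply_real]
  congr with x
  ring_nf

lemma exists_eventually_integral_exp_le (u : ℝ) :
    ∃ K, ∀ᶠ n in atTop, ∫ x, Real.exp (u * x) ∂(H.law n : Measure ℝ) ≤ K := by
  obtain ⟨K, hK, c, hc, hbound⟩ := H.exists_eventually_norm_normalizedMGF_le u
  refine ⟨∫ v : ℝ, K * (Real.exp (-c * v ^ 2) + (1 + v ^ 2)⁻¹), ?_⟩
  have hsqrt : 1 < √(2 * π) := Real.lt_sqrt_of_sq_lt (by linarith [pi_gt_three])
  filter_upwards [hbound, H.eventually_integral_normalizedMGF u,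
    H.tendsto_inversionFactor.eventually (lt_mem_nhds hsqrt),
    H.eventually_gt_of_tendsto_atTop (tendsto_sizeStd_atTop H.alpha_pos) 0] with n hn hI hfactor hB
  have hreal : ∫ x : ℝ, Complex.exp (u * x) ∂(H.law n : Measure ℝ)
      = (∫ x, Real.exp (u * x) ∂(H.law n : Measure ℝ) : ℝ) := by
    rw [← integral_complex_ofReal]
    simp only [Complex.ofReal_exp, Complex.ofReal_mul]
  calc ∫ x, Real.exp (u * x) ∂(H.law n : Measure ℝ)
      ≤ inversionFactor α (η n) (S n) n * ∫ x, Real.exp (u * x) ∂(H.law n : Measure ℝ) :=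
        le_mul_of_one_le_left (integral_nonneg fun x => (Real.exp_pos _).le) hfactor.le
    _ ≤ ‖∫ v in -(π * sizeStd α (η n))..π * sizeStd α (η n),
          normalizedMGF α (η n) (S n) n u v‖ := by
        rw [hI, hreal, ← Complex.ofReal_mul, Complex.norm_real]
        exact le_abs_self _
    _ ≤ ∫ v : ℝ, K * (Real.exp (-c * v ^ 2) + (1 + v ^ 2)⁻¹) :=
        norm_intervalIntegral_neg_le (by positivity) (integrable_exp_neg_mul_sq_add_inv K hc)
          (fun v => by positivity) hn

lemma tendsto_integral_pow_law (p : ℕ) :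
    Tendsto (fun n => ∫ x, x ^ p ∂(H.law n : Measure ℝ)) atTop
      (𝓝 (∫ x, x ^ p ∂ProbabilityTheory.gaussianReal 0 1)) := by
  refine tendsto_integral_pow_of_integral_exp_le H.tendsto_law p
    (fun n u => H.integrable_law n _) ?_ H.exists_eventually_integral_exp_le
  have hmem : MemLp id (p * 2 : ℕ) (ProbabilityTheory.gaussianReal 0 1) := by
    simpa using ProbabilityTheory.memLp_id_gaussianReal (μ := 0) (v := 1) (p * 2 : ℕ)
  refine (memLp_two_iff_integrable_sq (by fun_prop)).2 ?_
  simpa [coe_standardNormal, ← pow_mul, (even_two.mul_left p).pow_abs] using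
    hmem.integrable_norm_pow'

lemma tendsto_integral_law : Tendsto (fun n => ∫ x, x ∂(H.law n : Measure ℝ)) atTop (𝓝 0) := by
  simpa using H.tendsto_integral_pow_law 1

lemma tendsto_integral_sq_law :
    Tendsto (fun n => ∫ x, x ^ 2 ∂(H.law n : Measure ℝ)) atTop (𝓝 1) := by
  have hvar : ∫ x, x ^ 2 ∂ProbabilityTheory.gaussianReal 0 1 = 1 := by
    have hzero := ProbabilityTheory.variance_of_integral_eq_zero (X := id) (by fun_prop)
      (ProbabilityTheory.integral_id_gaussianReal (μ := 0) (v := 1))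
    simpa [ProbabilityTheory.variance_id_gaussianReal] using hzero.symm
  simpa only [hvar] using H.tendsto_integral_pow_law 2

end IsSaddlePointSequence

/-! ### Mean, variance and distribution function of the number of parts -/

section SeriesIdentities

variable {α h : ℝ}

lemma tsum_g_div_eq_fermiSum (hα : 0 < α) (hh : 0 < h) :
    ∑' k : ℕ, (g α k : ℝ) / (Real.exp (h * k) + 1) = fermiSum α 0 h := by
  have hsum := (hasSum_g_mul hα hh 0 (expBounded_pow_mul_fermi 0)).tsum_eq
  rw [pow_zero, inv_one, one_mul] at hsum
  refine Eq.trans (tsum_congr fun k => ?_) hsum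
  rw [fermi]
  ring

lemma tsum_g_mul_pow_mul_exp_div (hα : 0 < α) (hh : 0 < h) (j : ℕ) :
    ∑' k : ℕ, (g α k : ℝ) * k ^ j * Real.exp (h * k) / (Real.exp (h * k) + 1) ^ 2
      = (h ^ j)⁻¹ * fermiVarSum α j h := by
  refine Eq.trans (tsum_congr fun k => ?_)
    (hasSum_g_mul hα hh j (expBounded_pow_mul_fermiVar j)).tsum_eq
  rw [fermiVar]
  ring

lemma tsum_sub_sq_div_eq_residualVar (hα : 0 < α) (hh : 0 < h) :
    (∑' k : ℕ, (g α k : ℝ) * Real.exp (h * k) / (Real.exp (h * k) + 1) ^ 2)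
      - (∑' k : ℕ, (g α k : ℝ) * k * Real.exp (h * k) / (Real.exp (h * k) + 1) ^ 2) ^ 2
        / (∑' k : ℕ, (g α k : ℝ) * k ^ 2 * Real.exp (h * k) / (Real.exp (h * k) + 1) ^ 2)
      = residualVar α h := by
  have h0 := tsum_g_mul_pow_mul_exp_div hα hh 0
  have h1 := tsum_g_mul_pow_mul_exp_div hα hh 1
  simp only [pow_zero, mul_one] at h0
  simp only [pow_one] at h1
  rw [h0, h1, tsum_g_mul_pow_mul_exp_div hα hh 2, residualVar]
  field_simp

end SeriesIdentities

lemma exists_isSaddlePointSequence {α : ℝ} (hα : 0 < α) (hα1 : α ≤ 1) {η : ℕ → ℝ}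
    (hη : ∀ n : ℕ, 1 ≤ n → 0 < η n ∧ (n : ℝ) = meanSize α (η n)) :
    ∃ S, IsSaddlePointSequence α η S := by
  have htrunc (n : ℕ) : ∃ S, 1 ≤ n → IsTruncation α (η n) n S := by
    by_cases hn : 1 ≤ n
    · exact (exists_isTruncation hα (hη n hn).1 n).imp fun S hS _ => hS
    · exact ⟨∅, fun h => absurd h hn⟩
  choose S hS using htrunc
  exact ⟨S, hα, hα1, fun n hn => (hη n hn).1, fun n hn => (hη n hn).2, hS⟩

namespace IsSaddlePointSequence

variable {α : ℝ} {η : ℕ → ℝ} {S : ℕ → Finset ℕ} (H : IsSaddlePointSequence α η S)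
include H

lemma eventually_residualStd_pos : ∀ᶠ n in atTop, 0 < residualStd α (η n) :=
  H.eventually_gt_of_tendsto_atTop (tendsto_residualStd_atTop H.alpha_pos) 0

lemma tsum_mul_qnm_div_qn {n : ℕ} (hn : 1 ≤ n) (hσ : 0 < residualStd α (η n)) (F : ℝ → ℝ) :
    (∑' m : ℕ, F m * qnm α n m) / qn α n
      = ∫ x, F (fermiSum α 0 (η n) + residualStd α (η n) * x) ∂(H.law n : Measure ℝ) := by
  have hS := (H.isTruncation n hn).mem
  rw [tsum_mul_qnm hS fun m => F m, qn_eq_card hS, H.coe_law, partCountLaw, integral_uniformLaw,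
    div_eq_inv_mul, smul_eq_mul]
  simp only [mul_div_cancel₀ _ hσ.ne', add_sub_cancel]

lemma partMean_eq {n : ℕ} (hn : 1 ≤ n) (hσ : 0 < residualStd α (η n)) :
    partMean α n = fermiSum α 0 (η n)
      + residualStd α (η n) * ∫ x, x ∂(H.law n : Measure ℝ) := by
  rw [partMean, H.tsum_mul_qnm_div_qn hn hσ fun y => y,
    integral_add (H.integrable_law n _) (H.integrable_law n _), integral_const_mul,
    integral_const, probReal_univ, one_smul]

lemma partVar_eq {n : ℕ} (hn : 1 ≤ n) (hσ : 0 < residualStd α (η n)) :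
    partVar α n = residualStd α (η n) ^ 2 * (∫ x, x ^ 2 ∂(H.law n : Measure ℝ)
      - (∫ x, x ∂(H.law n : Measure ℝ)) ^ 2) := by
  have hmemLp : MemLp id 2 (H.law n : Measure ℝ) :=
    (memLp_two_iff_integrable_sq (by fun_prop)).2 (H.integrable_law n _)
  have hvar : ∫ x, (x - ∫ y, y ∂(H.law n : Measure ℝ)) ^ 2 ∂(H.law n : Measure ℝ)
      = ∫ x, x ^ 2 ∂(H.law n : Measure ℝ) - (∫ x, x ∂(H.law n : Measure ℝ)) ^ 2 :=
    (ProbabilityTheory.variance_eq_integral (by fun_prop)).symm.trans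
      (ProbabilityTheory.variance_eq_sub hmemLp)
  rw [partVar, H.tsum_mul_qnm_div_qn hn hσ fun y => (y - partMean α n) ^ 2, ← hvar,
    ← integral_const_mul, H.partMean_eq hn hσ]
  simp only [add_sub_add_left_eq_sub, ← mul_sub, mul_pow]

lemma cdf_eq {n : ℕ} (hn : 1 ≤ n) (hσ : 0 < residualStd α (η n)) (x : ℝ) :
    cdf α n (fermiSum α 0 (η n) + x * residualStd α (η n))
      = (H.law n : Measure ℝ).real (Set.Iio x) := by
  set y := fermiSum α 0 (η n) + x * residualStd α (η n) with hy
  have hindicator := H.tsum_mul_qnm_div_qn hn hσ ((Set.Iio y).indicator 1)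
  have hpre (z : ℝ) : (Set.Iio y).indicator (1 : ℝ → ℝ)
      (fermiSum α 0 (η n) + residualStd α (η n) * z) = (Set.Iio x).indicator 1 z := by
    simp only [Set.indicator_apply, Set.mem_Iio, hy, add_lt_add_iff_left, mul_comm x,
      mul_lt_mul_iff_right₀ hσ, Pi.one_apply]
  simp only [hpre, integral_indicator_one measurableSet_Iio] at hindicator
  simpa [cdf, Set.indicator_apply] using hindicator

lemma eventually_abs_cdf_sub_le {ε : ℝ} (hε : 0 < ε) :
    ∀ᶠ n in atTop, ∀ x : ℝ,
      |cdf α n (fermiSum α 0 (η n) + x * residualStd α (η n))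
        - (∫ t in Set.Iio x, Real.exp (-t ^ 2 / 2)) / √(2 * π)| ≤ ε := by
  filter_upwards [Metric.tendstoUniformly_iff.1 (tendstoUniformly_measureReal_Iio H.tendsto_law)
    ε hε, eventually_ge_atTop 1, H.eventually_residualStd_pos] with n hdist hn hσ x
  rw [H.cdf_eq hn hσ, ← measureReal_gaussianReal_Iio, ← coe_standardNormal, ← Real.dist_eq,
    dist_comm]
  exact (hdist x).le

lemma tendsto_partMean_div_fermiSum :
    Tendsto (fun n => partMean α n / fermiSum α 0 (η n)) atTop (𝓝 1) := by
  have hα := H.alpha_pos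
  have hratio : Tendsto (fun h => residualVar α h / fermiSum α 0 h * (residualStd α h)⁻¹)
      (𝓝[>] 0) (𝓝 0) := by
    simpa using (tendsto_div_of_tendsto_rpow_mul (tendsto_rpow_mul_residualVar hα)
      (tendsto_rpow_mul_fermiSum hα 0) (fermiIntegral_pos hα 0).ne').mul
        (tendsto_residualStd_atTop hα).inv_tendsto_atTop
  have hlim := ((hratio.comp H.tendsto).mul H.tendsto_integral_law).const_add 1
  rw [mul_zero, add_zero] at hlim
  refine hlim.congr' ?_
  filter_upwards [eventually_ge_atTop 1, H.eventually_residualStd_pos,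
    H.tendsto.eventually (eventually_residualStd_sq hα),
    H.eventually_gt_of_tendsto_atTop (tendsto_fermiSum_atTop hα 0) 0] with n hn hσ hsq hμ
  rw [H.partMean_eq hn hσ, Function.comp_apply, ← hsq]
  field_simp

lemma tendsto_partVar_div_residualVar :
    Tendsto (fun n => partVar α n / residualVar α (η n)) atTop (𝓝 1) := by
  have hlim := H.tendsto_integral_sq_law.sub (H.tendsto_integral_law.pow 2)
  rw [zero_pow two_ne_zero, sub_zero] at hlim
  refine hlim.congr' ?_
  filter_upwards [eventually_ge_atTop 1, H.eventually_residualStd_pos,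
    H.tendsto.eventually (eventually_residualStd_sq H.alpha_pos)] with n hn hσ hsq
  rw [H.partVar_eq hn hσ, ← hsq, mul_div_cancel_left₀ _ (by positivity)]

lemma rpow_mul_fermiSum_one_rpow_eq {n : ℕ} (hn : 1 ≤ n) :
    (η n ^ (1 / α) * fermiSum α 1 (η n)) ^ (1 / (α + 1))
      = η n ^ (1 / α) * (n : ℝ) ^ (1 / (α + 1)) := by
  have hα := H.alpha_pos
  have hη := H.pos n hn
  have hsum : fermiSum α 1 (η n) = η n * n := by
    rw [H.meanSize_eq n hn, meanSize, mul_inv_cancel_left₀ hη.ne']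
  rw [hsum, ← mul_assoc, ← Real.rpow_add_one hη.ne', Real.mul_rpow (by positivity) (by positivity),
    ← Real.rpow_mul hη.le]
  congr 2
  field_simp
  ring

lemma tendsto_div_rpow {f : ℝ → ℝ} {A : ℝ} (hA : A ≠ 0)
    (hf : Tendsto (fun h : ℝ => h ^ (1 / α) * f h) (𝓝[>] 0) (𝓝 A)) :
    Tendsto (fun n : ℕ => f (η n)
      / (A / fermiIntegral α 1 ^ (1 / (α + 1)) * (n : ℝ) ^ (1 / (α + 1)))) atTop (𝓝 1) := by
  have hα := H.alpha_pos
  have hI := fermiIntegral_pos hα 1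
  have hIrpow : fermiIntegral α 1 ^ (1 / (α + 1)) ≠ 0 := (Real.rpow_pos_of_pos hI _).ne'
  have hsize := ((tendsto_rpow_mul_fermiSum hα 1).comp H.tendsto).rpow_const
    (p := 1 / (α + 1)) (Or.inl hI.ne')
  have hlim := (hf.comp H.tendsto).div
    (hsize.const_mul (A / fermiIntegral α 1 ^ (1 / (α + 1)))) (by positivity)
  rw [div_mul_cancel₀ _ hIrpow, div_self hA] at hlim
  refine hlim.congr' ?_
  filter_upwards [eventually_ge_atTop 1] with n hn
  have hη : η n ^ (1 / α) ≠ 0 := (Real.rpow_pos_of_pos (H.pos n hn) _).ne'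
  simp only [Pi.div_apply, Function.comp_apply]
  rw [H.rpow_mul_fermiSum_one_rpow_eq hn, mul_left_comm, mul_div_mul_left _ _ hη]

end IsSaddlePointSequence

theorem central_limit_theorem_general (α : ℝ) (hα : 0 < α) (hα1 : α ≤ 1) :
    (∀ n : ℕ, 1 ≤ n → ∃! η : ℝ, 0 < η ∧
      (n : ℝ) = ∑' k : ℕ, (k : ℝ) * g α k / (Real.exp (η * k) + 1)) ∧
    ∃ c₁ > (0:ℝ), ∃ c₂ > (0:ℝ), ∀ η : ℕ → ℝ,
      (∀ n : ℕ, 1 ≤ n → 0 < η n ∧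
        (n : ℝ) = ∑' k : ℕ, (k : ℝ) * g α k / (Real.exp (η n * k) + 1)) →
      letI μ : ℕ → ℝ := fun n => ∑' k : ℕ, (g α k : ℝ) / (Real.exp (η n * k) + 1)
      letI σ2 : ℕ → ℝ := fun n =>
        (∑' k : ℕ, (g α k : ℝ) * Real.exp (η n * k) / (Real.exp (η n * k) + 1) ^ 2)
          - (∑' k : ℕ, (g α k : ℝ) * k * Real.exp (η n * k) / (Real.exp (η n * k) + 1) ^ 2) ^ 2
            / (∑' k : ℕ, (g α k : ℝ) * k ^ 2 * Real.exp (η n * k) / (Real.exp (η n * k) + 1) ^ 2)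
      (∀ ε > (0:ℝ), ∀ᶠ n : ℕ in atTop, ∀ x : ℝ,
        |cdf α n (μ n + x * √(σ2 n))
          - (∫ t in Set.Iio x, Real.exp (-t ^ 2 / 2)) / √(2 * π)| ≤ ε) ∧
      Tendsto (fun n : ℕ => partMean α n / μ n) atTop (𝓝 1) ∧
      Tendsto (fun n : ℕ => μ n / (c₁ * (n : ℝ) ^ (1 / (α + 1)))) atTop (𝓝 1) ∧
      Tendsto (fun n : ℕ => partVar α n / σ2 n) atTop (𝓝 1) ∧
      Tendsto (fun n : ℕ => σ2 n / (c₂ * (n : ℝ) ^ (1 / (α + 1)))) atTop (𝓝 1) := by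
  have hI := fermiIntegral_pos hα 1
  have hμ_pos := fermiIntegral_pos hα 0
  have hσ_pos := residualVarConst_pos hα
  refine ⟨fun n hn => ?_, fermiIntegral α 0 / fermiIntegral α 1 ^ (1 / (α + 1)), by positivity,
    residualVarConst α / fermiIntegral α 1 ^ (1 / (α + 1)), by positivity, fun η hη => ?_⟩
  · exact (existsUnique_congr fun η => and_congr_right fun hη => by
      rw [tsum_mul_g_div_eq_meanSize hα hη]).2 (existsUnique_meanSize_eq hα (Nat.cast_pos.2 hn))
  obtain ⟨S, H⟩ := exists_isSaddlePointSequence hα hα1 fun n hn =>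
    ⟨(hη n hn).1, (hη n hn).2.trans (tsum_mul_g_div_eq_meanSize hα (hη n hn).1)⟩
  have hμ := H.tendsto.eventually
    (eventually_mem_nhdsWithin.mono fun h hh => tsum_g_div_eq_fermiSum hα hh)
  have hσ2 := H.tendsto.eventually
    (eventually_mem_nhdsWithin.mono fun h hh => tsum_sub_sq_div_eq_residualVar hα hh)
  refine ⟨fun ε hε => ?_, H.tendsto_partMean_div_fermiSum.congr' ?_,
    (H.tendsto_div_rpow hμ_pos.ne' (tendsto_rpow_mul_fermiSum hα 0)).congr' ?_,
    H.tendsto_partVar_div_residualVar.congr' ?_,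
    (H.tendsto_div_rpow hσ_pos.ne' (tendsto_rpow_mul_residualVar hα)).congr' ?_⟩
  · filter_upwards [H.eventually_abs_cdf_sub_le hε, hμ, hσ2] with n hn hμn hσn
    rwa [hμn, hσn]
  all_goals filter_upwards [hμ, hσ2] with n hμn hσn
  all_goals simp only [hμn, hσn]

/-- **Central limit theorem** (Theorem 1): `ϖ_n` is asymptotically normally distributed,
with `η = η_n > 0` the unique solution of `n = ∑_{k≥1} k g(k)/(e^{ηk}+1)`,
`μ_n = ∑_{k≥1} g(k)/(e^{ηk}+1)` and
`σ_n² = ∑ g(k)e^{ηk}/(e^{ηk}+1)² − (∑ g(k)k e^{ηk}/(e^{ηk}+1)²)²/(∑ g(k)k² e^{ηk}/(e^{ηk}+1)²)`;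
moreover `E(ϖ_n) ∼ μ_n ∼ c₁ n^{1/(α+1)}` and `V(ϖ_n) ∼ σ_n² ∼ c₂ n^{1/(α+1)}`. -/
theorem central_limit_theorem (α : ℝ) (hα : 0 < α ∧ α < 1) :
    (∀ n : ℕ, 1 ≤ n → ∃! η : ℝ, 0 < η ∧
      (n : ℝ) = ∑' k : ℕ, (k : ℝ) * g α k / (Real.exp (η * k) + 1)) ∧
    ∃ c₁ > (0:ℝ), ∃ c₂ > (0:ℝ), ∀ η : ℕ → ℝ,
      (∀ n : ℕ, 1 ≤ n → 0 < η n ∧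
        (n : ℝ) = ∑' k : ℕ, (k : ℝ) * g α k / (Real.exp (η n * k) + 1)) →
      letI μ : ℕ → ℝ := fun n => ∑' k : ℕ, (g α k : ℝ) / (Real.exp (η n * k) + 1)
      letI σ2 : ℕ → ℝ := fun n =>
        (∑' k : ℕ, (g α k : ℝ) * Real.exp (η n * k) / (Real.exp (η n * k) + 1) ^ 2)
          - (∑' k : ℕ, (g α k : ℝ) * k * Real.exp (η n * k) / (Real.exp (η n * k) + 1) ^ 2) ^ 2
            / (∑' k : ℕ, (g α k : ℝ) * k ^ 2 * Real.exp (η n * k) / (Real.exp (η n * k) + 1) ^ 2)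
      -- asymptotic normality, uniformly in x
      (∀ ε > (0:ℝ), ∀ᶠ n : ℕ in atTop, ∀ x : ℝ,
        |cdf α n (μ n + x * Real.sqrt (σ2 n))
          - (∫ t in Set.Iio x, Real.exp (-t ^ 2 / 2)) / Real.sqrt (2 * π)| ≤ ε) ∧
      -- E(ϖ_n) ∼ μ_n ∼ c₁ n^{1/(α+1)}
      Tendsto (fun n : ℕ => partMean α n / μ n) atTop (nhds 1) ∧
      Tendsto (fun n : ℕ => μ n / (c₁ * (n : ℝ) ^ (1 / (α + 1)))) atTop (nhds 1) ∧
      -- V(ϖ_n) ∼ σ_n² ∼ c₂ n^{1/(α+1)}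
      Tendsto (fun n : ℕ => partVar α n / σ2 n) atTop (nhds 1) ∧
      Tendsto (fun n : ℕ => σ2 n / (c₂ * (n : ℝ) ^ (1 / (α + 1)))) atTop (nhds 1) :=
  central_limit_theorem_general α hα.1 hα.2.le
end

section
/- Let 0<α<1 and β:=1/α. For every positive integer k one has (β−1)·k^{β−1} < g(k) < β·2^β·k^{β−1}. -/
open Real

/-!
With `β = α⁻¹`, the numbers counted by `g α k` are exactly the integers in the interval
`[k ^ β, (k + 1) ^ β)`, so `g α k` differs from its length by less than `1`. Since `x ↦ x ^ β` is
convex, comparing it with its tangents at `k` and `k + 1` gives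
`β * k ^ (β - 1) - 1 < g α k < β * (k + 1) ^ (β - 1) + 1`. The errors `±1` are absorbed using
`1 ≤ k ^ (β - 1)`, and `k + 1 ≤ 2 * k`.
-/

section Tangent

variable {x y : ℝ}

theorem tangent_le_of_convexOn {S : Set ℝ} {f : ℝ → ℝ} {f' : ℝ} (hf : ConvexOn ℝ S f)
    (hx : x ∈ S) (hy : y ∈ S) (hf' : HasDerivAt f f' x) : f x + f' * (y - x) ≤ f y := by
  rcases lt_trichotomy x y with hxy | rfl | hyx
  · have h := hf.le_slope_of_hasDerivAt hx hy hxy hf'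
    rw [slope_def_field, le_div_iff₀ (sub_pos.2 hxy)] at h
    linarith
  · simp
  · have h := hf.slope_le_of_hasDerivAt hy hx hyx hf'
    rw [slope_def_field, div_le_iff₀ (sub_pos.2 hyx)] at h
    linarith

theorem rpow_add_mul_sub_le_rpow {p : ℝ} (hp : 1 ≤ p) (hx : 0 ≤ x) (hy : 0 ≤ y) :
    x ^ p + p * x ^ (p - 1) * (y - x) ≤ y ^ p :=
  tangent_le_of_convexOn (convexOn_rpow hp) hx hy (hasDerivAt_rpow_const (Or.inr hp))

end Tangent

theorem add_one_rpow_le_two_rpow_mul_rpow {x p : ℝ} (hx : 1 ≤ x) (hp : 0 ≤ p) :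
    (x + 1) ^ p ≤ 2 ^ p * x ^ p := by
  rw [← mul_rpow zero_le_two (by linarith)]
  exact rpow_le_rpow (by linarith) (by linarith) hp

section CeilSubCeil

variable {R : Type*} [CommRing R] [LinearOrder R] [IsStrictOrderedRing R] [FloorSemiring R]
  {x y : R}

theorem sub_sub_one_lt_ceil_sub_ceil (hx : 0 ≤ x) : y - x - 1 < (⌈y⌉₊ - ⌈x⌉₊ : ℕ) := by
  have ceil_le : (⌈y⌉₊ : R) ≤ (⌈y⌉₊ - ⌈x⌉₊ : ℕ) + ⌈x⌉₊ := by exact_mod_cast le_tsub_add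
  linarith [Nat.le_ceil y, Nat.ceil_lt_add_one hx]

theorem ceil_sub_ceil_lt_sub_add_one (hy : 0 ≤ y) (hxy : x ≤ y) :
    ((⌈y⌉₊ - ⌈x⌉₊ : ℕ) : R) < y - x + 1 := by
  rw [Nat.cast_sub (Nat.ceil_mono hxy)]
  linarith [Nat.le_ceil x, Nat.ceil_lt_add_one hy]

end CeilSubCeil

section Counting

variable {α : ℝ} {k : ℕ}

theorem floor_rpow_eq_natCast_iff {x : ℝ} (hx : 0 ≤ x) (hα : 0 < α) :
    ⌊x ^ α⌋ = (k : ℤ) ↔ (k : ℝ) ^ α⁻¹ ≤ x ∧ x < ((k : ℝ) + 1) ^ α⁻¹ := by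
  rw [Int.floor_eq_iff, Int.cast_natCast, rpow_inv_le_iff_of_pos k.cast_nonneg hx hα,
    lt_rpow_inv_iff_of_pos hx (by positivity) hα]

theorem g_eq_ceil_sub_ceil (hα : 0 < α) (hk : k ≠ 0) :
    g α k = ⌈((k : ℝ) + 1) ^ α⁻¹⌉₊ - ⌈(k : ℝ) ^ α⁻¹⌉₊ := by
  have pos_of_le (n : ℕ) (hn : (k : ℝ) ^ α⁻¹ ≤ n) : 1 ≤ n := by
    have : (0 : ℝ) < n := lt_of_lt_of_le (by positivity) hn
    exact_mod_cast this
  have counted_eq_Ico : {n : ℕ | 1 ≤ n ∧ ⌊(n : ℝ) ^ α⌋ = (k : ℤ)} =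
      Finset.Ico ⌈(k : ℝ) ^ α⁻¹⌉₊ ⌈((k : ℝ) + 1) ^ α⁻¹⌉₊ := by
    ext n
    simp only [Set.mem_ofPred_eq, floor_rpow_eq_natCast_iff n.cast_nonneg hα, Finset.coe_Ico,
      Set.mem_Ico, Nat.ceil_le, Nat.lt_ceil]
    exact and_iff_right_of_imp fun h ↦ pos_of_le n h.1
  rw [g, counted_eq_Ico, Set.ncard_coe_finset, Nat.card_Ico]

theorem mul_rpow_sub_one_lt_g (hα : 0 < α) (hα₁ : α ≤ 1) (hk : k ≠ 0) :
    α⁻¹ * (k : ℝ) ^ (α⁻¹ - 1) - 1 < g α k := by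
  have tangent_at_k := rpow_add_mul_sub_le_rpow (x := k) (y := k + 1) ((one_le_inv₀ hα).2 hα₁)
    (by positivity) (by positivity)
  have length_sub_one_lt : ((k : ℝ) + 1) ^ α⁻¹ - (k : ℝ) ^ α⁻¹ - 1 <
      (⌈((k : ℝ) + 1) ^ α⁻¹⌉₊ - ⌈(k : ℝ) ^ α⁻¹⌉₊ : ℕ) :=
    sub_sub_one_lt_ceil_sub_ceil (by positivity)
  rw [g_eq_ceil_sub_ceil hα hk]
  linarith

theorem g_lt_mul_add_one_rpow_add_one (hα : 0 < α) (hα₁ : α ≤ 1) (hk : k ≠ 0) :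
    g α k < α⁻¹ * ((k : ℝ) + 1) ^ (α⁻¹ - 1) + 1 := by
  have tangent_at_succ := rpow_add_mul_sub_le_rpow (x := k + 1) (y := k) ((one_le_inv₀ hα).2 hα₁)
    (by positivity) (by positivity)
  have endpoints_le : (k : ℝ) ^ α⁻¹ ≤ ((k : ℝ) + 1) ^ α⁻¹ := by
    gcongr
    linarith
  have lt_length_add_one := ceil_sub_ceil_lt_sub_add_one (by positivity) endpoints_le
  rw [g_eq_ceil_sub_ceil hα hk]
  linarith

end Counting

/-- Lemma (Li–Chen): `(β−1)·k^{β−1} < g(k) < β·2^β·k^{β−1}` for all `k ≥ 1`. -/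
theorem g_order (α β : ℝ) (hα : 0 < α ∧ α < 1) (hβ : β = 1 / α)
    (k : ℕ) (hk : 1 ≤ k) :
    (β - 1) * (k : ℝ) ^ (β - 1) < (g α k : ℝ) ∧
    (g α k : ℝ) < β * 2 ^ β * (k : ℝ) ^ (β - 1) := by
  obtain rfl : β = α⁻¹ := by rw [hβ, one_div]
  obtain ⟨hα₀, hα₁⟩ := hα
  set β := α⁻¹
  have hβ₁ : 1 ≤ β := (one_le_inv₀ hα₀).2 hα₁.le
  have hk₀ : k ≠ 0 := by omega
  have hk₁ : (1 : ℝ) ≤ k := by exact_mod_cast hk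
  have one_le_rpow_k : 1 ≤ (k : ℝ) ^ (β - 1) := one_le_rpow hk₁ (by linarith)
  have one_le_rpow_two : 1 ≤ (2 : ℝ) ^ (β - 1) := one_le_rpow one_le_two (by linarith)
  constructor
  · linarith [mul_rpow_sub_one_lt_g hα₀ hα₁.le hk₀]
  · calc (g α k : ℝ) < β * (k + 1) ^ (β - 1) + 1 := g_lt_mul_add_one_rpow_add_one hα₀ hα₁.le hk₀
      _ ≤ β * (2 ^ (β - 1) * k ^ (β - 1)) + β * (2 ^ (β - 1) * k ^ (β - 1)) := by
        gcongr
        · exact add_one_rpow_le_two_rpow_mul_rpow hk₁ (by linarith)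
        · exact one_le_mul_of_one_le_of_one_le hβ₁
            (one_le_mul_of_one_le_of_one_le one_le_rpow_two one_le_rpow_k)
      _ = β * 2 ^ β * k ^ (β - 1) := by rw [rpow_sub_one two_ne_zero β]; ring
end

section
/- Let 0<α<1, β:=1/α, and let σ≤0 be real. Then for every real s>β the Mellin transform of τ ↦ f(τ,σ) satisfies ∫₀^∞ f(τ,σ)·τ^{s−1} dτ = −Γ(s)·(∑_{k≥1} g(k)·k^{−s})·(∑_{ℓ≥1} (−e^σ)^ℓ/ℓ^{s+1}), where Γ is the Euler gamma function and both series converge. -/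
/-!
Write `G(t) = log (1 + e^{σ-t})`, so that `f(τ,σ) = ∑ₖ g(k) G(kτ)`. Rescaling multiplies the Mellin
transform of `G` at `s` by `k^{-s}`, whence the Mellin transform of `f` is `(∑ₖ g(k) k^{-s})` times
that of `G`, and the latter is `-Γ(s) ∑_ℓ (-e^σ)^ℓ / ℓ^{s+1}` by expanding the logarithm. The
series `∑ₖ g(k) k^{-s}` is `∑ₙ ⌊n^α⌋^{-s}` grouped by the value of `⌊n^α⌋`, so it converges as soon
as `∑ₙ n^{-αs}` does.
-/

open Real MeasureTheory

/-- `f(τ,σ) = ∑_{k≥1} g(k) log(1 + e^{σ−kτ})` -/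
noncomputable def f (α : ℝ) (τ σ : ℝ) : ℝ :=
  ∑' k : ℕ, (g α k : ℝ) * Real.log (1 + Real.exp (σ - k * τ))

section MellinRescaling

variable {E : Type*} [NormedAddCommGroup E] [NormedSpace ℂ E]

lemma integral_norm_cpow_smul_comp_mul_left (G : ℝ → E) (s : ℂ) {p : ℝ} (hp : 0 < p) :
    ∫ t in Set.Ioi (0 : ℝ), ‖(t : ℂ) ^ (s - 1) • G (p * t)‖
      = ‖(p : ℂ) ^ (-s)‖ * ∫ t in Set.Ioi (0 : ℝ), ‖(t : ℂ) ^ (s - 1) • G t‖ := by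
  have hscale : ∀ t ∈ Set.Ioi (0 : ℝ), ‖(t : ℂ) ^ (s - 1) • G (p * t)‖
      = p ^ (1 - s.re) * ‖((p * t : ℝ) : ℂ) ^ (s - 1) • G (p * t)‖ := by
    intro t (ht : 0 < t)
    rw [norm_smul, norm_smul, Complex.norm_cpow_eq_rpow_re_of_pos ht,
      Complex.norm_cpow_eq_rpow_re_of_pos (mul_pos hp ht), mul_rpow hp.le ht.le, ← mul_assoc,
      ← mul_assoc, ← rpow_add hp]
    simp
  rw [setIntegral_congr_fun measurableSet_Ioi hscale, integral_const_mul,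
    integral_comp_mul_left_Ioi (fun u => ‖(u : ℂ) ^ (s - 1) • G u‖) 0 hp, mul_zero, smul_eq_mul,
    ← mul_assoc, Complex.norm_cpow_eq_rpow_re_of_pos hp, ← rpow_neg_one p, ← rpow_add hp,
    Complex.neg_re]
  congr 2
  ring

theorem mellin_tsum_smul_comp_mul_left {ι : Type*} [Countable ι] {a : ι → ℂ} {p : ι → ℝ}
    {G : ℝ → E} {s : ℂ} (hp : ∀ i, a i = 0 ∨ 0 < p i) (hG : MellinConvergent G s)
    (ha : Summable fun i => a i * (p i : ℂ) ^ (-s)) :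
    mellin (fun t => ∑' i, a i • G (p i * t)) s
      = (∑' i, a i * (p i : ℂ) ^ (-s)) • mellin G s := by
  have hint : ∀ i, MellinConvergent (fun t => a i • G (p i * t)) s := by
    intro i
    rcases hp i with hi | hi
    · simp [hi, MellinConvergent]
    · exact ((MellinConvergent.comp_mul_left hi).mpr hG).const_smul (a i)
  have hnorm : ∀ i, ∫ t in Set.Ioi (0 : ℝ), ‖(t : ℂ) ^ (s - 1) • a i • G (p i * t)‖
      = ‖a i * (p i : ℂ) ^ (-s)‖ * ∫ t in Set.Ioi (0 : ℝ), ‖(t : ℂ) ^ (s - 1) • G t‖ := by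
    intro i
    rcases hp i with hi | hi
    · simp [hi]
    · simp_rw [smul_comm _ (a i), norm_smul (a i)]
      rw [integral_const_mul, integral_norm_cpow_smul_comp_mul_left G s hi, norm_mul, mul_assoc]
  have hterm : ∀ i, mellin (fun t => a i • G (p i * t)) s
      = (a i * (p i : ℂ) ^ (-s)) • mellin G s := by
    intro i
    rcases hp i with hi | hi
    · simp [hi, mellin]
    · rw [mellin_const_smul, mellin_comp_mul_left G s hi, smul_smul]
  have hsum := hasSum_integral_of_summable_integral_norm hint
    (by simpa only [hnorm] using ha.norm.mul_right _)
  calc mellin (fun t => ∑' i, a i • G (p i * t)) s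
      = ∫ t in Set.Ioi (0 : ℝ), ∑' i, (t : ℂ) ^ (s - 1) • a i • G (p i * t) := by
        simp only [mellin, tsum_const_smul'']
    _ = ∑' i, mellin (fun t => a i • G (p i * t)) s := hsum.tsum_eq.symm
    _ = (∑' i, a i * (p i : ℂ) ^ (-s)) • mellin G s := by
        simp only [hterm, ha.tsum_smul_const]

end MellinRescaling

section Polylogarithm

lemma summable_pow_succ_div_cpow {z s : ℂ} (hz : ‖z‖ ≤ 1) (hs : 1 < s.re) :
    Summable fun l : ℕ => z ^ (l + 1) / ((l + 1 : ℕ) : ℂ) ^ s := by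
  have hzeta := (summable_nat_add_iff 1).mpr (Complex.summable_one_div_nat_cpow.mpr hs).norm
  refine Summable.of_norm_bounded hzeta fun l => ?_
  rw [norm_div, norm_div, norm_pow, norm_one]
  gcongr
  exact pow_le_one₀ (norm_nonneg z) hz

theorem mellin_neg_log_one_sub_mul_exp_neg {z s : ℂ} (hz : ‖z‖ ≤ 1) (hs : 0 < s.re) :
    mellin (fun t => -Complex.log (1 - z * rexp (-t))) s
      = Complex.Gamma s * ∑' l : ℕ, z ^ (l + 1) / ((l + 1 : ℕ) : ℂ) ^ (s + 1) := by
  have hcpow : ∀ l : ℕ, ((l + 1 : ℕ) : ℂ) ^ (s + 1) = ((l + 1 : ℕ) : ℂ) ^ s * (l + 1 : ℕ) :=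
    fun l => by
      rw [Complex.cpow_add _ _ (Nat.cast_ne_zero.mpr l.succ_ne_zero), Complex.cpow_one]
  have hexpand : ∀ t ∈ Set.Ioi (0 : ℝ),
      HasSum (fun l : ℕ => z ^ (l + 1) / (l + 1 : ℕ) * rexp (-((l + 1 : ℕ) : ℝ) * t))
        (-Complex.log (1 - z * rexp (-t))) := by
    intro t ht
    have hlt : ‖z * rexp (-t)‖ < 1 := by
      rw [norm_mul, Complex.norm_real, norm_of_nonneg (exp_pos _).le]
      exact mul_lt_one_of_nonneg_of_lt_one_right hz (exp_pos _).le
        (exp_lt_one_iff.mpr (neg_lt_zero.mpr ht))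
    have hseries := (hasSum_nat_add_iff' 1).mpr (Complex.hasSum_taylorSeries_neg_log hlt)
    rw [Finset.sum_range_one, Nat.cast_zero, div_zero, sub_zero] at hseries
    convert! hseries using 2 with l
    rw [mul_pow, ← Complex.ofReal_pow, ← exp_nat_mul, neg_mul_comm]
    ring
  have hnorm : Summable fun l : ℕ => ‖z ^ (l + 1) / (l + 1 : ℕ)‖ / ((l + 1 : ℕ) : ℝ) ^ s.re := by
    refine (summable_pow_succ_div_cpow (s := s + 1) hz (by simpa using hs)).norm.congr fun l => ?_
    rw [hcpow, norm_div, norm_div, norm_mul, Complex.norm_natCast_cpow_of_pos l.succ_pos]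
    ring
  have hsum := hasSum_mellin (fun l => .inr (by positivity)) hs hexpand hnorm
  rw [← hsum.tsum_eq, ← tsum_mul_left]
  refine tsum_congr fun l => ?_
  rw [hcpow, Complex.ofReal_natCast]
  ring

lemma norm_neg_ofReal_exp_le_one {σ : ℝ} (hσ : σ ≤ 0) : ‖-(rexp σ : ℂ)‖ ≤ 1 := by
  rwa [norm_neg, Complex.norm_real, norm_of_nonneg (exp_pos σ).le, exp_le_one_iff]

theorem mellin_log_one_add_exp_sub {σ : ℝ} (hσ : σ ≤ 0) {s : ℂ} (hs : 0 < s.re) :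
    mellin (fun t => (log (1 + rexp (σ - t)) : ℂ)) s
      = -Complex.Gamma s
        * ∑' l : ℕ, (-(rexp σ : ℂ)) ^ (l + 1) / ((l + 1 : ℕ) : ℂ) ^ (s + 1) := by
  have hlog : ∀ t : ℝ, (log (1 + rexp (σ - t)) : ℂ)
      = (-1 : ℂ) • -Complex.log (1 - -(rexp σ : ℂ) * rexp (-t)) := by
    intro t
    rw [Complex.ofReal_log (by positivity), sub_eq_add_neg σ t, exp_add]
    simp
  simp_rw [hlog]
  rw [mellin_const_smul, mellin_neg_log_one_sub_mul_exp_neg (norm_neg_ofReal_exp_le_one hσ) hs,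
    smul_eq_mul]
  ring

lemma mellinConvergent_log_one_add_exp_sub (σ : ℝ) {s : ℂ} (hs : 0 < s.re) :
    MellinConvergent (fun t => (log (1 + rexp (σ - t)) : ℂ)) s := by
  have hbound : ∀ t : ℝ, ‖(log (1 + rexp (σ - t)) : ℂ)‖ ≤ rexp σ * rexp (-t) := by
    intro t
    have hexp := exp_pos (σ - t)
    rw [Complex.norm_real, norm_of_nonneg (log_nonneg (by linarith)), ← exp_add, ← sub_eq_add_neg]
    linarith [log_le_sub_one_of_pos (show 0 < 1 + rexp (σ - t) by linarith)]
  refine ((Complex.GammaIntegral_convergent hs).norm.const_mul (rexp σ)).mono'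
    (Measurable.aestronglyMeasurable (by fun_prop)) (.of_forall fun t => ?_)
  calc ‖(t : ℂ) ^ (s - 1) • (log (1 + rexp (σ - t)) : ℂ)‖
      ≤ ‖(t : ℂ) ^ (s - 1)‖ * (rexp σ * rexp (-t)) := by
        rw [norm_smul]
        gcongr
        exact hbound t
    _ = rexp σ * ‖(rexp (-t) : ℂ) * (t : ℂ) ^ (s - 1)‖ := by
        rw [norm_mul, Complex.norm_real, norm_of_nonneg (exp_pos _).le]
        ring

end Polylogarithm

section FloorPower

lemma summable_card_fiber_smul {ι κ E : Type*} [AddCommGroup E] [UniformSpace E]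
    [IsUniformAddGroup E] [CompleteSpace E] [T2Space E] (φ : ι → κ) {u : κ → E}
    (hu : Summable (u ∘ φ)) : Summable fun k => Nat.card (φ ⁻¹' {k}) • u k := by
  refine (hu.hasSum.tsum_fiberwise φ).summable.congr fun k => ?_
  rw [← tsum_const]
  exact tsum_congr fun n => congrArg u n.2

lemma summable_natFloor_rpow_cpow {α : ℝ} (hα : 0 < α) {s : ℂ} (hs : 1 < α * s.re) :
    Summable fun n : ℕ => (⌊(n : ℝ) ^ α⌋₊ : ℂ) ^ (-s) := by
  have hre : 0 < s.re := pos_of_mul_pos_right (one_pos.trans hs) hα.le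
  have hmajorant : Summable fun n : ℕ => (2 : ℝ) ^ s.re * (n : ℝ) ^ (-(α * s.re)) :=
    (summable_nat_rpow.mpr (neg_lt_neg hs)).mul_left _
  refine hmajorant.of_norm_bounded fun n => ?_
  rw [Complex.norm_natCast_cpow_of_re_ne_zero _ (by simpa using hre.ne'), Complex.neg_re]
  rcases n.eq_zero_or_pos with rfl | hn
  · rw [Nat.cast_zero, zero_rpow hα.ne', Nat.floor_zero, Nat.cast_zero,
      zero_rpow (neg_ne_zero.mpr hre.ne')]
    positivity
  have hhalf : (n : ℝ) ^ α / 2 < ⌊(n : ℝ) ^ α⌋₊ :=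
    Nat.div_two_lt_floor (one_le_rpow (Nat.one_le_cast.mpr hn) hα.le)
  calc (⌊(n : ℝ) ^ α⌋₊ : ℝ) ^ (-s.re) ≤ ((n : ℝ) ^ α / 2) ^ (-s.re) :=
        rpow_le_rpow_of_nonpos (by positivity) hhalf.le (neg_nonpos.mpr hre.le)
    _ = 2 ^ s.re * (n : ℝ) ^ (-(α * s.re)) := by
        rw [div_rpow (by positivity) zero_le_two, ← rpow_mul n.cast_nonneg, rpow_neg zero_le_two,
          div_inv_eq_mul, mul_comm, mul_neg]

lemma g_zero {α : ℝ} (hα : 0 ≤ α) : g α 0 = 0 := by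
  refine (congrArg Set.ncard (Set.eq_empty_of_forall_notMem ?_)).trans (Set.ncard_empty ℕ)
  rintro n ⟨hn, hfloor⟩
  have hone : (1 : ℝ) ≤ (n : ℝ) ^ α := one_le_rpow (Nat.one_le_cast.mpr hn) hα
  have hlt := (Int.floor_eq_iff.mp hfloor).2
  rw [Nat.cast_zero, Int.cast_zero, zero_add] at hlt
  exact hone.not_gt hlt

lemma g_eq_card_fiber {α : ℝ} (hα : α ≠ 0) {k : ℕ} (hk : k ≠ 0) :
    g α k = Nat.card ((fun n : ℕ => ⌊(n : ℝ) ^ α⌋₊) ⁻¹' {k}) := by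
  rw [g, Nat.card_coe_set_eq]
  congr 1
  ext n
  have hpos : ⌊(n : ℝ) ^ α⌋₊ = k → 1 ≤ n := by
    rintro rfl
    refine Nat.one_le_iff_ne_zero.mpr fun hn => hk ?_
    rw [hn, Nat.cast_zero, zero_rpow hα, Nat.floor_zero]
  simp only [Set.mem_ofPred_eq, Set.mem_preimage, Set.mem_singleton_iff,
    ← Int.natCast_floor_eq_floor (rpow_nonneg n.cast_nonneg α), Nat.cast_inj]
  exact and_iff_right_of_imp hpos

lemma summable_g_mul_cpow {α : ℝ} (hα : 0 < α) {s : ℂ} (hs : 1 / α < s.re) :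
    Summable fun k : ℕ => (g α k : ℂ) * (k : ℂ) ^ (-s) := by
  have hfloor := summable_natFloor_rpow_cpow hα ((div_lt_iff₀' hα).mp hs)
  refine (summable_card_fiber_smul (fun n : ℕ => ⌊(n : ℝ) ^ α⌋₊)
    (u := fun k : ℕ => (k : ℂ) ^ (-s)) hfloor).congr fun k => ?_
  rcases eq_or_ne k 0 with rfl | hk
  · have hs0 : s ≠ 0 := fun h => by
      rw [h, Complex.zero_re] at hs
      exact hs.not_ge (by positivity)
    simp [hs0, Complex.zero_cpow]
  · rw [g_eq_card_fiber hα.ne' hk, nsmul_eq_mul]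

end FloorPower

section RealExponent

@[norm_cast]
lemma ofReal_natCast_rpow (n : ℕ) (x : ℝ) : (((n : ℝ) ^ x : ℝ) : ℂ) = (n : ℂ) ^ (x : ℂ) := by
  rw [Complex.ofReal_cpow n.cast_nonneg, Complex.ofReal_natCast]

lemma mellin_ofReal (F : ℝ → ℝ) (s : ℝ) :
    mellin (fun t => (F t : ℂ)) s = ((∫ t in Set.Ioi (0 : ℝ), F t * t ^ (s - 1) : ℝ) : ℂ) := by
  rw [mellin, ← integral_complex_ofReal]
  refine setIntegral_congr_fun measurableSet_Ioi fun t (ht : 0 < t) => ?_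
  simp only [smul_eq_mul]
  rw [mul_comm, Complex.ofReal_mul, Complex.ofReal_cpow ht.le, Complex.ofReal_sub,
    Complex.ofReal_one]

end RealExponent

theorem mellin_transform_of_f_general {α : ℝ} (hα : 0 < α) {σ : ℝ} (hσ : σ ≤ 0) {s : ℂ}
    (hs : 1 / α < s.re) :
    Summable (fun k : ℕ => (g α k : ℂ) * (k : ℂ) ^ (-s)) ∧
    Summable (fun l : ℕ => (-(rexp σ : ℂ)) ^ (l + 1) / ((l + 1 : ℕ) : ℂ) ^ (s + 1)) ∧
    mellin (fun τ => (f α τ σ : ℂ)) s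
      = -Complex.Gamma s * (∑' k : ℕ, (g α k : ℂ) * (k : ℂ) ^ (-s))
        * ∑' l : ℕ, (-(rexp σ : ℂ)) ^ (l + 1) / ((l + 1 : ℕ) : ℂ) ^ (s + 1) := by
  have hre : 0 < s.re := (one_div_pos.mpr hα).trans hs
  have hg := summable_g_mul_cpow hα hs
  refine ⟨hg, summable_pow_succ_div_cpow (norm_neg_ofReal_exp_le_one hσ) (by simpa using hre), ?_⟩
  have hpos : ∀ k : ℕ, (g α k : ℂ) = 0 ∨ 0 < (k : ℝ) := fun k =>
    k.eq_zero_or_pos.imp (fun hk => by rw [hk, g_zero hα.le, Nat.cast_zero]) Nat.cast_pos.mpr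
  have hf : ∀ τ, (f α τ σ : ℂ) = ∑' k : ℕ, (g α k : ℂ) • (log (1 + rexp (σ - k * τ)) : ℂ) :=
    fun τ => by simp only [f, Complex.ofReal_tsum, Complex.ofReal_mul, Complex.ofReal_natCast,
      smul_eq_mul]
  simp_rw [hf]
  rw [mellin_tsum_smul_comp_mul_left (p := fun k : ℕ => (k : ℝ)) hpos
    (mellinConvergent_log_one_add_exp_sub σ hre) hg, mellin_log_one_add_exp_sub hσ hre, smul_eq_mul]
  simp only [Complex.ofReal_natCast]
  ring

/-- The Mellin transform of `τ ↦ f(τ,σ)`: for `σ ≤ 0` and `s > β`,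
`∫₀^∞ f(τ,σ) τ^{s−1} dτ = −Γ(s)·D(s)·∑_{ℓ≥1} (−e^σ)^ℓ/ℓ^{s+1}`,
where `D(s) = ∑_{k≥1} g(k) k^{−s}`, and both series converge. -/
theorem mellin_transform_of_f (α β : ℝ) (hα : 0 < α ∧ α < 1) (hβ : β = 1 / α)
    (σ : ℝ) (hσ : σ ≤ 0) (s : ℝ) (hs : β < s) :
    Summable (fun k : ℕ => (g α k : ℝ) * (k : ℝ) ^ (-s)) ∧
    Summable (fun ℓ : ℕ => (-Real.exp σ) ^ (ℓ + 1) / ((ℓ + 1 : ℕ) : ℝ) ^ (s + 1)) ∧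
    ∫ τ in Set.Ioi (0:ℝ), f α τ σ * τ ^ (s - 1)
      = -Real.Gamma s * (∑' k : ℕ, (g α k : ℝ) * (k : ℝ) ^ (-s))
        * (∑' ℓ : ℕ, (-Real.exp σ) ^ (ℓ + 1) / ((ℓ + 1 : ℕ) : ℝ) ^ (s + 1)) := by
  have h := mellin_transform_of_f_general hα.1 hσ (s := s) (hβ ▸ hs)
  rw [mellin_ofReal, Complex.Gamma_ofReal] at h
  exact_mod_cast h
end
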